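/- For all relatively prime integers p, q ≥ 2 and every choice of parameters ℓ₁, ℓ₂ (each coprime to p) and ℓ'₁, ℓ'₂ (each coprime to q), the product of three-dimensional lens spaces satisfies cat(L³_p(ℓ₁,ℓ₂) × L³_q(ℓ'₁,ℓ'₂)) = 4. -/

import Mathlib

open scoped Topology

/-- The Lusternik–Schnirelmann category of a space (normalized so that contractible spaces
have category 0): the least `k` such that `X` admits an open cover by `k+1` sets, each of
which has nullhomotopic inclusion into `X` (i.e. is contractible in `X`). -/
noncomputable def lsCat (X : Type*) [TopologicalSpace X] : ℕ :=
  sInf {k : ℕ | ∃ U : Fin (k + 1) → Set X,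
    (∀ i, IsOpen (U i)) ∧ (⋃ i, U i) = Set.univ ∧
    ∀ i, ContinuousMap.Nullhomotopic
      (⟨Subtype.val, continuous_subtype_val⟩ : C(U i, X))}

/-- The orbit relation on the unit sphere of `ℂ^k` defining the lens space
`L^{2k-1}_p(ℓ₁,…,ℓ_k)`: a fixed generator of `ℤ/p` acts coordinatewise by
`z_j ↦ exp(2πiℓ_j/p) z_j`, and `m` ranges over the powers of this generator. -/
def lensRel (p k : ℕ) (ℓ : Fin k → ℤ) :
    Metric.sphere (0 : EuclideanSpace ℂ (Fin k)) 1 →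
      Metric.sphere (0 : EuclideanSpace ℂ (Fin k)) 1 → Prop :=
  fun x y => ∃ m : ℤ, ∀ j : Fin k,
    (y.1 j) = Complex.exp (2 * Real.pi * Complex.I * m * ℓ j / p) * (x.1 j)

/-- The lens space `L^{2k-1}_p(ℓ₁,…,ℓ_k)`: the orbit space of the free linear action of `ℤ/p`
on the unit sphere `S^{2k-1} ⊆ ℂ^k` determined by the parameters `ℓ`, with the quotient
topology. -/
noncomputable def LensSpace (p k : ℕ) (ℓ : Fin k → ℤ) : Type :=
  Quot (lensRel p k ℓ)

noncomputable instance (p k : ℕ) (ℓ : Fin k → ℤ) : TopologicalSpace (LensSpace p k ℓ) :=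
  inferInstanceAs (TopologicalSpace (Quot (lensRel p k ℓ)))

namespace LC

section Chain
variable {R : Type*} [CommRing R] {Y Z W : Type*}

/-- Augmented ordered chains. -/
abbrev Ch (R : Type*) [CommRing R] (Y : Type*) := List Y →₀ R

noncomputable def consL (R : Type*) [CommRing R] {Y : Type*} (x : Y) : Ch R Y →ₗ[R] Ch R Y :=
  Finsupp.lmapDomain R R (List.cons x)

noncomputable def mapL (R : Type*) [CommRing R] {Y Z : Type*} (f : Y → Z) : Ch R Y →ₗ[R] Ch R Z :=
  Finsupp.lmapDomain R R (List.map f)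

noncomputable def ev (φ : List Y → R) : Ch R Y →ₗ[R] R := Finsupp.linearCombination R φ

noncomputable def ioL (c : Y → R) : List Y → Ch R Y
  | [] => 0
  | x :: l => c x • Finsupp.single l 1 - consL R x (ioL c l)

noncomputable def io (c : Y → R) : Ch R Y →ₗ[R] Ch R Y := Finsupp.linearCombination R (ioL c)

noncomputable def bd (R : Type*) [CommRing R] (Y : Type*) : Ch R Y →ₗ[R] Ch R Y := io (fun _ => 1)

noncomputable def prL (R : Type*) [CommRing R] {Y Z : Type*} (f g : Y → Z) : List Y → Ch R Z
  | [] => 0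
  | x :: l => Finsupp.single (f x :: g x :: l.map g) 1 - consL R (f x) (prL R f g l)

noncomputable def pr (R : Type*) [CommRing R] {Y Z : Type*} (f g : Y → Z) : Ch R Y →ₗ[R] Ch R Z :=
  Finsupp.linearCombination R (prL R f g)

noncomputable def hH (R : Type*) [CommRing R] {Y Z : Type*} (f : ℕ → Y → Z) (n : ℕ) : Ch R Y →ₗ[R] Ch R Z :=
  ∑ j ∈ Finset.range n, pr R (f j) (f (j+1))

@[simp] lemma consL_single (x : Y) (l : List Y) (r : R) :
    consL R x (Finsupp.single l r) = Finsupp.single (x :: l) r := by simp [consL]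
@[simp] lemma mapL_single (f : Y → Z) (l : List Y) (r : R) :
    mapL R f (Finsupp.single l r) = Finsupp.single (l.map f) r := by simp [mapL]
@[simp] lemma ev_single (φ : List Y → R) (l : List Y) (r : R) :
    ev φ (Finsupp.single l r) = r * φ l := by simp [ev]
lemma io_single (c : Y → R) (l : List Y) : io c (Finsupp.single l 1) = ioL c l := by simp [io]
lemma pr_single (f g : Y → Z) (l : List Y) : pr R f g (Finsupp.single l 1) = prL R f g l := by
  simp [pr]
@[simp] lemma io_nil (c : Y → R) : io c (Finsupp.single [] 1) = 0 := by simp [io_single, ioL]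
@[simp] lemma pr_nil (f g : Y → Z) : pr R f g (Finsupp.single [] 1) = 0 := by simp [pr_single, prL]
lemma io_cons (c : Y → R) (x : Y) (l : List Y) :
    io c (Finsupp.single (x :: l) 1) = c x • Finsupp.single l 1 - consL R x (io c (Finsupp.single l 1)) := by
  simp [io_single, ioL]
lemma pr_cons (f g : Y → Z) (x : Y) (l : List Y) :
    pr R f g (Finsupp.single (x :: l) 1) = Finsupp.single (f x :: g x :: l.map g) 1
      - consL R (f x) (pr R f g (Finsupp.single l 1)) := by
  simp [pr_single, prL]
lemma lin_ext {M : Type*} [AddCommGroup M] [Module R M] {A B : Ch R Y →ₗ[R] M}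
    (h : ∀ l, A (Finsupp.single l 1) = B (Finsupp.single l 1)) : A = B :=
  Finsupp.lhom_ext' fun l => LinearMap.ext_ring (by simpa using h l)

lemma io_consL (c : Y → R) (x : Y) (a : Ch R Y) :
    io c (consL R x a) = c x • a - consL R x (io c a) := by
  have : (io c) ∘ₗ (consL R x) = c x • LinearMap.id - (consL R x) ∘ₗ (io c) := by
    apply lin_ext; intro l; simp [io_cons]
  simpa using LinearMap.congr_fun this a
lemma pr_consL (f g : Y → Z) (x : Y) (a : Ch R Y) :
    pr R f g (consL R x a) = consL R (f x) (consL R (g x) (mapL R g a)) - consL R (f x) (pr R f g a) := by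
  have : (pr R f g) ∘ₗ (consL R x) = consL R (f x) ∘ₗ consL R (g x) ∘ₗ mapL R g - consL R (f x) ∘ₗ pr R f g := by
    apply lin_ext; intro l; simp [pr_cons]
  simpa using LinearMap.congr_fun this a
lemma mapL_consL (f : Y → Z) (x : Y) (a : Ch R Y) :
    mapL R f (consL R x a) = consL R (f x) (mapL R f a) := by
  have : (mapL R f) ∘ₗ (consL R x) = consL R (f x) ∘ₗ (mapL R f) := by
    apply lin_ext; intro l; simp
  simpa using LinearMap.congr_fun this a
lemma ev_consL (φ : List Y → R) (x : Y) (a : Ch R Y) :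
    ev φ (consL R x a) = ev (fun l => φ (x :: l)) a := by
  have : (ev φ) ∘ₗ (consL R x) = ev (fun l => φ (x :: l)) := by
    apply lin_ext; intro l; simp
  simpa using LinearMap.congr_fun this a
lemma ev_mapL (φ : List Z → R) (f : Y → Z) (a : Ch R Y) :
    ev φ (mapL R f a) = ev (fun l => φ (l.map f)) a := by
  have : (ev φ) ∘ₗ (mapL R f) = ev (fun l => φ (l.map f)) := by
    apply lin_ext; intro l; simp
  simpa using LinearMap.congr_fun this a
lemma mapL_mapL (f : Y → Z) (g : Z → W) (a : Ch R Y) :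
    mapL R g (mapL R f a) = mapL R (g ∘ f) a := by
  have : (mapL R g) ∘ₗ (mapL R f) = mapL R (g ∘ f) := by
    apply lin_ext; intro l; simp
  simpa using LinearMap.congr_fun this a
lemma mapL_io (f : Y → Z) (c : Z → R) (a : Ch R Y) :
    mapL R f (io (c ∘ f) a) = io c (mapL R f a) := by
  have : (mapL R f) ∘ₗ (io (c ∘ f)) = io c ∘ₗ mapL R f := by
    apply lin_ext; intro l
    induction l with
    | nil => simp
    | cons x l ih => simp at ih; simp [io_cons, mapL_consL, ih]
  simpa using LinearMap.congr_fun this a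
lemma mapL_bd (f : Y → Z) (a : Ch R Y) : mapL R f (bd R Y a) = bd R Z (mapL R f a) :=
  mapL_io f (fun _ => 1) a
lemma io_io (c d : Y → R) (a : Ch R Y) : io c (io d a) = - io d (io c a) := by
  have : io c ∘ₗ io d = - (io d ∘ₗ io c) := by
    apply lin_ext; intro l
    induction l with
    | nil => simp
    | cons x l ih =>
      simp only [LinearMap.comp_apply, LinearMap.neg_apply] at ih ⊢
      simp only [io_cons, io_consL, ih, map_sub, map_smul, map_neg]
      abel
  simpa using LinearMap.congr_fun this a
lemma io_sq (c : Y → R) (a : Ch R Y) : io c (io c a) = 0 := by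
  have : io c ∘ₗ io c = 0 := by
    apply lin_ext; intro l
    induction l with
    | nil => simp
    | cons x l ih =>
      simp only [LinearMap.comp_apply, LinearMap.zero_apply] at ih ⊢
      simp only [io_cons, io_consL, ih, map_sub, map_smul, map_zero]
      abel
  simpa using LinearMap.congr_fun this a
lemma bd_bd (a : Ch R Y) : bd R Y (bd R Y a) = 0 := io_sq _ a
lemma bd_single_cons (x : Y) (l : List Y) :
    bd R Y (Finsupp.single (x :: l) 1) = Finsupp.single l 1 - consL R x (bd R Y (Finsupp.single l 1)) := by
  simp [bd, io_cons]
lemma bd_consL (x : Y) (a : Ch R Y) :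
    bd R Y (consL R x a) = a - consL R x (bd R Y a) := by
  simp [bd, io_consL]
lemma bd_pr (f g : Y → Z) (a : Ch R Y) :
    bd R Z (pr R f g a) + pr R f g (bd R Y a) = mapL R g a - mapL R f a := by
  have : bd R Z ∘ₗ pr R f g + pr R f g ∘ₗ bd R Y = mapL R g - mapL R f := by
    apply lin_ext; intro l
    induction l with
    | nil => simp [bd]
    | cons x l ih =>
      have h2 := mapL_bd g (Finsupp.single l (1:R))
      simp only [LinearMap.add_apply, LinearMap.comp_apply, LinearMap.sub_apply, mapL_single] at ih h2 ⊢
      simp only [pr_cons, bd_single_cons, bd_consL, pr_consL, map_sub, h2, List.map_cons]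
      have h3 := congrArg (consL R (f x)) ih
      simp only [map_sub, map_add, consL_single] at h3
      simp only [consL_single]
      rw [← sub_eq_zero] at h3 ⊢
      rw [← h3]
      abel
  simpa using LinearMap.congr_fun this a
lemma bd_hH (f : ℕ → Y → Z) (n : ℕ) (a : Ch R Y) :
    bd R Z (hH R f n a) + hH R f n (bd R Y a) = mapL R (f n) a - mapL R (f 0) a := by
  induction n with
  | zero => simp [hH]
  | succ n ih =>
    have h := bd_pr (f n) (f (n+1)) a
    have e : hH R f (n+1) = hH R f n + pr R (f n) (f (n+1)) := by
      simp [hH, Finset.sum_range_succ]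
    rw [e]
    simp only [LinearMap.add_apply, map_add]
    rw [← sub_add_sub_cancel' (mapL R (f n) a), ← h, ← ih]
    abel

/-- small chains of length `n` for a relation. -/
def sm (R : Type*) [CommRing R] {Y : Type*} (r : Y → Y → Prop) (n : ℕ) : Submodule R (Ch R Y) :=
  Finsupp.supported R R {l | l.length = n ∧ ∀ x ∈ l, ∀ y ∈ l, r x y}

lemma single_mem_sm {r : Y → Y → Prop} {n : ℕ} {l : List Y} (h1 : l.length = n)
    (h2 : ∀ x ∈ l, ∀ y ∈ l, r x y) (c : R) : Finsupp.single l c ∈ sm R r n :=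
  Finsupp.single_mem_supported _ _ ⟨h1, h2⟩

lemma sm_ind {r : Y → Y → Prop} {n : ℕ} {M : Type*} [AddCommGroup M] [Module R M]
    (A : Ch R Y →ₗ[R] M) (S : Submodule R M)
    (h : ∀ l : List Y, l.length = n → (∀ x ∈ l, ∀ y ∈ l, r x y) → A (Finsupp.single l 1) ∈ S)
    {a : Ch R Y} (ha : a ∈ sm R r n) : A a ∈ S := by
  rw [sm, Finsupp.supported_eq_span_single] at ha
  have : Submodule.span R ((fun i => Finsupp.single i (1:R)) '' {l : List Y | l.length = n ∧ ∀ x ∈ l, ∀ y ∈ l, r x y}) ≤ S.comap A := by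
    rw [Submodule.span_le]
    rintro _ ⟨l, ⟨h1, h2⟩, rfl⟩
    exact h l h1 h2
  exact this ha

lemma sm_ext {r : Y → Y → Prop} {n : ℕ} {M : Type*} [AddCommGroup M] [Module R M]
    (A B : Ch R Y →ₗ[R] M)
    (h : ∀ l : List Y, l.length = n → (∀ x ∈ l, ∀ y ∈ l, r x y) →
      A (Finsupp.single l 1) = B (Finsupp.single l 1))
    {a : Ch R Y} (ha : a ∈ sm R r n) : A a = B a := by
  have := sm_ind (A - B) ⊥ (fun l h1 h2 => by simp [h l h1 h2]) ha
  simpa [sub_eq_zero] using this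

/-- the points of all lists in a chain -/
lemma consL_mem {r : Y → Y → Prop} {n : ℕ} {P : List Y → Prop} {x : Y} {a : Ch R Y}
    (ha : a ∈ Finsupp.supported R R {l | P l})
    (h : ∀ l, P l → (x :: l).length = n ∧ ∀ u ∈ x :: l, ∀ v ∈ x :: l, r u v) :
    consL R x a ∈ sm R r n := by
  have : Finsupp.supported R R {l | P l} ≤ (sm R r n).comap (consL R x) := by
    rw [Finsupp.supported_eq_span_single, Submodule.span_le]
    rintro _ ⟨l, hl, rfl⟩
    have := h l hl
    simpa using single_mem_sm this.1 this.2 (1:R)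
  exact this ha

lemma io_supp (c : Y → R) (l : List Y) : io c (Finsupp.single l 1) ∈
    Finsupp.supported R R {l' | l'.length + 1 = l.length ∧ l' ⊆ l} := by
  induction l with
  | nil => simp
  | cons x l ih =>
    rw [io_cons]
    refine Submodule.sub_mem _ (Submodule.smul_mem _ _ (Finsupp.single_mem_supported _ _ (by simp))) ?_
    have : Finsupp.supported R R {l' : List Y | l'.length + 1 = l.length ∧ l' ⊆ l} ≤
       (Finsupp.supported R R {l' | l'.length + 1 = (x::l).length ∧ l' ⊆ (x::l)}).comap (consL R x) := by
      rw [Finsupp.supported_eq_span_single, Submodule.span_le]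
      rintro _ ⟨l', hl, rfl⟩
      simp only [Submodule.comap_coe, Set.mem_preimage, consL_single, SetLike.mem_coe]
      refine Finsupp.single_mem_supported _ _ ?_
      simp only [Set.mem_ofPred_eq, List.length_cons] at hl ⊢
      exact ⟨by omega, List.cons_subset_cons _ hl.2⟩
    exact this ih

lemma prL_supp (f g : Y → Z) (l : List Y) : pr R f g (Finsupp.single l 1) ∈
    Finsupp.supported R R {l' | l'.length = l.length + 1 ∧ ∀ u ∈ l', ∃ x ∈ l, u = f x ∨ u = g x} := by
  induction l with
  | nil => simp
  | cons x l ih =>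
    rw [pr_cons]
    refine Submodule.sub_mem _ (Finsupp.single_mem_supported _ _ ?_) ?_
    · simp; aesop
    have : Finsupp.supported R R {l' : List Z | l'.length = l.length + 1 ∧ ∀ u ∈ l', ∃ x ∈ l, u = f x ∨ u = g x} ≤
       (Finsupp.supported R R {l' | l'.length = (x::l).length + 1 ∧ ∀ u ∈ l', ∃ y ∈ (x::l), u = f y ∨ u = g y}).comap (consL R (f x)) := by
      rw [Finsupp.supported_eq_span_single, Submodule.span_le]
      rintro _ ⟨l', hl, rfl⟩
      simp only [Submodule.comap_coe, Set.mem_preimage, consL_single, SetLike.mem_coe]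
      refine Finsupp.single_mem_supported _ _ ?_
      simp only [Set.mem_ofPred_eq, List.length_cons] at hl ⊢
      refine ⟨by omega, ?_⟩
      intro u hu
      rcases List.mem_cons.1 hu with rfl | hu
      · exact ⟨x, by simp⟩
      · obtain ⟨y, hy, h⟩ := hl.2 u hu
        exact ⟨y, by simp [hy], h⟩
    exact this ih

lemma io_mem {r : Y → Y → Prop} {n : ℕ} (c : Y → R) {a : Ch R Y} (ha : a ∈ sm R r (n+1)) :
    io c a ∈ sm R r n := by
  refine sm_ind (io c) (sm R r n) ?_ ha
  intro l h1 h2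
  refine Finsupp.supported_mono ?_ (io_supp c l)
  rintro l' ⟨h3, h4⟩
  exact ⟨by omega, fun x hx y hy => h2 x (h4 hx) y (h4 hy)⟩

lemma bd_mem {r : Y → Y → Prop} {n : ℕ} {a : Ch R Y} (ha : a ∈ sm R r (n+1)) :
    bd R Y a ∈ sm R r n := io_mem _ ha

lemma mapL_mem {r : Y → Y → Prop} {r' : Z → Z → Prop} {n : ℕ} {f : Y → Z}
    (h : ∀ x y, r x y → r' (f x) (f y)) {a : Ch R Y} (ha : a ∈ sm R r n) :
    mapL R f a ∈ sm R r' n := by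
  refine sm_ind (mapL R f) (sm R r' n) ?_ ha
  intro l h1 h2
  rw [mapL_single]
  refine single_mem_sm (by simpa using h1) ?_ _
  intro x hx y hy
  obtain ⟨x', hx', rfl⟩ := List.mem_map.1 hx
  obtain ⟨y', hy', rfl⟩ := List.mem_map.1 hy
  exact h _ _ (h2 x' hx' y' hy')

lemma pr_mem {r : Y → Y → Prop} {r' : Z → Z → Prop} {n : ℕ} {f g : Y → Z}
    (h : ∀ x y, r x y → r' (f x) (f y) ∧ r' (f x) (g y) ∧ r' (g x) (f y) ∧ r' (g x) (g y))
    {a : Ch R Y} (ha : a ∈ sm R r n) :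
    pr R f g a ∈ sm R r' (n+1) := by
  refine sm_ind (pr R f g) (sm R r' (n+1)) ?_ ha
  intro l h1 h2
  refine Finsupp.supported_mono ?_ (prL_supp f g l)
  rintro l' ⟨h3, h4⟩
  refine ⟨by omega, fun u hu v hv => ?_⟩
  obtain ⟨x, hx, h5⟩ := h4 u hu
  obtain ⟨y, hy, h6⟩ := h4 v hv
  have := h x y (h2 x hx y hy)
  rcases h5 with rfl | rfl <;> rcases h6 with rfl | rfl <;> tauto

lemma hH_mem {r : Y → Y → Prop} {r' : Z → Z → Prop} {n : ℕ} {f : ℕ → Y → Z} {N : ℕ}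
    (h : ∀ j k, j ≤ N → k ≤ N → j ≤ k + 1 → k ≤ j + 1 → ∀ x y, r x y → r' (f j x) (f k y))
    {a : Ch R Y} (ha : a ∈ sm R r n) :
    hH R f N a ∈ sm R r' (n+1) := by
  rw [hH, LinearMap.sum_apply]
  refine Submodule.sum_mem _ fun j hj => pr_mem ?_ ha
  have hj := Finset.mem_range.1 hj
  intro x y hxy
  exact ⟨h _ _ (by omega) (by omega) (by omega) (by omega) _ _ hxy,
    h _ _ (by omega) (by omega) (by omega) (by omega) _ _ hxy,
    h _ _ (by omega) (by omega) (by omega) (by omega) _ _ hxy,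
    h _ _ (by omega) (by omega) (by omega) (by omega) _ _ hxy⟩

lemma sm_mono {r r' : Y → Y → Prop} {n : ℕ} (h : ∀ x y, r x y → r' x y) {a : Ch R Y}
    (ha : a ∈ sm R r n) : a ∈ sm R r' n :=
  Finsupp.supported_mono (s := {l : List Y | l.length = n ∧ ∀ x ∈ l, ∀ y ∈ l, r x y})
    (t := {l : List Y | l.length = n ∧ ∀ x ∈ l, ∀ y ∈ l, r' x y})
    (by rintro l ⟨h1, h2⟩; exact ⟨h1, fun x hx y hy => h _ _ (h2 x hx y hy)⟩) ha

lemma io_congr {c d : Y → R} {l : List Y} (h : ∀ x ∈ l, c x = d x) :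
    io c (Finsupp.single l 1) = io d (Finsupp.single l 1) := by
  induction l with
  | nil => simp
  | cons x l ih =>
    rw [io_cons, io_cons, ih (fun y hy => h y (by simp [hy])), h x (by simp)]

lemma io_zero (a : Ch R Y) : io (fun _ => 0) a = 0 := by
  have : io (fun _ : Y => (0:R)) = 0 := by
    apply lin_ext; intro l
    induction l with
    | nil => simp
    | cons x l ih => simp at ih; simp [io_cons, ih]
  rw [this]; rfl
lemma io_add (c d : Y → R) (a : Ch R Y) : io (c + d) a = io c a + io d a := by
  have : io (c + d) = io c + io d := by
    apply lin_ext; intro l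
    induction l with
    | nil => simp
    | cons x l ih =>
      simp at ih
      simp [io_cons, ih, add_smul]; abel
  rw [this]; rfl
lemma io_sum {ι : Type*} (s : Finset ι) (c : ι → Y → R) (a : Ch R Y) :
    io (fun x => ∑ i ∈ s, c i x) a = ∑ i ∈ s, io (c i) a := by
  classical
  induction s using Finset.induction_on with
  | empty => simp [io_zero]
  | insert i s hi ih =>
    rw [Finset.sum_insert hi, ← ih, ← io_add]
    congr 1
    congr 1
    ext x
    simp [Finset.sum_insert hi]
end Chain
end LC

namespace LC

abbrev EE := EuclideanSpace ℂ (Fin 2)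
abbrev Sp := Metric.sphere (0 : EuclideanSpace ℂ (Fin 2)) 1

noncomputable def coE (v : EE) : Fin 4 → ℝ := ![(v 0).re, (v 0).im, (v 1).re, (v 1).im]
noncomputable def toE (a : Fin 4 → ℝ) : EE := WithLp.toLp 2 ![⟨a 0, a 1⟩, ⟨a 2, a 3⟩]

lemma coE_toE (a : Fin 4 → ℝ) : coE (toE a) = a := by
  ext i; fin_cases i <;> simp [coE, toE]
lemma toE_coE (v : EE) : toE (coE v) = v := by
  ext i; fin_cases i <;> simp [coE, toE]
lemma coE_add (v w : EE) : coE (v + w) = coE v + coE w := by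
  ext i; fin_cases i <;> simp [coE]
lemma coE_sub (v w : EE) : coE (v - w) = coE v - coE w := by
  ext i; fin_cases i <;> simp [coE]
lemma coE_smul (r : ℝ) (v : EE) : coE (r • v) = r • coE v := by
  ext i; fin_cases i <;> simp [coE]
lemma norm_sq_coE (v : EE) : ‖v‖ ^ 2 = ∑ i, coE v i ^ 2 := by
  rw [EuclideanSpace.norm_sq_eq]
  simp [Fin.sum_univ_four, coE, Complex.sq_norm, Complex.normSq_apply]
  ring
lemma continuous_coE (i : Fin 4) : Continuous (fun v : EE => coE v i) := by
  fin_cases i <;> simp only [coE] <;> simp <;> fun_prop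
lemma coE_eq_zero {v : EE} (h : coE v = 0) : v = 0 := by
  rw [← toE_coE v, h]; ext i; fin_cases i <;> simp [toE] <;> rfl

noncomputable def co (x : Sp) : Fin 4 → ℝ := coE x.1
lemma sum_co (x : Sp) : ∑ i, co x i ^ 2 = 1 := by
  rw [co, ← norm_sq_coE]; simp
lemma continuous_co (i : Fin 4) : Continuous (fun x : Sp => co x i) :=
  (continuous_coE i).comp continuous_subtype_val
lemma dist_sq_co (x y : Sp) : dist x y ^ 2 = ∑ i, (co x i - co y i) ^ 2 := by
  rw [Subtype.dist_eq, dist_eq_norm, norm_sq_coE]; simp [coE_sub, co]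
lemma abs_co_sub_le (x y : Sp) (i : Fin 4) : |co x i - co y i| ≤ dist x y := by
  rw [← sq_le_sq₀ (abs_nonneg _) dist_nonneg, dist_sq_co, sq_abs]
  exact Finset.single_le_sum (f := fun i => (co x i - co y i) ^ 2) (fun i _ => sq_nonneg _) (Finset.mem_univ i)

noncomputable def mkS (a : Fin 4 → ℝ) (h : ∑ i, a i ^ 2 = 1) : Sp :=
  ⟨toE a, by
    have : ‖toE a‖ ^ 2 = 1 := by rw [norm_sq_coE, coE_toE, h]
    rw [mem_sphere_zero_iff_norm]
    exact (pow_eq_one_iff_of_nonneg (norm_nonneg _) two_ne_zero).1 this⟩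
@[simp] lemma co_mkS (a : Fin 4 → ℝ) (h) : co (mkS a h) = a := coE_toE a
lemma co_inj {x y : Sp} (h : co x = co y) : x = y := by
  apply Subtype.ext; rw [← toE_coE x.1, ← toE_coE y.1]; exact congrArg toE h

noncomputable def ee (k : Fin 4) : Sp := mkS (Pi.single k 1) (by
  rw [Finset.sum_eq_single k] <;> simp +contextual)
lemma co_ee (k i : Fin 4) : co (ee k) i = if i = k then 1 else 0 := by
  rw [ee, co_mkS, Pi.single_apply]

noncomputable def refl (k : Fin 4) (x : Sp) : Sp := mkS (fun i => if i = k then - co x i else co x i) (by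
  rw [← sum_co x]; congr 1; ext i; split_ifs <;> ring)
lemma co_refl (k i : Fin 4) (x : Sp) : co (refl k x) i = if i = k then - co x i else co x i := by
  rw [refl, co_mkS]
lemma dist_refl (k : Fin 4) (x y : Sp) : dist (refl k x) (refl k y) = dist x y := by
  rw [← sq_eq_sq₀ dist_nonneg dist_nonneg, dist_sq_co, dist_sq_co]
  congr 1; ext i; simp only [co_refl]; split_ifs <;> ring

noncomputable def toS (v : EE) : Sp :=
  if h : v = 0 then ee 0 else ⟨(‖v‖⁻¹ : ℝ) • v, by
    rw [mem_sphere_zero_iff_norm, norm_smul, norm_inv, norm_norm, inv_mul_cancel₀ (norm_ne_zero_iff.2 h)]⟩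
lemma toS_val {v : EE} (h : v ≠ 0) : (toS v).1 = (‖v‖⁻¹ : ℝ) • v := by simp [toS, h]
lemma toS_coe (x : Sp) : toS x.1 = x := by
  have h0 : ‖x.1‖ = 1 := by simp
  have : x.1 ≠ 0 := by intro h; rw [h] at h0; simp at h0
  apply Subtype.ext; rw [toS_val this, h0]; simp
lemma continuousOn_toS : ContinuousOn toS {v | v ≠ 0} := by
  rw [continuousOn_iff_continuous_domRestrict, continuous_induced_rng]
  have : Continuous (fun v : {v : EE | v ≠ 0} => (‖v.1‖⁻¹ : ℝ) • v.1) := by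
    refine Continuous.smul (Continuous.inv₀ (continuous_norm.comp continuous_subtype_val) ?_) continuous_subtype_val
    intro v; exact norm_ne_zero_iff.2 v.2
  convert this using 1
  ext1 v
  exact toS_val v.2

noncomputable def nl (e x : Sp) (t : ℝ) : Sp := toS ((1 - t) • x.1 + t • e.1)
lemma nl_zero (e x : Sp) : nl e x 0 = x := by simp [nl, toS_coe]
lemma nl_one (e x : Sp) : nl e x 1 = e := by simp [nl, toS_coe]

noncomputable def ip (x y : Sp) : ℝ := ∑ i, co x i * co y i

lemma nl_ne {e x : Sp} {t : ℝ} (ht0 : 0 ≤ t) (ht1 : t ≤ 1) (h : 0 ≤ ip x e) :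
    (1 - t) • x.1 + t • e.1 ≠ 0 := by
  intro h0
  have h1 : ∀ i, (1 - t) * co x i + t * co e i = 0 := by
    intro i
    have := congrFun (congrArg coE h0) i
    rw [coE_add, coE_smul, coE_smul] at this
    simp [co] at this ⊢
    rw [this]
    fin_cases i <;> simp [coE]
  have h2 : (1 - t) * ip x e + t = 0 := by
    have : ∑ i, ((1 - t) * co x i + t * co e i) * co e i = 0 := by simp [h1]
    calc (1 - t) * ip x e + t = (1 - t) * ip x e + t * ∑ i, co e i ^ 2 := by rw [sum_co]; ring
      _ = ∑ i, ((1 - t) * co x i + t * co e i) * co e i := by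
        rw [ip, Finset.mul_sum, Finset.mul_sum, ← Finset.sum_add_distrib]
        congr 1; ext i; ring
      _ = 0 := this
  have h3 : 0 ≤ (1 - t) * ip x e := mul_nonneg (by linarith) h
  have h4 : t = 0 := by linarith
  subst h4
  have h5 := sum_co x
  simp at h1
  simp [h1] at h5

lemma co_nl {e x : Sp} {t : ℝ} (ht0 : 0 ≤ t) (ht1 : t ≤ 1) (h : 0 ≤ ip x e) :
    ∃ c : ℝ, 0 < c ∧ ∀ i, co (nl e x t) i = c * ((1 - t) * co x i + t * co e i) := by
  have h0 := nl_ne ht0 ht1 h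
  refine ⟨‖(1 - t) • x.1 + t • e.1‖⁻¹, inv_pos.2 (norm_pos_iff.2 h0), fun i => ?_⟩
  rw [co, nl, toS_val h0, coE_smul, coE_add, coE_smul, coE_smul]
  rfl

lemma continuousOn_nl (e : Sp) :
    ContinuousOn (fun z : Sp × ℝ => nl e z.1 z.2) ({x | 0 ≤ ip x e} ×ˢ Set.Icc 0 1) := by
  refine continuousOn_toS.comp (by fun_prop) ?_
  rintro ⟨x, t⟩ ⟨h1, h2, h3⟩
  exact nl_ne h2 h3 h1

/-! small homotopies -/
def rel {Y : Type*} [MetricSpace Y] (ε : ℝ) (K : Set Y) (x y : Y) : Prop := x ∈ K ∧ y ∈ K ∧ dist x y < ε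

lemma homot_small {Y Z : Type*} [MetricSpace Y] [MetricSpace Z] {K : Set Y} (hK : IsCompact K)
    {F : Y → ℝ → Z} (hF : ContinuousOn (fun z : Y × ℝ => F z.1 z.2) (K ×ˢ Set.Icc 0 1)) {ε : ℝ} (hε : 0 < ε) :
    ∃ N : ℕ, 0 < N ∧ ∃ δ : ℝ, 0 < δ ∧ ∀ j k : ℕ, j ≤ N → k ≤ N → j ≤ k + 1 → k ≤ j + 1 →
      ∀ x ∈ K, ∀ y ∈ K, dist x y < δ → dist (F x (j / N)) (F y (k / N)) < ε := by
  have hu := (hK.prod (isCompact_Icc (a := (0:ℝ)) (b := 1))).uniformContinuousOn_of_continuous hF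
  rw [Metric.uniformContinuousOn_iff] at hu
  obtain ⟨δ, hδ, h⟩ := hu ε hε
  obtain ⟨n, hn⟩ := exists_nat_one_div_lt hδ
  refine ⟨n + 1, Nat.succ_pos _, δ, hδ, ?_⟩
  intro j k hj hk hjk hkj x hx y hy hxy
  have hp : (0:ℝ) < ((n + 1 : ℕ) : ℝ) := by positivity
  have hm : ∀ i : ℕ, i ≤ n + 1 → (i : ℝ) / ((n + 1 : ℕ) : ℝ) ∈ Set.Icc (0:ℝ) 1 := by
    intro i hi
    refine ⟨by positivity, ?_⟩
    rw [div_le_one hp]; exact_mod_cast hi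
  refine h (x, _) ⟨hx, hm j hj⟩ (y, _) ⟨hy, hm k hk⟩ ?_
  rw [Prod.dist_eq]
  refine max_lt hxy ?_
  rw [Real.dist_eq, ← sub_div, abs_div, abs_of_pos hp]
  refine lt_of_le_of_lt ?_ hn
  push_cast
  gcongr
  rw [abs_le]
  have h1 : (j:ℝ) ≤ k + 1 := by exact_mod_cast hjk
  have h2 : (k:ℝ) ≤ j + 1 := by exact_mod_cast hkj
  constructor <;> linarith

lemma homot {R : Type*} [CommRing R] {Y Z : Type*} [MetricSpace Y] [MetricSpace Z] {K : Set Y} (hK : IsCompact K)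
    {F : Y → ℝ → Z} (hF : ContinuousOn (fun z : Y × ℝ => F z.1 z.2) (K ×ˢ Set.Icc 0 1))
    {K' : Set Z} (hK' : ∀ x ∈ K, ∀ t, 0 ≤ t → t ≤ 1 → F x t ∈ K') {ε : ℝ} (hε : 0 < ε) :
    ∃ δ : ℝ, 0 < δ ∧ ∃ H : Ch R Y →ₗ[R] Ch R Z,
      (∀ n, ∀ a ∈ sm R (rel δ K) n, H a ∈ sm R (rel ε K') (n + 1)) ∧
      ∀ a, bd R Z (H a) + H (bd R Y a) = mapL R (fun x => F x 1) a - mapL R (fun x => F x 0) a := by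
  obtain ⟨N, hN, δ, hδ, h⟩ := homot_small hK hF hε
  refine ⟨δ, hδ, hH R (fun j x => F x (j / N)) N, ?_, ?_⟩
  · intro n a ha
    refine hH_mem ?_ ha
    rintro j k hj hk hjk hkj x y ⟨hx, hy, hxy⟩
    have hp : (0:ℝ) < (N : ℝ) := by exact_mod_cast hN
    refine ⟨hK' x hx _ (by positivity) ?_, hK' y hy _ (by positivity) ?_, h j k hj hk hjk hkj x hx y hy hxy⟩
    · rw [div_le_one hp]; exact_mod_cast hj
    · rw [div_le_one hp]; exact_mod_cast hk
  · intro a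
    have := bd_hH (R := R) (fun (j : ℕ) x => F x (j / N)) N a
    have hp : (N : ℝ) ≠ 0 := by exact_mod_cast hN.ne'
    simpa [hp] using this

section T
variable (R : Type*) [CommRing R]

lemma exists_lb (x : Sp) : ∃ i : Fin 4 × Bool, (i.2 = true ∧ 1 / 2 ≤ co x i.1) ∨ (i.2 = false ∧ co x i.1 ≤ - (1 / 2)) := by
  by_contra! hc
  have h1 : ∀ i, co x i ^ 2 < 1 / 4 := by
    intro i
    have a := (hc (i, true)).1 rfl
    have b := (hc (i, false)).2 rfl
    simp at a b
    nlinarith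
  have := sum_co x
  rw [Fin.sum_univ_four] at this
  linarith [h1 0, h1 1, h1 2, h1 3]

noncomputable def lb (x : Sp) : Fin 4 × Bool := (exists_lb x).choose
lemma lb_spec (x : Sp) : ((lb x).2 = true ∧ 1 / 2 ≤ co x (lb x).1) ∨ ((lb x).2 = false ∧ co x (lb x).1 ≤ - (1 / 2)) :=
  (exists_lb x).choose_spec
noncomputable def vv (n : ℕ) (x : Sp) : R := if (lb x).1.val = n ∧ (lb x).2 = true then 1 else 0

lemma vv_zero {n : Fin 4} {x : Sp} (h : co x n < 1 / 2) : vv R n.val x = 0 := by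
  rw [vv, if_neg]
  rintro ⟨h1, h2⟩
  have h1 : (lb x).1 = n := Fin.ext h1
  rcases lb_spec x with h3 | h3
  · rw [h1] at h3; linarith [h3.2]
  · rw [h2] at h3; simp at h3

noncomputable def BB : ℕ → Ch R Sp →ₗ[R] Ch R Sp
  | 0 => io (vv R 0)
  | (k+1) => BB k ∘ₗ io (vv R (k+1))

lemma BB_io (k i : ℕ) (hi : i ≤ k) (a : Ch R Sp) : BB R k (io (vv R i) a) = 0 := by
  induction k generalizing a with
  | zero => obtain rfl : i = 0 := by omega
            exact io_sq _ a
  | succ k ih =>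
    simp only [BB, LinearMap.comp_apply]
    rcases Nat.lt_or_ge k i with h | h
    · obtain rfl : i = k + 1 := by omega
      rw [io_sq, map_zero]
    · rw [io_io, map_neg, ih h, neg_zero]

lemma BB_nil (k : ℕ) : BB R k (Finsupp.single [] 1) = 0 := by
  induction k with
  | zero => simp [BB]
  | succ k ih => simp [BB]

lemma BB_Z (k i : ℕ) (hi : i ≤ k) (n : ℕ) {a : Ch R Sp} (ha : a ∈ sm R (fun x _ => vv R i x = 0) n) :
    BB R k a = 0 := by
  induction k generalizing a n with
  | zero =>
    obtain rfl : i = 0 := by omega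
    refine sm_ext (io (vv R 0)) 0 ?_ ha
    intro l _ h
    rw [io_congr (d := fun _ => 0) (fun x hx => h x hx x hx), io_zero]; rfl
  | succ k ih =>
    simp only [BB, LinearMap.comp_apply]
    rcases Nat.lt_or_ge k i with h | h
    · obtain rfl : i = k + 1 := by omega
      have : io (vv R (k+1)) a = 0 := by
        refine sm_ext (io (vv R (k+1))) 0 ?_ ha
        intro l _ h
        rw [io_congr (d := fun _ => 0) (fun x hx => h x hx x hx), io_zero]; rfl
      rw [this, map_zero]
    · cases n with
      | zero =>
        have := sm_ext (BB R k ∘ₗ io (vv R (k+1))) 0 (by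
          intro l hl _
          obtain rfl := List.length_eq_zero_iff.1 hl
          simp) ha
        simpa using this
      | succ n => exact ih h n (io_mem _ ha)

lemma vv_alt {l : List Sp} (h : ∀ x ∈ l, ∀ y ∈ l, dist x y < 1) {x : Sp} (hx : x ∈ l)
    (hb : (lb x).2 = false) : ∀ y ∈ l, vv R (lb x).1.val y = 0 := by
  intro y hy
  apply vv_zero
  rcases lb_spec x with h3 | h3
  · rw [hb] at h3; simp at h3
  · have := abs_co_sub_le x y (lb x).1
    have h4 := h x hx y hy
    rw [abs_le] at this
    linarith [h3.2, this.1]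

lemma vv_sum {k : ℕ} {x : Sp} (h : (lb x).1.val ≤ k) (hb : (lb x).2 = true) :
    ∑ i ∈ Finset.range (k+1), vv R i x = 1 := by
  rw [Finset.sum_eq_single (lb x).1.val]
  · simp [vv, hb]
  · intro b _ hb'; simp [vv, hb'.symm]
  · intro h'; simp at h'; omega

lemma BB_bd_zero (l : List Sp) (h : ∀ x ∈ l, ∀ y ∈ l, dist x y < 1) :
    BB R 3 (bd R Sp (Finsupp.single l 1)) = 0 := by
  by_cases hc : ∃ x ∈ l, (lb x).2 = false
  · obtain ⟨x, hx, hb⟩ := hc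
    have hv := vv_alt R h hx hb
    cases hl : l.length with
    | zero =>
      obtain rfl := List.length_eq_zero_iff.1 hl
      simp at hx
    | succ n =>
      refine BB_Z R 3 (lb x).1.val (by omega) n (bd_mem (single_mem_sm hl ?_ _))
      intro u hu _ _; exact hv u hu
  · push Not at hc
    have : bd R Sp (Finsupp.single l 1) = io (fun x => ∑ i ∈ Finset.range 4, vv R i x) (Finsupp.single l 1) := by
      refine io_congr fun x hx => (vv_sum R (k := 3) (by omega) ?_).symm
      simpa using hc x hx
    rw [this, io_sum, map_sum]
    exact Finset.sum_eq_zero fun i hi => BB_io R 3 i (by simp at hi; omega) _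

def Zs (k : ℕ) : Set Sp := {x | ∀ i : Fin 4, k < i.val → co x i = 0}

lemma BB_bd (k : ℕ) (hk : k + 1 < 4) (l : List Sp) (h : ∀ x ∈ l, ∀ y ∈ l, dist x y < 1)
    (hZ : ∀ x ∈ l, x ∈ Zs (k+1)) (hp : ∀ x ∈ l, 0 ≤ co x ⟨k+1, hk⟩) :
    BB R (k+1) (Finsupp.single l 1) = BB R k (bd R Sp (Finsupp.single l 1)) := by
  have hle : ∀ x ∈ l, (lb x).1.val ≤ k + 1 := by
    intro x hx
    by_contra hh
    have := hZ x hx (lb x).1 (by omega)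
    rcases lb_spec x with h3 | h3
    · linarith [h3.2]
    · linarith [h3.2]
  have hlt : ∀ x ∈ l, (lb x).2 = false → (lb x).1.val ≤ k := by
    intro x hx hb
    by_contra hh
    have e : (lb x).1 = ⟨k+1, hk⟩ := Fin.ext (by have := hle x hx; simp; omega)
    have := hp x hx
    rcases lb_spec x with h3 | h3
    · rw [hb] at h3; simp at h3
    · rw [e] at h3; linarith [h3.2]
  by_cases hc : ∃ x ∈ l, (lb x).2 = false
  · obtain ⟨x, hx, hb⟩ := hc
    have hv := vv_alt R h hx hb
    have hle' := hlt x hx hb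
    cases hl : l.length with
    | zero =>
      obtain rfl := List.length_eq_zero_iff.1 hl
      simp at hx
    | succ n =>
      have hm : Finsupp.single l 1 ∈ sm R (fun y _ => vv R (lb x).1.val y = 0) (n+1) :=
        single_mem_sm hl (fun u hu _ _ => hv u hu) _
      rw [BB_Z R (k+1) (lb x).1.val (by omega) _ hm, BB_Z R k (lb x).1.val hle' n (bd_mem hm)]
  · push Not at hc
    have : bd R Sp (Finsupp.single l 1) = io (fun x => ∑ i ∈ Finset.range (k+2), vv R i x) (Finsupp.single l 1) := by
      refine io_congr fun x hx => (vv_sum R (k := k+1) (hle x hx) ?_).symm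
      simpa using hc x hx
    rw [this, io_sum, map_sum, Finset.sum_range_succ, Finset.sum_eq_zero, zero_add]
    · rfl
    · exact fun i hi => BB_io R k i (by simp at hi; omega) _

lemma mapL_const {Y Z : Type*} {r : Y → Y → Prop} (n : ℕ) (e : Z) {a : Ch R Y} (ha : a ∈ sm R r n)
    (h : ev (fun _ => (1:R)) a = 0) : mapL R (fun _ => e) a = 0 := by
  have : mapL R (fun _ : Y => e) a = ((LinearMap.toSpanSingleton R _ (Finsupp.single (List.replicate n e) (1:R))) ∘ₗ ev (fun _ => (1:R))) a := by
    refine sm_ext _ _ ?_ ha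
    intro l hl _
    rw [mapL_single, LinearMap.comp_apply, ev_single]
    simp [List.map_const', hl]
  rw [this, LinearMap.comp_apply, h, map_zero]

lemma isClosed_Zs (k : ℕ) : IsClosed (Zs k) := by
  have : Zs k = ⋂ i : Fin 4, ⋂ _ : k < i.val, {x | co x i = 0} := by ext; simp [Zs]
  rw [this]
  exact isClosed_iInter fun i => isClosed_iInter fun _ => isClosed_eq (continuous_co i) continuous_const

lemma exists_T (k : ℕ) (hk : k < 4) : ∀ ε > 0, ∃ T ∈ sm R (rel ε (Zs k)) (k+1),
    bd R Sp T = 0 ∧ ev (fun _ => (1:R)) T = 0 ∧ BB R k T [] = 1 := by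
  induction k with
  | zero =>
    intro ε hε
    refine ⟨Finsupp.single [ee 0] 1 - Finsupp.single [refl 0 (ee 0)] 1, Submodule.sub_mem _ (single_mem_sm rfl ?_ _) (single_mem_sm rfl ?_ _), ?_, ?_, ?_⟩
    · simp only [List.mem_singleton]
      rintro _ rfl _ rfl
      have : ee 0 ∈ Zs 0 := by intro i hi; rw [co_ee, if_neg]; rintro rfl; simp at hi
      exact ⟨this, this, by simpa using hε⟩
    · simp only [List.mem_singleton]
      rintro _ rfl _ rfl
      have : refl 0 (ee 0) ∈ Zs 0 := by
        intro i hi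
        have : i ≠ 0 := by rintro rfl; simp at hi
        rw [co_refl, co_ee, if_neg this, if_neg this]
      exact ⟨this, this, by simpa using hε⟩
    · simp [bd, io_cons]
    · simp
    · have h1 : vv R 0 (ee 0) = 1 := by
        have hh : ∀ i, i ≠ 0 → co (ee 0) i = 0 := by intro i hi; rw [co_ee, if_neg hi]
        have h0 : (lb (ee 0)).1 = 0 := by
          by_contra hc
          have := hh _ hc
          rcases lb_spec (ee 0) with h3 | h3 <;> linarith [h3.2]
        rw [vv, if_pos]
        refine ⟨by rw [h0]; rfl, ?_⟩
        rcases lb_spec (ee 0) with h3 | h3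
        · exact h3.1
        · rw [h0, co_ee] at h3; norm_num at h3
      have h2 : vv R 0 (refl 0 (ee 0)) = 0 := by
        refine vv_zero R (n := 0) ?_
        rw [co_refl, co_ee]; norm_num
      simp [BB, io_cons, h1, h2]
  | succ k ih =>
    intro ε hε
    set K : Fin 4 := ⟨k+1, hk⟩ with hKdef
    have hip : ∀ x, ip x (ee K) = co x K := by
      intro x; simp [ip, co_ee]
    have hKc : IsCompact (Zs k) := (isClosed_Zs k).isCompact
    have hsub : ∀ x ∈ Zs k, 0 ≤ ip x (ee K) := by
      intro x hx; rw [hip, hx K (by simp [hKdef])]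
    obtain ⟨δ, hδ, H, hHm, hHb⟩ := homot (R := R) hKc (F := fun x t => nl (ee K) x t)
      ((continuousOn_nl (ee K)).mono (Set.prod_mono (fun x hx => hsub x hx) subset_rfl))
      (K' := {x | x ∈ Zs (k+1) ∧ 0 ≤ co x K}) (by
        intro x hx t ht0 ht1
        obtain ⟨c, hc, hco⟩ := co_nl ht0 ht1 (hsub x hx)
        refine ⟨fun i hi => ?_, ?_⟩
        · rw [hco, hx i (by omega), co_ee, if_neg]
          · simp
          · rintro rfl; simp [hKdef] at hi
        · rw [hco, hx K (by simp [hKdef]), co_ee, if_pos rfl]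
          simp; positivity) (ε := min ε 1) (by positivity)
    obtain ⟨T, hT, hT1, hT2, hT3⟩ := ih (by omega) δ hδ
    have hm := hHm _ _ hT
    have hb : bd R Sp (- H T) = T := by
      have := hHb T
      simp only [hT1, map_zero, add_zero, nl_zero, nl_one] at this
      rw [mapL_const R _ _ hT hT2] at this
      rw [map_neg, this]
      have : mapL R (fun x : Sp => x) T = T := by
        have : mapL R (fun x : Sp => x) = LinearMap.id := lin_ext (by simp)
        rw [this]; rfl
      rw [this]; simp
    have hm' : - H T ∈ sm R (rel (min ε 1) {x | x ∈ Zs (k+1) ∧ 0 ≤ co x K}) (k + 1 + 1) := Submodule.neg_mem _ hm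
    generalize - H T = h at hb hm'
    refine ⟨h - mapL R (refl K) h, Submodule.sub_mem _ ?_ ?_, ?_, ?_, ?_⟩
    · exact sm_mono (fun x y hxy => ⟨hxy.1.1, hxy.2.1.1, hxy.2.2.trans_le (min_le_left _ _)⟩) hm'
    · refine mapL_mem ?_ hm'
      have : ∀ x, x ∈ Zs (k+1) → refl K x ∈ Zs (k+1) := by
        intro x hx i hi
        rw [co_refl, hx i hi]; simp
      rintro x y ⟨hx, hy, hxy⟩
      exact ⟨this x hx.1, this y hy.1, by rw [dist_refl]; exact hxy.trans_le (min_le_left _ _)⟩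
    · rw [map_sub, ← mapL_bd, hb]
      have : mapL R (refl K) T = LinearMap.id (R := R) T := by
        refine sm_ext _ _ ?_ hT
        intro l _ hl
        rw [mapL_single, LinearMap.id_apply, List.map_congr_left (g := id), List.map_id]
        intro x hx
        apply co_inj
        ext i
        rw [co_refl]
        split_ifs with hi
        · rw [hi, id, (hl x hx x hx).1 K (by simp [hKdef]), neg_zero]
        · rfl
      rw [this]; simp
    · rw [map_sub, ev_mapL, sub_self]
    · rw [map_sub]
      have h1 : BB R (k+1) (mapL R (refl K) h) = 0 := by
        refine BB_Z R (k+1) (k+1) le_rfl (k+1+1) (mapL_mem ?_ hm')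
        rintro x y ⟨hx, hy, hxy⟩
        refine vv_zero R (n := K) ?_
        rw [co_refl, if_pos rfl]; linarith [hx.2]
      have h2 : BB R (k+1) h = BB R k (bd R Sp h) := by
        refine sm_ext (BB R (k+1)) (BB R k ∘ₗ bd R Sp) ?_ hm'
        intro l _ hl
        exact BB_bd R k hk l (fun x hx y hy => (hl x hx y hy).2.2.trans_le (min_le_right _ _))
          (fun x hx => (hl x hx x hx).1.1) (fun x hx => (hl x hx x hx).1.2)
      rw [h1, h2, hb, sub_zero, hT3]
end T
end LC

namespace LC

noncomputable def ph (p : ℕ) (m l : ℤ) : ℂ := Complex.exp (2 * Real.pi * Complex.I * m * l / p)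

lemma ph_norm (p : ℕ) (m l : ℤ) : ‖ph p m l‖ = 1 := by
  have : (2 * Real.pi * Complex.I * m * l / p : ℂ) = ((2 * Real.pi * m * l / p : ℝ) : ℂ) * Complex.I := by
    push_cast; ring
  rw [ph, this, Complex.norm_exp_ofReal_mul_I]
lemma ph_add (p : ℕ) (m n l : ℤ) : ph p (m + n) l = ph p m l * ph p n l := by
  rw [ph, ph, ph, ← Complex.exp_add]; congr 1; push_cast; ring
lemma ph_zero (p : ℕ) (l : ℤ) : ph p 0 l = 1 := by simp [ph]
lemma ph_eq_one {p : ℕ} (hp : p ≠ 0) (m l : ℤ) : ph p m l = 1 ↔ (p : ℤ) ∣ m * l := by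
  have hp' : (p : ℂ) ≠ 0 := by exact_mod_cast hp
  rw [ph, Complex.exp_eq_one_iff]
  constructor
  · rintro ⟨n, hn⟩
    have h2 : (2 * Real.pi * Complex.I : ℂ) ≠ 0 := Complex.two_pi_I_ne_zero
    refine ⟨n, ?_⟩
    have : (2 * Real.pi * Complex.I : ℂ) * (m * l) = (2 * Real.pi * Complex.I : ℂ) * (p * n) := by
      field_simp at hn ⊢
      linear_combination hn
    have := mul_left_cancel₀ h2 this
    exact_mod_cast this
  · rintro ⟨n, hn⟩
    refine ⟨n, ?_⟩
    have : (m * l : ℂ) = p * n := by exact_mod_cast hn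
    rw [show (2 * Real.pi * Complex.I * m * l / p : ℂ) = (2 * Real.pi * Complex.I) * (m * l) / p by ring, this]
    field_simp

noncomputable def rot (p : ℕ) (ℓ : Fin 2 → ℤ) (m : ℤ) (x : Sp) : Sp :=
  ⟨WithLp.toLp 2 (fun j => ph p m (ℓ j) * x.1 j), by
    have h : ‖x.1‖ ^ 2 = 1 := by simp
    rw [EuclideanSpace.norm_sq_eq] at h
    rw [mem_sphere_zero_iff_norm]
    refine (pow_eq_one_iff_of_nonneg (norm_nonneg _) two_ne_zero).1 ?_
    rw [EuclideanSpace.norm_sq_eq]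
    simpa [ph_norm] using h⟩

variable (p : ℕ) (ℓ : Fin 2 → ℤ)
lemma rot_apply (m : ℤ) (x : Sp) (j : Fin 2) : (rot p ℓ m x).1 j = ph p m (ℓ j) * x.1 j := rfl
lemma rot_add (m n : ℤ) (x : Sp) : rot p ℓ (m + n) x = rot p ℓ m (rot p ℓ n x) := by
  apply Subtype.ext; ext j; simp only [rot_apply, ph_add]; ring
lemma rot_zero (x : Sp) : rot p ℓ 0 x = x := by
  apply Subtype.ext; ext j; simp only [rot_apply, ph_zero]; ring
lemma rot_dvd (hp : p ≠ 0) (m : ℤ) (h : (p : ℤ) ∣ m) (x : Sp) : rot p ℓ m x = x := by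
  apply Subtype.ext; ext j; rw [rot_apply, (ph_eq_one hp _ _).2 (h.mul_right _), one_mul]
lemma rot_congr (hp : p ≠ 0) (m n : ℤ) (h : (p : ℤ) ∣ m - n) (x : Sp) : rot p ℓ m x = rot p ℓ n x := by
  rw [← rot_dvd p ℓ hp _ h (rot p ℓ n x), ← rot_add]; congr 1; ring
lemma exists_ne (x : Sp) : ∃ j, x.1 j ≠ 0 := by
  by_contra! hc
  have h : ‖x.1‖ ^ 2 = 1 := by simp
  rw [EuclideanSpace.norm_sq_eq] at h
  simp [hc] at h
lemma rot_free (hp : p ≠ 0) (hℓ : ∀ j, IsCoprime (ℓ j) (p : ℤ)) (m : ℤ) (x : Sp) (h : rot p ℓ m x = x) : (p : ℤ) ∣ m := by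
  obtain ⟨j, hj⟩ := exists_ne x
  have h1 : ph p m (ℓ j) * x.1 j = x.1 j := by rw [← rot_apply, h]
  have h2 : ph p m (ℓ j) = 1 := by
    apply mul_right_cancel₀ hj; rw [h1, one_mul]
  exact (hℓ j).symm.dvd_of_dvd_mul_right ((ph_eq_one hp _ _).1 h2)
lemma rot_dist (m : ℤ) (x y : Sp) : dist (rot p ℓ m x) (rot p ℓ m y) = dist x y := by
  rw [Subtype.dist_eq, Subtype.dist_eq, EuclideanSpace.dist_eq, EuclideanSpace.dist_eq]
  congr 2; ext j
  rw [rot_apply, rot_apply, dist_eq_norm, ← mul_sub, norm_mul, ph_norm, one_mul, dist_eq_norm]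
lemma rot_isometry (m : ℤ) : Isometry (rot p ℓ m) := Isometry.of_dist_eq (rot_dist p ℓ m)
lemma rot_continuous (m : ℤ) : Continuous (rot p ℓ m) := (rot_isometry p ℓ m).continuous

noncomputable def lmk (x : Sp) : LensSpace p 2 ℓ := Quot.mk _ x
lemma lensRel_iff (x y : Sp) : lensRel p 2 ℓ x y ↔ ∃ m, y = rot p ℓ m x := by
  constructor
  · rintro ⟨m, hm⟩; exact ⟨m, Subtype.ext (by ext j; exact hm j)⟩
  · rintro ⟨m, rfl⟩; exact ⟨m, fun j => rfl⟩
lemma lmk_eq (x y : Sp) : lmk p ℓ x = lmk p ℓ y ↔ ∃ m, y = rot p ℓ m x := by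
  have he : Equivalence (lensRel p 2 ℓ) := by
    refine ⟨fun x => ?_, fun {x y} h => ?_, fun {x y z} h h' => ?_⟩
    · exact (lensRel_iff p ℓ x x).2 ⟨0, (rot_zero p ℓ x).symm⟩
    · obtain ⟨m, rfl⟩ := (lensRel_iff p ℓ x y).1 h
      exact (lensRel_iff _ _ _ _).2 ⟨-m, by rw [← rot_add]; simp [rot_zero]⟩
    · obtain ⟨m, rfl⟩ := (lensRel_iff p ℓ x y).1 h
      obtain ⟨n, rfl⟩ := (lensRel_iff p ℓ _ z).1 h'
      exact (lensRel_iff _ _ _ _).2 ⟨n + m, by rw [← rot_add]⟩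
  rw [← lensRel_iff]
  constructor
  · intro h; exact he.eqvGen_iff.1 (Quot.eqvGen_exact h)
  · exact fun h => Quot.sound h
lemma lmk_rot (m : ℤ) (x : Sp) : lmk p ℓ (rot p ℓ m x) = lmk p ℓ x :=
  ((lmk_eq p ℓ _ _).2 ⟨m, rfl⟩).symm
lemma lmk_surj : Function.Surjective (lmk p ℓ) := Quot.mk_surjective
lemma lmk_quot : Topology.IsQuotientMap (lmk p ℓ) := isQuotientMap_quot_mk

noncomputable def rotHom : Multiplicative ℤ →* Equiv.Perm Sp where
  toFun m := ⟨rot p ℓ m.toAdd, rot p ℓ (- m.toAdd), fun x => by rw [← rot_add]; simp [rot_zero],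
    fun x => by rw [← rot_add]; simp [rot_zero]⟩
  map_one' := by ext1 x; exact rot_zero p ℓ x
  map_mul' m n := by ext1 x; exact rot_add p ℓ _ _ x
lemma rotHom_apply (m : Multiplicative ℤ) (x : Sp) : rotHom p ℓ m x = rot p ℓ m.toAdd x := rfl

lemma isQC (hp : p ≠ 0) (hℓ : ∀ j, IsCoprime (ℓ j) (p : ℤ)) :
    IsQuotientCoveringMap (lmk p ℓ) (rotHom p ℓ).range := by
  have hfin : Finite (rotHom p ℓ).range := by
    have : ((rotHom p ℓ).range : Set (Equiv.Perm Sp)) ⊆ (fun n : ℕ => rotHom p ℓ (Multiplicative.ofAdd (n:ℤ))) '' (Finset.range p : Set ℕ) := by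
      rintro _ ⟨m, rfl⟩
      have hp' : (p : ℤ) ≠ 0 := by exact_mod_cast hp
      have h0 := Int.emod_nonneg m.toAdd hp'
      have h1 := Int.emod_lt_of_pos m.toAdd (b := (p:ℤ)) (by omega)
      refine ⟨(m.toAdd % p).toNat, by simp; omega, ?_⟩
      ext1 x
      rw [rotHom_apply, rotHom_apply]
      refine rot_congr p ℓ hp _ _ ?_ x
      simp only [toAdd_ofAdd, Int.toNat_of_nonneg h0]
      exact (Int.mod_modEq _ _).symm.dvd
    exact ((Finset.finite_toSet _).image _ |>.subset this).to_subtype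
  have hc : ContinuousConstSMul (rotHom p ℓ).range Sp := by
    refine ⟨?_⟩
    rintro ⟨_, m, rfl⟩
    exact rot_continuous p ℓ _
  have hcan : IsCancelSMul (rotHom p ℓ).range Sp := by
    refine ⟨?_⟩
    rintro ⟨_, m, rfl⟩ ⟨_, n, rfl⟩ x h
    have h : rot p ℓ m.toAdd x = rot p ℓ n.toAdd x := h
    apply Subtype.ext
    ext1 y
    refine rot_congr p ℓ hp _ _ (rot_free p ℓ hp hℓ _ x ?_) y
    rw [sub_eq_neg_add, rot_add, h, ← rot_add]; simp [rot_zero]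
  refine (lmk_quot p ℓ).isQuotientCoveringMap_of_properlyDiscontinuousSMul ?_
  intro x y
  rw [eq_comm, lmk_eq]
  constructor
  · rintro ⟨m, rfl⟩
    exact ⟨⟨rotHom p ℓ (Multiplicative.ofAdd m), _, rfl⟩, rfl⟩
  · rintro ⟨⟨_, m, rfl⟩, rfl⟩
    exact ⟨m.toAdd, rfl⟩

lemma lmk_cov (hp : p ≠ 0) (hℓ : ∀ j, IsCoprime (ℓ j) (p : ℤ)) : IsCoveringMap (lmk p ℓ) :=
  (isQC p ℓ hp hℓ).isCoveringMap
lemma lmk_cont : Continuous (lmk p ℓ) := (lmk_quot p ℓ).continuous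
lemma lmk_open : IsOpenMap (lmk p ℓ) := by
  intro U hU
  rw [← (lmk_quot p ℓ).isOpen_preimage]
  have : lmk p ℓ ⁻¹' (lmk p ℓ '' U) = ⋃ m : ℤ, rot p ℓ m ⁻¹' U := by
    ext x
    simp only [Set.mem_preimage, Set.mem_image, Set.mem_iUnion]
    constructor
    · rintro ⟨y, hy, h⟩
      obtain ⟨m, rfl⟩ := (lmk_eq p ℓ _ _).1 h.symm
      exact ⟨m, hy⟩
    · rintro ⟨m, hm⟩
      exact ⟨_, hm, lmk_rot p ℓ m x⟩
  rw [this]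
  exact isOpen_iUnion fun m => hU.preimage (rot_continuous p ℓ m)

end LC

namespace LC

section alg
variable {A : Type*} [Ring A]
def Nop (G : A) (p : ℕ) : A := ∑ m ∈ Finset.range p, G ^ m
def Qop (G : A) (p : ℕ) : A := ∑ k ∈ Finset.range p, ∑ m ∈ Finset.range k, G ^ m
lemma sub_Nop {G : A} {p : ℕ} (h : G ^ p = 1) : (G - 1) * Nop G p = 0 := by
  rw [Nop, mul_geom_sum, h, sub_self]
lemma Nop_sub {G : A} {p : ℕ} (h : G ^ p = 1) : Nop G p * (G - 1) = 0 := by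
  rw [Nop, geom_sum_mul, h, sub_self]
lemma sub_Qop {G : A} {p : ℕ} (h : (p : A) = 0) : (G - 1) * Qop G p = Nop G p := by
  rw [Qop, Finset.mul_sum]
  simp only [mul_geom_sum, Finset.sum_sub_distrib]
  simp [Nop, h]
end alg

abbrev XX := Sp × Sp
noncomputable def gX (p : ℕ) (ℓ : Fin 2 → ℤ) (x : XX) : XX := (rot p ℓ 1 x.1, x.2)

lemma gX_dist (p : ℕ) (ℓ : Fin 2 → ℤ) (x y : XX) : dist (gX p ℓ x) (gX p ℓ y) = dist x y := by
  simp [Prod.dist_eq, gX, rot_dist]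

section
variable (R : Type*) [CommRing R]

lemma mapL_id (Y : Type*) (a : Ch R Y) : mapL R (fun x : Y => x) a = a := by
  have : mapL R (fun x : Y => x) = LinearMap.id := lin_ext (by simp)
  rw [this]; rfl

noncomputable def GG (p : ℕ) (ℓ : Fin 2 → ℤ) : Module.End R (Ch R XX) := mapL R (gX p ℓ)

lemma GG_pow_apply (p : ℕ) (ℓ : Fin 2 → ℤ) (m : ℕ) (a : Ch R XX) :
    (GG R p ℓ ^ m) a = mapL R (fun x => (rot p ℓ m x.1, x.2)) a := by
  induction m with
  | zero => simp [rot_zero, mapL_id]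
  | succ m ih =>
    rw [pow_succ', Module.End.mul_apply, ih, GG, mapL_mapL]
    congr 2
    ext1 x
    simp only [Function.comp, gX]
    rw [← rot_add]; push_cast; rw [add_comm]

lemma GG_pow_p {p : ℕ} (hp : p ≠ 0) (ℓ : Fin 2 → ℤ) : GG R p ℓ ^ p = 1 := by
  apply LinearMap.ext
  intro a
  rw [GG_pow_apply]
  simp [rot_dvd p ℓ hp, mapL_id]

lemma GG_mem {r : XX → XX → Prop} {p : ℕ} {ℓ : Fin 2 → ℤ} (hr : ∀ x y, r x y → r (gX p ℓ x) (gX p ℓ y)) {n : ℕ}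
    {a : Ch R XX} (ha : a ∈ sm R r n) : GG R p ℓ a ∈ sm R r n := mapL_mem hr ha
lemma GG_pow_mem {r : XX → XX → Prop} {p : ℕ} {ℓ : Fin 2 → ℤ} (hr : ∀ x y, r x y → r (gX p ℓ x) (gX p ℓ y)) {n : ℕ}
    {a : Ch R XX} (ha : a ∈ sm R r n) (m : ℕ) : (GG R p ℓ ^ m) a ∈ sm R r n := by
  induction m with
  | zero => simpa using ha
  | succ m ih => rw [pow_succ', Module.End.mul_apply]; exact GG_mem R hr ih
lemma Nop_mem {r : XX → XX → Prop} {p : ℕ} {ℓ : Fin 2 → ℤ} (hr : ∀ x y, r x y → r (gX p ℓ x) (gX p ℓ y)) {n : ℕ}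
    {a : Ch R XX} (ha : a ∈ sm R r n) (k : ℕ) : (Nop (GG R p ℓ) k) a ∈ sm R r n := by
  rw [Nop, LinearMap.sum_apply]
  exact Submodule.sum_mem _ fun m _ => GG_pow_mem R hr ha m
lemma Qop_mem {r : XX → XX → Prop} {p : ℕ} {ℓ : Fin 2 → ℤ} (hr : ∀ x y, r x y → r (gX p ℓ x) (gX p ℓ y)) {n : ℕ}
    {a : Ch R XX} (ha : a ∈ sm R r n) (k : ℕ) : (Qop (GG R p ℓ) k) a ∈ sm R r n := by
  rw [Qop, LinearMap.sum_apply]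
  refine Submodule.sum_mem _ fun m _ => ?_
  exact Nop_mem R hr ha m
lemma bd_GG (p : ℕ) (ℓ : Fin 2 → ℤ) (a : Ch R XX) : bd R XX (GG R p ℓ a) = GG R p ℓ (bd R XX a) :=
  (mapL_bd _ a).symm
lemma bd_GG_pow (p : ℕ) (ℓ : Fin 2 → ℤ) (m : ℕ) (a : Ch R XX) : bd R XX ((GG R p ℓ ^ m) a) = (GG R p ℓ ^ m) (bd R XX a) := by
  rw [GG_pow_apply, GG_pow_apply, mapL_bd]
lemma bd_Nop (p : ℕ) (ℓ : Fin 2 → ℤ) (k : ℕ) (a : Ch R XX) : bd R XX (Nop (GG R p ℓ) k a) = Nop (GG R p ℓ) k (bd R XX a) := by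
  simp only [Nop, LinearMap.sum_apply, map_sum, bd_GG_pow]
lemma bd_Qop (p : ℕ) (ℓ : Fin 2 → ℤ) (k : ℕ) (a : Ch R XX) : bd R XX (Qop (GG R p ℓ) k a) = Qop (GG R p ℓ) k (bd R XX a) := by
  simp only [Qop, LinearMap.sum_apply, map_sum, bd_GG_pow]

lemma coll (p : ℕ) (hpR : (p : R) = 0) (ℓ : Fin 2 → ℤ) (c : Sp) (a : Ch R XX) :
    mapL R (fun x : XX => (c, x.2)) (Nop (GG R p ℓ) p a) = 0 := by
  simp only [Nop, LinearMap.sum_apply, map_sum, GG_pow_apply, mapL_mapL]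
  simp [Function.comp_def, ← Nat.cast_smul_eq_nsmul R, hpR]
lemma coll' (p : ℕ) (ℓ : Fin 2 → ℤ) (c : Sp) (a : Ch R XX) :
    mapL R (fun x : XX => (c, x.2)) ((GG R p ℓ - 1) a) = 0 := by
  rw [LinearMap.sub_apply, map_sub, GG, mapL_mapL]
  simp [Function.comp_def, gX]

noncomputable def circ (θ : ℝ) : Sp := mkS ![Real.cos θ, Real.sin θ, 0, 0] (by
  simp [Fin.sum_univ_four])
noncomputable def circ2 (a b : ℝ) (h : a ^ 2 + b ^ 2 = 1) : Sp := mkS ![0, 0, a, b] (by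
  simp [Fin.sum_univ_four, h])
lemma continuous_toE : Continuous toE := by
  have : Continuous (fun a : Fin 4 → ℝ => (![⟨a 0, a 1⟩, ⟨a 2, a 3⟩] : Fin 2 → ℂ)) := by
    refine continuous_pi fun i => ?_
    fin_cases i
    · simpa [Complex.mk_eq_add_mul_I] using (by fun_prop : Continuous fun a : Fin 4 → ℝ => (a 0 : ℂ) + a 1 * Complex.I)
    · simpa [Complex.mk_eq_add_mul_I] using (by fun_prop : Continuous fun a : Fin 4 → ℝ => (a 2 : ℂ) + a 3 * Complex.I)
  exact (PiLp.continuous_toLp 2 _).comp this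
lemma continuous_circ : Continuous circ := by
  rw [continuous_induced_rng]
  refine continuous_toE.comp (continuous_pi fun i => ?_)
  fin_cases i <;> simp <;> fun_prop

lemma ph_re (p : ℕ) (l : ℤ) : (ph p 1 l).re = Real.cos (2 * Real.pi * l / p) := by
  have : (2 * Real.pi * Complex.I * (1:ℤ) * l / p : ℂ) = ((2 * Real.pi * l / p : ℝ) : ℂ) * Complex.I := by
    push_cast; ring
  rw [ph, this, Complex.exp_ofReal_mul_I_re]
lemma ph_im (p : ℕ) (l : ℤ) : (ph p 1 l).im = Real.sin (2 * Real.pi * l / p) := by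
  have : (2 * Real.pi * Complex.I * (1:ℤ) * l / p : ℂ) = ((2 * Real.pi * l / p : ℝ) : ℂ) * Complex.I := by
    push_cast; ring
  rw [ph, this, Complex.exp_ofReal_mul_I_im]

lemma circ_zero : rot p ℓ 1 (circ 0) = circ (2 * Real.pi * ℓ 0 / p) := by
  apply co_inj
  ext i
  fin_cases i <;> simp [co, coE, rot_apply, circ, mkS, toE, ph_re, ph_im]

lemma exists_P (p : ℕ) (hp : p ≠ 0) (hpR : (p : R) = 0) (ℓ : Fin 2 → ℤ) (ε : ℝ) (hε : 0 < ε) :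
    ∃ P0 ∈ sm R (rel ε (Set.univ : Set XX)) 4, ∃ P1 ∈ sm R (rel ε (Set.univ : Set XX)) 5,
    ∃ P2 ∈ sm R (rel ε (Set.univ : Set XX)) 6, ∃ P3 ∈ sm R (rel ε (Set.univ : Set XX)) 7,
    bd R XX P0 = 0 ∧ BB R 3 (mapL R Prod.snd P0) [] = 1 ∧ bd R XX P1 = (GG R p ℓ - 1) P0 ∧
    bd R XX P2 = Nop (GG R p ℓ) p P1 ∧ bd R XX P3 = (GG R p ℓ - 1) P2 := by
  have hGp := GG_pow_p R hp ℓ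
  -- third homotopy
  obtain ⟨s, hs, hs0⟩ : ∃ s : ℝ, s ^ 2 = 1 ∧ 0 ≤ s * Real.cos (Real.pi * ℓ 1 / p) := by
    rcases le_total 0 (Real.cos (Real.pi * ℓ 1 / p)) with h | h
    · exact ⟨1, by norm_num, by linarith⟩
    · exact ⟨-1, by norm_num, by linarith⟩
  set φ := Real.pi * ℓ 1 / p with hφ
  set c' : Sp := circ2 (s * Real.cos φ) (s * Real.sin φ) (by
    rw [mul_pow, mul_pow, hs]; simp) with hc'
  have hip : ∀ x, ip x c' = co x 2 * (s * Real.cos φ) + co x 3 * (s * Real.sin φ) := by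
    intro x; simp [ip, hc', circ2, Fin.sum_univ_four]
  have cip : Continuous (fun x => ip x c') := by
    simp only [hip]
    exact ((continuous_co 2).mul continuous_const).add ((continuous_co 3).mul continuous_const)
  obtain ⟨ε3, hε3, H3, hH3, hH3b⟩ := homot (R := R) (Y := XX) (Z := XX) (K := {x | 0 ≤ ip x.1 c'})
    (isClosed_le continuous_const (cip.comp continuous_fst)).isCompact
    (F := fun x t => (nl c' x.1 t, x.2)) (by
      refine ContinuousOn.prodMk ?_ (by fun_prop)
      refine (continuousOn_nl c').comp (f := fun z : XX × ℝ => (z.1.1, z.2)) (by fun_prop) ?_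
      rintro ⟨x, t⟩ ⟨h1, h2⟩
      exact ⟨h1, h2⟩) (K' := Set.univ) (fun _ _ _ _ _ => trivial) hε
  -- second homotopy
  have hip2 : ∀ x, ip x (ee 2) = co x 2 := by intro x; simp [ip, co_ee]
  have hccl : IsClosed {x : XX | co x.1 2 = 0 ∧ co x.1 3 = 0} :=
    (isClosed_eq ((continuous_co 2).comp continuous_fst) continuous_const).inter
      (isClosed_eq ((continuous_co 3).comp continuous_fst) continuous_const)
  obtain ⟨ε2, hε2, H2, hH2, hH2b⟩ := homot (R := R) (Y := XX) (Z := XX) (K := {x | co x.1 2 = 0 ∧ co x.1 3 = 0})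
    hccl.isCompact
    (F := fun x t => (nl (ee 2) x.1 t, x.2)) (by
      refine ContinuousOn.prodMk ?_ (by fun_prop)
      refine (continuousOn_nl (ee 2)).comp (f := fun z : XX × ℝ => (z.1.1, z.2)) (by fun_prop) ?_
      rintro ⟨x, t⟩ ⟨h1, h2⟩
      refine ⟨?_, h2⟩
      change 0 ≤ ip x.1 (ee 2)
      rw [hip2, h1.1]) (K' := {x | 0 ≤ co x.1 2 ∧ co x.1 3 = 0}) (by
      rintro x ⟨h1, h2⟩ t ht0 ht1
      obtain ⟨c, hc, hco⟩ := co_nl (e := ee 2) ht0 ht1 (x := x.1) (by rw [hip2, h1])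
      refine ⟨?_, ?_⟩
      · change 0 ≤ co (nl (ee 2) x.1 t) 2
        rw [hco, h1, co_ee]; simp; positivity
      · change co (nl (ee 2) x.1 t) 3 = 0
        rw [hco, h2, co_ee]; simp) (ε := min ε ε3) (by positivity)
  -- first homotopy
  obtain ⟨ε1, hε1, H1, hH1, hH1b⟩ := homot (R := R) (Y := Sp) (Z := XX) (K := Set.univ) isCompact_univ
    (F := fun w t => (circ (t * (2 * Real.pi * ℓ 0 / p)), w)) (by
      refine Continuous.continuousOn ?_
      exact (continuous_circ.comp (by fun_prop)).prodMk (by fun_prop))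
    (K' := {x | co x.1 2 = 0 ∧ co x.1 3 = 0}) (by
      intro w _ t _ _; simp [circ]) (ε := min ε ε2) (by positivity)
  obtain ⟨T, hT, hTb, -, hT1⟩ := exists_T R 3 (by norm_num) (min ε ε1) (by positivity)
  have hT' : T ∈ sm R (rel ε1 Set.univ) 4 :=
    sm_mono (fun x y h => ⟨trivial, trivial, h.2.2.trans_le (min_le_right _ _)⟩) hT
  have hP1 := hH1 _ _ hT'
  have hP1b := hH1b T
  rw [hTb, map_zero, add_zero] at hP1b
  simp only [one_mul, zero_mul] at hP1b
  set P0 : Ch R XX := mapL R (fun w => (circ 0, w)) T with hP0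
  have hP0m : P0 ∈ sm R (rel ε Set.univ) 4 := by
    refine mapL_mem ?_ hT
    rintro x y ⟨_, _, h⟩
    refine ⟨trivial, trivial, ?_⟩
    simp [Prod.dist_eq, hε]
    exact h.trans_le (min_le_left _ _)
  set P1 := H1 T with hP1d
  have hP1b' : bd R XX P1 = (GG R p ℓ - 1) P0 := by
    rw [hP1b, LinearMap.sub_apply, GG, hP0, mapL_mapL]
    simp only [Function.comp_def, gX, circ_zero]
    rfl
  have hP0b : bd R XX P0 = 0 := by rw [hP0, ← mapL_bd, hTb, map_zero]
  have hgrel : ∀ δ, ∀ x y, rel δ {x : XX | co x.1 2 = 0 ∧ co x.1 3 = 0} x y →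
      rel δ {x : XX | co x.1 2 = 0 ∧ co x.1 3 = 0} (gX p ℓ x) (gX p ℓ y) := by
    have : ∀ x : XX, co x.1 2 = 0 ∧ co x.1 3 = 0 → co (gX p ℓ x).1 2 = 0 ∧ co (gX p ℓ x).1 3 = 0 := by
      rintro x ⟨h1, h2⟩
      have h1 : (x.1.1 1).re = 0 := h1
      have h2 : (x.1.1 1).im = 0 := h2
      have : (rot p ℓ 1 x.1).1 1 = 0 := by
        rw [rot_apply, Complex.ext (z := x.1.1 1) (w := 0) h1 h2, mul_zero]
      constructor
      · change ((rot p ℓ 1 x.1).1 1).re = 0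
        rw [this]; rfl
      · change ((rot p ℓ 1 x.1).1 1).im = 0
        rw [this]; rfl
    rintro δ x y ⟨h1, h2, h3⟩
    exact ⟨this x h1, this y h2, by rw [gX_dist]; exact h3⟩
  have hgrel' : ∀ δ, ∀ x y : XX, rel δ Set.univ x y → rel δ Set.univ (gX p ℓ x) (gX p ℓ y) := by
    rintro δ x y ⟨h1, h2, h3⟩
    exact ⟨trivial, trivial, by rw [gX_dist]; exact h3⟩
  have hP1' : P1 ∈ sm R (rel ε2 {x : XX | co x.1 2 = 0 ∧ co x.1 3 = 0}) 5 :=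
    sm_mono (fun x y h => ⟨h.1, h.2.1, h.2.2.trans_le (min_le_right _ _)⟩) hP1
  have hNP1 := Nop_mem R (hgrel ε2) hP1' p
  have hP2 := hH2 _ _ hNP1
  have hP2b := hH2b (Nop (GG R p ℓ) p P1)
  have hz2 : Nop (GG R p ℓ) p ((GG R p ℓ - 1) P0) = 0 := by
    rw [← Module.End.mul_apply, Nop_sub hGp]; rfl
  rw [bd_Nop, hP1b', hz2] at hP2b
  simp only [nl_one, nl_zero, coll R p hpR, LinearMap.zero_apply, map_zero, add_zero, zero_sub] at hP2b
  rw [mapL_id] at hP2b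
  set P2 := - H2 (Nop (GG R p ℓ) p P1) with hP2d
  have hP2m : P2 ∈ sm R (rel (min ε ε3) {x : XX | 0 ≤ co x.1 2 ∧ co x.1 3 = 0}) 6 := Submodule.neg_mem _ hP2
  have hP2b' : bd R XX P2 = Nop (GG R p ℓ) p P1 := by rw [hP2d, map_neg, hP2b, neg_neg]
  have hK3 : (GG R p ℓ - 1) P2 ∈ sm R (rel ε3 {x : XX | 0 ≤ ip x.1 c'}) 6 := by
    rw [LinearMap.sub_apply]
    refine Submodule.sub_mem _ (mapL_mem ?_ hP2m) (sm_mono ?_ hP2m)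
    · have : ∀ x : XX, 0 ≤ co x.1 2 ∧ co x.1 3 = 0 → 0 ≤ ip (gX p ℓ x).1 c' := by
        rintro x ⟨h1, h2⟩
        have e1 : co x.1 2 = (x.1.1 1).re := rfl
        have e2 : co x.1 3 = (x.1.1 1).im := rfl
        rw [e1] at h1
        rw [e2] at h2
        have e3 : co (gX p ℓ x).1 2 = Real.cos (2 * φ) * (x.1.1 1).re := by
          change ((rot p ℓ 1 x.1).1 1).re = _
          rw [rot_apply, Complex.mul_re, h2, ph_re, hφ]
          rw [mul_zero, sub_zero]; congr 2; ring
        have e4 : co (gX p ℓ x).1 3 = Real.sin (2 * φ) * (x.1.1 1).re := by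
          change ((rot p ℓ 1 x.1).1 1).im = _
          rw [rot_apply, Complex.mul_im, h2, ph_im, hφ]
          rw [mul_zero, zero_add]; congr 2; ring
        rw [hip, e3, e4, Real.cos_two_mul, Real.sin_two_mul]
        have := Real.sin_sq_add_cos_sq φ
        have e5 : (2 * Real.cos φ ^ 2 - 1) * (x.1.1 1).re * (s * Real.cos φ) +
          2 * Real.sin φ * Real.cos φ * (x.1.1 1).re * (s * Real.sin φ) = (x.1.1 1).re * (s * Real.cos φ) := by
          linear_combination (2 * (x.1.1 1).re * (s * Real.cos φ)) * this
        rw [e5]; positivity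
      rintro x y ⟨h1, h2, h3⟩
      exact ⟨this x h1, this y h2, by rw [gX_dist]; exact h3.trans_le (min_le_right _ _)⟩
    · have : ∀ x : XX, 0 ≤ co x.1 2 ∧ co x.1 3 = 0 → 0 ≤ ip x.1 c' := by
        rintro x ⟨h1, h2⟩
        rw [hip, h2]; simp; positivity
      rintro x y ⟨h1, h2, h3⟩
      exact ⟨this x h1, this y h2, h3.trans_le (min_le_right _ _)⟩
  have hP3 := hH3 _ _ hK3
  have hP3b := hH3b ((GG R p ℓ - 1) P2)
  have hz : bd R XX ((GG R p ℓ - 1) P2) = 0 := by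
    have h3 : (GG R p ℓ - 1) (Nop (GG R p ℓ) p P1) = 0 := by
      have h4 := sub_Nop (A := Module.End R (Ch R XX)) (G := GG R p ℓ) (p := p) hGp
      rw [← Module.End.mul_apply]
      exact LinearMap.congr_fun h4 P1
    rw [LinearMap.sub_apply, map_sub, bd_GG, Module.End.one_apply, hP2b']
    exact h3
  rw [hz] at hP3b
  simp only [nl_one, nl_zero, coll' R p, map_zero, add_zero, zero_sub] at hP3b
  rw [mapL_id] at hP3b
  refine ⟨P0, hP0m, P1, ?_, P2, ?_, - H3 ((GG R p ℓ - 1) P2), Submodule.neg_mem _ hP3, hP0b, ?_, hP1b', hP2b', ?_⟩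
  · exact sm_mono (fun x y h => ⟨trivial, trivial, h.2.2.trans_le (min_le_left _ _)⟩) hP1
  · exact sm_mono (fun x y h => ⟨trivial, trivial, h.2.2.trans_le (min_le_left _ _)⟩) hP2m
  · rw [hP0, mapL_mapL]
    simp only [Function.comp_def]
    rw [mapL_id, hT1]
  · rw [map_neg, hP3b, neg_neg]
end
end LC

namespace LC
lemma Qop_comm {A : Type*} [Ring A] (G : A) (p : ℕ) : Qop G p * (G - 1) = (G - 1) * Qop G p := by
  have h : Commute (Qop G p) (G - 1) := by
    refine Commute.sub_right ?_ (Commute.one_right _)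
    exact Commute.sum_left _ _ _ fun i _ => Commute.sum_left _ _ _ fun j _ => (Commute.refl _).pow_left _
  exact h.eq

section
variable {p : ℕ} [NeZero p]

noncomputable def A0 (c : Fin 4 × ZMod p) : ZMod p := if c.2 = -1 then 1 else 0
noncomputable def A1 (c d : Fin 4 × ZMod p) : ZMod p :=
  if c.1 < d.1 then (if c.2.val < d.2.val then -1 else 0)
  else if d.1 < c.1 then (if d.2.val < c.2.val then 1 else 0) else 0
noncomputable def Apsi (c d e : Fin 4 × ZMod p) : ZMod p := A1 d e - A1 c e + A1 c d
open Classical in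
noncomputable def A2 (c d e : Fin 4 × ZMod p) : ZMod p :=
  if ((c.1 = 0 ∧ c.2 = 0) ∨ (d.1 = 0 ∧ d.2 = 0) ∨ (e.1 = 0 ∧ e.2 = 0)) then Apsi c d e else 0

def sh (m : ℤ) (c : Fin 4 × ZMod p) : Fin 4 × ZMod p := (c.1, c.2 + m)

lemma val_add_one_lt {a b : ZMod p} (ha : a ≠ -1) (hb : b ≠ -1) : (a + 1).val < (b + 1).val ↔ a.val < b.val := by
  have key : ∀ a : ZMod p, a ≠ -1 → (a + 1).val = a.val + 1 := by
    intro a ha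
    have h1 : a.val + 1 ≠ p := by
      intro h
      apply ha
      have : ((a.val + 1 : ℕ) : ZMod p) = 0 := by rw [h]; simp
      push_cast at this
      rw [ZMod.natCast_zmod_val] at this
      exact eq_neg_of_add_eq_zero_left this
    have h2 : a.val + 1 < p := lt_of_le_of_ne (ZMod.val_lt a) h1
    have : a + 1 = ((a.val + 1 : ℕ) : ZMod p) := by push_cast; rw [ZMod.natCast_zmod_val]
    rw [this, ZMod.val_natCast_of_lt h2]
  rw [key a ha, key b hb]; omega

lemma val_lt_neg_one {a : ZMod p} (ha : a ≠ -1) : a.val < (-1 : ZMod p).val := by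
  have h1 : ((-1 : ZMod p)).val + 1 = p := by
    obtain ⟨n, rfl⟩ : ∃ n, p = n + 1 := ⟨p - 1, by have := NeZero.ne p; omega⟩
    rw [ZMod.val_neg_one]
  have h2 := ZMod.val_lt a
  have h3 : a.val ≠ (-1 : ZMod p).val := fun h => ha (ZMod.val_injective p h)
  omega

lemma A1_aux (a b : ZMod p) :
    (if (a+1).val < (b+1).val then (1:ZMod p) else 0) - (if a.val < b.val then 1 else 0)
     = (if a = -1 then 1 else 0) - (if b = -1 then 1 else 0) := by
  by_cases ha : a = -1
  · subst ha
    by_cases hb : b = -1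
    · subst hb; simp
    · have h2 := val_lt_neg_one hb
      have h3 : (0:ZMod p).val < (b+1).val := by
        rw [ZMod.val_zero, Nat.pos_iff_ne_zero, Ne, ZMod.val_eq_zero]
        exact fun h => hb (eq_neg_of_add_eq_zero_left h)
      rw [neg_add_cancel, if_pos h3, if_neg (by omega), if_pos rfl, if_neg hb]
  · by_cases hb : b = -1
    · subst hb
      have h2 := val_lt_neg_one ha
      rw [neg_add_cancel, if_neg (by simp), if_pos h2, if_pos rfl, if_neg ha]
    · simp [val_add_one_lt ha hb, ha, hb]

lemma A1_shift {c d : Fin 4 × ZMod p} (h : c.1 = d.1 → c = d) :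
    A1 (sh 1 c) (sh 1 d) - A1 c d = A0 d - A0 c := by
  obtain ⟨i, a⟩ := c
  obtain ⟨j, b⟩ := d
  have e1 := A1_aux a b
  have e2 := A1_aux b a
  simp only [A1, sh, A0, Int.cast_one]
  rcases lt_trichotomy i j with hij | hij | hij
  · simp only [if_pos hij]
    have : ∀ P : Prop, ∀ [Decidable P], (if P then (-1:ZMod p) else 0) = - (if P then 1 else 0) := by
      intro P _; split_ifs <;> simp
    rw [this, this]
    linear_combination -e1
  · have := h hij
    simp only [Prod.mk.injEq] at this
    obtain ⟨rfl, rfl⟩ := this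
    simp
  · simp only [if_pos hij, if_neg hij.not_gt]
    linear_combination e2

lemma A1_self (c : Fin 4 × ZMod p) : A1 c c = 0 := by simp [A1]
lemma A1_symm (c d : Fin 4 × ZMod p) : A1 d c = - A1 c d := by
  simp only [A1]
  rcases lt_trichotomy c.1 d.1 with h | h | h
  · simp only [if_pos h, if_neg h.not_gt]; split_ifs <;> simp
  · simp [h]
  · simp only [if_pos h, if_neg h.not_gt]; split_ifs <;> simp
lemma Apsi_rep {c d e : Fin 4 × ZMod p} (h : c = d ∨ c = e ∨ d = e) : Apsi c d e = 0 := by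
  rcases h with rfl | rfl | rfl
  · simp [Apsi, A1_self]
  · simp [Apsi, A1_self, A1_symm c d]
  · simp [Apsi, A1_self]
lemma A2_rep {c d e : Fin 4 × ZMod p} (h : c = d ∨ c = e ∨ d = e) : A2 c d e = 0 := by
  simp [A2, Apsi_rep h]
lemma A2_swap1 (c d e : Fin 4 × ZMod p) : A2 d c e = - A2 c d e := by
  have : Apsi d c e = - Apsi c d e := by simp only [Apsi, A1_symm c d]; ring
  simp only [A2, this, ← or_assoc, or_comm (a := d.1 = 0 ∧ d.2 = 0)]
  split_ifs <;> simp
lemma A2_swap2 (c d e : Fin 4 × ZMod p) : A2 c e d = - A2 c d e := by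
  have : Apsi c e d = - Apsi c d e := by simp only [Apsi, A1_symm d e]; ring
  simp only [A2, this, or_comm (a := e.1 = 0 ∧ e.2 = 0)]
  split_ifs <;> simp
lemma dA2_rep {b c d e : Fin 4 × ZMod p} (h : b = c ∨ b = d ∨ b = e ∨ c = d ∨ c = e ∨ d = e) :
    A2 c d e - A2 b d e + A2 b c e - A2 b c d = 0 := by
  rcases h with rfl | rfl | rfl | rfl | rfl | rfl
  · rw [A2_rep (c := b) (d := b) (e := e) (by simp), A2_rep (c := b) (d := b) (e := d) (by simp)]; ring
  · rw [A2_rep (c := b) (d := b) (by simp), A2_rep (c := b) (e := b) (by simp), A2_swap1 b c]; ring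
  · rw [A2_rep (c := b) (e := b) (by simp), A2_rep (c := b) (e := b) (by simp), A2_swap2 c b d, A2_swap1 b c]; ring
  · rw [A2_rep (d := c) (e := c) (by simp), A2_rep (c := c) (d := c) (by simp)]; ring
  · rw [A2_rep (c := c) (e := c) (by simp), A2_rep (d := c) (e := c) (by simp), A2_swap2 b c d]; ring
  · rw [A2_rep (d := d) (e := d) (by simp), A2_rep (d := d) (e := d) (by simp)]; ring

lemma sum_ind (a c : ZMod p) : ∑ m ∈ Finset.range p, (if a + (m : ZMod p) = c then (1 : ZMod p) else 0) = 1 := by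
  rw [Finset.sum_eq_single (c - a).val]
  · simp
  · intro m hm hne
    rw [if_neg]
    intro h
    apply hne
    rw [← h, add_sub_cancel_left, ZMod.val_natCast_of_lt (Finset.mem_range.1 hm)]
  · intro h
    exact absurd (Finset.mem_range.2 (ZMod.val_lt _)) h

lemma A0_sum (c : Fin 4 × ZMod p) : ∑ m ∈ Finset.range p, A0 (sh m c) = 1 := by
  have := sum_ind c.2 (-1)
  simpa [A0, sh] using this

lemma Apsi_shift {c d e : Fin 4 × ZMod p} (h1 : c.1 = d.1 → c = d) (h2 : c.1 = e.1 → c = e)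
    (h3 : d.1 = e.1 → d = e) (m : ℕ) : Apsi (sh m c) (sh m d) (sh m e) = Apsi c d e := by
  induction m with
  | zero => simp [sh]
  | succ m ih =>
    have key : ∀ c : Fin 4 × ZMod p, sh ((m + 1 : ℕ) : ℤ) c = sh 1 (sh m c) := by
      intro c; simp [sh, add_assoc]
    have hh : ∀ c d : Fin 4 × ZMod p, (c.1 = d.1 → c = d) → ((sh (m:ℤ) c).1 = (sh (m:ℤ) d).1 → sh (m:ℤ) c = sh (m:ℤ) d) := by
      intro c d h h'
      rw [h h']
    rw [key, key, key]
    have e1 := A1_shift (hh _ _ h1)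
    have e2 := A1_shift (hh _ _ h2)
    have e3 := A1_shift (hh _ _ h3)
    rw [← ih]
    simp only [Apsi]
    linear_combination e1 - e2 + e3

lemma A2_sum {c d e : Fin 4 × ZMod p} (h1 : c.1 = d.1 → c = d) (h2 : c.1 = e.1 → c = e)
    (h3 : d.1 = e.1 → d = e) (hc : c.1 ≠ 3) (hd : d.1 ≠ 3) (he : e.1 ≠ 3) :
    ∑ m ∈ Finset.range p, A2 (sh m c) (sh m d) (sh m e) = Apsi c d e := by
  by_cases hr : c = d ∨ c = e ∨ d = e
  · rw [Apsi_rep hr]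
    refine Finset.sum_eq_zero fun m _ => ?_
    apply A2_rep
    rcases hr with h | h | h <;> simp [h]
  · have n1 : c.1 ≠ d.1 := fun h => hr (Or.inl (h1 h))
    have n2 : c.1 ≠ e.1 := fun h => hr (Or.inr (Or.inl (h2 h)))
    have n3 : d.1 ≠ e.1 := fun h => hr (Or.inr (Or.inr (h3 h)))
    simp only [A2, Apsi_shift h1 h2 h3]
    have hz : ∃ f : ZMod p, ∀ m : ℕ, (((sh (m:ℤ) c).1 = 0 ∧ (sh (m:ℤ) c).2 = 0) ∨ ((sh (m:ℤ) d).1 = 0 ∧ (sh (m:ℤ) d).2 = 0) ∨ ((sh (m:ℤ) e).1 = 0 ∧ (sh (m:ℤ) e).2 = 0)) ↔ f + m = 0 := by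
      have : c.1 = 0 ∨ d.1 = 0 ∨ e.1 = 0 := by
        revert hc hd he n1 n2 n3
        generalize c.1 = i; generalize d.1 = j; generalize e.1 = k
        revert i j k; decide
      rcases this with h | h | h
      · refine ⟨c.2, fun m => ?_⟩
        have a1 : d.1 ≠ 0 := by rw [← h]; exact n1.symm
        have a2 : e.1 ≠ 0 := by rw [← h]; exact n2.symm
        simp [sh, h, a1, a2]
      · refine ⟨d.2, fun m => ?_⟩
        have a1 : c.1 ≠ 0 := by rw [← h]; exact n1
        have a2 : e.1 ≠ 0 := by rw [← h]; exact n3.symm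
        simp [sh, h, a1, a2]
      · refine ⟨e.2, fun m => ?_⟩
        have a1 : c.1 ≠ 0 := by rw [← h]; exact n2
        have a2 : d.1 ≠ 0 := by rw [← h]; exact n3
        simp [sh, h, a1, a2]
    obtain ⟨f, hf⟩ := hz
    simp only [hf]
    have := sum_ind f 0
    calc _ = ∑ m ∈ Finset.range p, (if f + (m:ZMod p) = 0 then (1:ZMod p) else 0) * Apsi c d e := by
          refine Finset.sum_congr rfl fun m _ => ?_
          split_ifs <;> simp
      _ = _ := by rw [← Finset.sum_mul, this, one_mul]
end

section
variable {p : ℕ} [NeZero p]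

noncomputable def phi0 (cc : XX → Fin 4 × ZMod p) (β : List XX → ZMod p) : List XX → ZMod p
  | x :: l => A0 (cc x) * β (x :: l)
  | _ => 0
noncomputable def phi1 (cc : XX → Fin 4 × ZMod p) (β : List XX → ZMod p) : List XX → ZMod p
  | x :: y :: l => A1 (cc x) (cc y) * β (y :: l)
  | _ => 0
noncomputable def phi2 (cc : XX → Fin 4 × ZMod p) (β : List XX → ZMod p) : List XX → ZMod p
  | x :: y :: z :: l => A2 (cc x) (cc y) (cc z) * β (z :: l)
  | _ => 0

lemma ev_smul_fun {R Y : Type*} [CommRing R] (r : R) (φ : List Y → R) (a : Ch R Y) : ev (fun l => r * φ l) a = r * ev φ a := by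
  have : ev (fun l => r * φ l) = r • ev φ := lin_ext (by intro l; simp)
  rw [this]; simp

lemma sumGG (ℓ : Fin 2 → ℤ) (φ : List XX → ZMod p) (l : List XX) :
    ev φ (Nop (GG (ZMod p) p ℓ) p (Finsupp.single l 1)) =
      ∑ m ∈ Finset.range p, φ (l.map fun x => (rot p ℓ m x.1, x.2)) := by
  simp [Nop, LinearMap.sum_apply, map_sum, GG_pow_apply]

lemma no_data (hp2 : 2 ≤ p) (ℓ : Fin 2 → ℤ) (ε : ℝ) (hε : 0 < ε)
    (cc : XX → Fin 4 × ZMod p) (β : List XX → ZMod p)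
    (hcc : ∀ (m : ℕ) x, cc (rot p ℓ m x.1, x.2) = sh m (cc x))
    (hloc : ∀ x y, dist x y < ε → (cc x).1 = (cc y).1 → (cc x).1 ≠ 3 → cc x = cc y)
    (hcoc : ∀ l : List XX, (∀ x ∈ l, ∀ y ∈ l, dist x y < ε) → ev β (bd (ZMod p) XX (Finsupp.single l 1)) = 0)
    (hinv : ∀ (m : ℕ) (l : List XX), (∀ x ∈ l, ∀ y ∈ l, dist x y < ε) → β (l.map fun x => (rot p ℓ m x.1, x.2)) = β l)
    (hthree : ∀ (x : XX) (l : List XX), (cc x).1 = 3 → (∀ y ∈ l, dist x y < ε) → (∀ x ∈ l, ∀ y ∈ l, dist x y < ε) → β l = 0)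
    (hone : ∀ a, a ∈ sm (ZMod p) (rel ε (Set.univ : Set XX)) 4 → bd (ZMod p) XX a = 0 → ev β a = BB (ZMod p) 3 (mapL (ZMod p) Prod.snd a) []) : False := by
  have hp0 : p ≠ 0 := NeZero.ne p
  obtain ⟨P0, m0, P1, m1, P2, m2, P3, m3, b0, e0, b1, b2, b3⟩ :=
    exists_P (ZMod p) p hp0 (by simp) ℓ ε hε
  have hg : ∀ x y : XX, rel ε Set.univ x y → rel ε Set.univ (gX p ℓ x) (gX p ℓ y) := by
    rintro x y ⟨h1, h2, h3⟩
    exact ⟨trivial, trivial, by rw [gX_dist]; exact h3⟩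
  have hN : ∀ a, Nop (GG (ZMod p) p ℓ) p a = (GG (ZMod p) p ℓ - 1) (Qop (GG (ZMod p) p ℓ) p a) := by
    intro a
    have h := sub_Qop (A := Module.End (ZMod p) (Ch (ZMod p) XX)) (G := GG (ZMod p) p ℓ) (p := p) (by
      apply LinearMap.ext
      intro b
      rw [Module.End.natCast_apply, ← Nat.cast_smul_eq_nsmul (ZMod p)]; simp)
    exact (LinearMap.congr_fun h a).symm
  have hcomm : ∀ a, Qop (GG (ZMod p) p ℓ) p ((GG (ZMod p) p ℓ - 1) a) = (GG (ZMod p) p ℓ - 1) (Qop (GG (ZMod p) p ℓ) p a) := by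
    intro a
    exact LinearMap.congr_fun (Qop_comm (A := Module.End (ZMod p) (Ch (ZMod p) XX)) (GG (ZMod p) p ℓ) p) a
  have hcc1 : ∀ x, cc (gX p ℓ x) = sh 1 (cc x) := fun x => by
    have := hcc 1 x
    simp only [Nat.cast_one] at this
    exact this
  have hinv1 : ∀ (l : List XX), (∀ x ∈ l, ∀ y ∈ l, dist x y < ε) → β (l.map (gX p ℓ)) = β l := fun l h => by
    have := hinv 1 l h
    simp only [Nat.cast_one] at this
    exact this
  have hcoc' : ∀ x l, (∀ a ∈ x :: l, ∀ b ∈ x :: l, dist a b < ε) →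
      ev (fun l => β (x :: l)) (bd (ZMod p) XX (Finsupp.single l 1)) = β l := by
    intro x l h
    have := hcoc (x :: l) h
    rw [bd_single_cons, map_sub, ev_consL, ev_single, one_mul, sub_eq_zero] at this
    exact this.symm
  -- step 1
  have s1 : ev β P0 = ev (phi0 cc β) (Nop (GG (ZMod p) p ℓ) p P0) := by
    refine sm_ext (ev β) (ev (phi0 cc β) ∘ₗ Nop (GG (ZMod p) p ℓ) p) ?_ m0
    intro l hl hs
    replace hs : ∀ x ∈ l, ∀ y ∈ l, dist x y < ε := fun x hx y hy => (hs x hx y hy).2.2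
    rw [LinearMap.comp_apply, sumGG, ev_single, one_mul]
    obtain - | ⟨x, l⟩ := l
    · simp at hl
    · have : ∀ m : ℕ, phi0 cc β ((x :: l).map fun x => (rot p ℓ m x.1, x.2)) = A0 (sh m (cc x)) * β (x :: l) := by
        intro m
        rw [← hinv m _ hs, List.map_cons, phi0, hcc]
      simp only [this, ← Finset.sum_mul, A0_sum, one_mul]
  have s2 : ∀ a ∈ sm (ZMod p) (rel ε (Set.univ : Set XX)) 5, ev (phi0 cc β) (bd (ZMod p) XX a) = ev (phi1 cc β) ((GG (ZMod p) p ℓ - 1) a) := by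
    intro a ha
    refine sm_ext (ev (phi0 cc β) ∘ₗ bd (ZMod p) XX) (ev (phi1 cc β) ∘ₗ (GG (ZMod p) p ℓ - 1)) ?_ ha
    intro l hl hs
    replace hs : ∀ x ∈ l, ∀ y ∈ l, dist x y < ε := fun x hx y hy => (hs x hx y hy).2.2
    obtain - | ⟨x, - | ⟨y, l⟩⟩ := l
    · simp at hl
    · simp at hl
    · have hs' : ∀ a ∈ y :: l, ∀ b ∈ y :: l, dist a b < ε := fun a ha b hb =>
        hs a (List.mem_cons_of_mem _ ha) b (List.mem_cons_of_mem _ hb)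
      have c1 := hcoc' x (y :: l) hs
      rw [LinearMap.comp_apply, LinearMap.comp_apply, bd_single_cons, map_sub, ev_consL, ev_single, one_mul]
      have : (fun l => phi0 cc β (x :: l)) = fun l => A0 (cc x) * β (x :: l) := rfl
      rw [this, ev_smul_fun, c1, LinearMap.sub_apply, Module.End.one_apply, map_sub, ev_single, GG, mapL_single, ev_single,
        List.map_cons, List.map_cons, phi1, ← List.map_cons, hinv1 _ hs', phi1, phi0, hcc1, hcc1]
      by_cases h3 : (cc x).1 = 3 ∨ (cc y).1 = 3
      · have : β (y :: l) = 0 := by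
          rcases h3 with h3 | h3
          · exact hthree x _ h3 (fun y hy => hs x (by simp) y (List.mem_cons_of_mem _ hy)) hs'
          · exact hthree y _ h3 (fun z hz => hs' y (by simp) z hz) hs'
        rw [this]; ring
      · push Not at h3
        have := A1_shift (c := cc x) (d := cc y) (fun h => hloc x y (hs x (by simp) y (by simp)) h h3.1)
        linear_combination (- β (y :: l)) * this
  have s3 : ∀ a ∈ sm (ZMod p) (rel ε (Set.univ : Set XX)) 6, ev (phi1 cc β) (bd (ZMod p) XX a) = ev (phi2 cc β) (Nop (GG (ZMod p) p ℓ) p a) := by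
    intro a ha
    refine sm_ext (ev (phi1 cc β) ∘ₗ bd (ZMod p) XX) (ev (phi2 cc β) ∘ₗ (Nop (GG (ZMod p) p ℓ) p)) ?_ ha
    intro l hl hs
    replace hs : ∀ x ∈ l, ∀ y ∈ l, dist x y < ε := fun x hx y hy => (hs x hx y hy).2.2
    obtain - | ⟨x, - | ⟨y, - | ⟨z, l⟩⟩⟩ := l
    · simp at hl
    · simp at hl
    · simp at hl
    · have hs' : ∀ a ∈ y :: z :: l, ∀ b ∈ y :: z :: l, dist a b < ε := fun a ha b hb =>
        hs a (List.mem_cons_of_mem _ ha) b (List.mem_cons_of_mem _ hb)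
      have hs'' : ∀ a ∈ z :: l, ∀ b ∈ z :: l, dist a b < ε := fun a ha b hb =>
        hs' a (List.mem_cons_of_mem _ ha) b (List.mem_cons_of_mem _ hb)
      have c1 := hcoc' y (z :: l) hs'
      rw [LinearMap.comp_apply, LinearMap.comp_apply, bd_single_cons, map_sub, ev_consL, ev_single, one_mul]
      rw [bd_single_cons, map_sub, ev_consL, ev_single, one_mul]
      have : (fun l => phi1 cc β (x :: y :: l)) = fun l => A1 (cc x) (cc y) * β (y :: l) := rfl
      rw [this, ev_smul_fun, c1, sumGG, phi1, phi1]
      have : ∀ m : ℕ, phi2 cc β ((x :: y :: z :: l).map fun x => (rot p ℓ m x.1, x.2)) = A2 (sh m (cc x)) (sh m (cc y)) (sh m (cc z)) * β (z :: l) := by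
        intro m
        rw [← hinv m _ hs'', List.map_cons, List.map_cons, List.map_cons, phi2, hcc, hcc, hcc]
      simp only [this, ← Finset.sum_mul]
      by_cases h3 : (cc x).1 = 3 ∨ (cc y).1 = 3 ∨ (cc z).1 = 3
      · have : β (z :: l) = 0 := by
          rcases h3 with h3 | h3 | h3
          · exact hthree x _ h3 (fun y hy => hs x (by simp) y (List.mem_cons_of_mem _ (List.mem_cons_of_mem _ hy))) hs''
          · exact hthree y _ h3 (fun z hz => hs' y (by simp) z (List.mem_cons_of_mem _ hz)) hs''
          · exact hthree z _ h3 (fun w hw => hs'' z (by simp) w hw) hs''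
        rw [this]; ring
      · push Not at h3
        have := A2_sum (c := cc x) (d := cc y) (e := cc z) (fun h => hloc x y (hs x (by simp) y (by simp)) h h3.1)
          (fun h => hloc x z (hs x (by simp) z (by simp)) h h3.1) (fun h => hloc y z (hs y (by simp) z (by simp)) h h3.2.1) h3.1 h3.2.1 h3.2.2
        rw [this, Apsi]; ring
  have s4 : ∀ a ∈ sm (ZMod p) (rel ε (Set.univ : Set XX)) 7, ev (phi2 cc β) (bd (ZMod p) XX a) = 0 := by
    intro a ha
    refine sm_ext (ev (phi2 cc β) ∘ₗ bd (ZMod p) XX) 0 ?_ ha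
    intro l hl hs
    replace hs : ∀ x ∈ l, ∀ y ∈ l, dist x y < ε := fun x hx y hy => (hs x hx y hy).2.2
    obtain - | ⟨x, - | ⟨y, - | ⟨z, - | ⟨w, l⟩⟩⟩⟩ := l
    · simp at hl
    · simp at hl
    · simp at hl
    · simp at hl
    · have hs' : ∀ a ∈ y :: z :: w :: l, ∀ b ∈ y :: z :: w :: l, dist a b < ε := fun a ha b hb =>
        hs a (List.mem_cons_of_mem _ ha) b (List.mem_cons_of_mem _ hb)
      have hs'' : ∀ a ∈ z :: w :: l, ∀ b ∈ z :: w :: l, dist a b < ε := fun a ha b hb =>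
        hs' a (List.mem_cons_of_mem _ ha) b (List.mem_cons_of_mem _ hb)
      have hs3 : ∀ a ∈ w :: l, ∀ b ∈ w :: l, dist a b < ε := fun a ha b hb =>
        hs'' a (List.mem_cons_of_mem _ ha) b (List.mem_cons_of_mem _ hb)
      have c1 := hcoc' z (w :: l) hs''
      rw [LinearMap.comp_apply, bd_single_cons, map_sub, ev_consL, ev_single, one_mul]
      rw [bd_single_cons, map_sub, ev_consL, ev_single, one_mul]
      rw [bd_single_cons, map_sub, ev_consL, ev_single, one_mul]
      have : (fun l => phi2 cc β (x :: y :: z :: l)) = fun l => A2 (cc x) (cc y) (cc z) * β (z :: l) := rfl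
      rw [this, ev_smul_fun, c1, phi2, phi2, phi2, LinearMap.zero_apply]
      by_cases h3 : (cc x).1 = 3 ∨ (cc y).1 = 3 ∨ (cc z).1 = 3 ∨ (cc w).1 = 3
      · have : β (w :: l) = 0 := by
          rcases h3 with h3 | h3 | h3 | h3
          · exact hthree x _ h3 (fun y hy => hs x (by simp) y (List.mem_cons_of_mem _ (List.mem_cons_of_mem _ (List.mem_cons_of_mem _ hy)))) hs3
          · exact hthree y _ h3 (fun z hz => hs' y (by simp) z (List.mem_cons_of_mem _ (List.mem_cons_of_mem _ hz))) hs3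
          · exact hthree z _ h3 (fun w hw => hs'' z (by simp) w (List.mem_cons_of_mem _ hw)) hs3
          · exact hthree w _ h3 (fun w' hw => hs3 w (by simp) w' hw) hs3
        rw [this]; ring
      · push Not at h3
        obtain ⟨n1, n2, n3, n4⟩ := h3
        have : (cc x).1 = (cc y).1 ∨ (cc x).1 = (cc z).1 ∨ (cc x).1 = (cc w).1 ∨ (cc y).1 = (cc z).1 ∨ (cc y).1 = (cc w).1 ∨ (cc z).1 = (cc w).1 := by
          revert n1 n2 n3 n4
          generalize (cc x).1 = i; generalize (cc y).1 = j; generalize (cc z).1 = k; generalize (cc w).1 = n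
          revert i j k n; decide
        have key := dA2_rep (b := cc x) (c := cc y) (d := cc z) (e := cc w) (by
          rcases this with h | h | h | h | h | h
          · exact Or.inl (hloc x y (hs x (by simp) y (by simp)) h n1)
          · exact Or.inr (Or.inl (hloc x z (hs x (by simp) z (by simp)) h n1))
          · exact Or.inr (Or.inr (Or.inl (hloc x w (hs x (by simp) w (by simp)) h n1)))
          · exact Or.inr (Or.inr (Or.inr (Or.inl (hloc y z (hs y (by simp) z (by simp)) h n2))))
          · exact Or.inr (Or.inr (Or.inr (Or.inr (Or.inl (hloc y w (hs y (by simp) w (by simp)) h n2)))))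
          · exact Or.inr (Or.inr (Or.inr (Or.inr (Or.inr (hloc z w (hs z (by simp) w (by simp)) h n3))))))
        linear_combination β (w :: l) * key
  have f0 : ev β P0 = 1 := by rw [hone P0 m0 b0, e0]
  have f1 : ev β P0 = 0 := by
    rw [s1, hN, ← hcomm, ← b1, ← bd_Qop, s2 _ (Qop_mem _ hg m1 p), ← hN, ← b2, s3 _ m2, hN, ← hcomm, ← b3, ← bd_Qop,
      s4 _ (Qop_mem _ hg m3 p)]
  have : Fact (1 < p) := ⟨hp2⟩
  exact one_ne_zero (f0.symm.trans f1)
end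
end LC

namespace LC
open unitInterval

lemma lift_gen (r : ℕ) (ℓ : Fin 2 → ℤ) (hr : r ≠ 0) (hℓ : ∀ j, IsCoprime (ℓ j) (r : ℤ))
    {A : Type*} [TopologicalSpace A] (H : C(I × A, LensSpace r 2 ℓ)) (f : C(A, Sp))
    (h0 : ∀ a, H (0, a) = lmk r ℓ (f a)) :
    ∃ F : C(I × A, Sp), (∀ a, F (0, a) = f a) ∧ (∀ t a, lmk r ℓ (F (t, a)) = H (t, a)) ∧
      ∀ (τ : C(A, A)) (m : ℤ), (∀ t a, H (t, τ a) = H (t, a)) → (∀ a, f (τ a) = rot r ℓ m (f a)) →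
        ∀ t a, F (t, τ a) = rot r ℓ m (F (t, a)) := by
  have cov := lmk_cov r ℓ hr hℓ
  have hl : ∀ t a, lmk r ℓ (cov.liftHomotopy H f h0 (t, a)) = H (t, a) := by
    intro t a
    exact congr_fun (cov.liftHomotopy_lifts H f h0) (t, a)
  refine ⟨cov.liftHomotopy H f h0, fun a => cov.liftHomotopy_zero H f h0 a, hl, ?_⟩
  intro τ m hτ hf
  set F := cov.liftHomotopy H f h0 with hF
  have e1 : (fun x : I × A => rot r ℓ (-m) (F (x.1, τ x.2))) = cov.liftHomotopy H f h0 := by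
    rw [cov.eq_liftHomotopy_iff]
    refine ⟨?_, ?_, ?_⟩
    · intro a
      have := rot_continuous r ℓ (-m)
      fun_prop
    · ext ⟨t, a⟩
      simp only [Function.comp]
      rw [lmk_rot, hl, hτ]
    · intro a
      simp only
      rw [hF, cov.liftHomotopy_zero, hf, ← rot_add, neg_add_cancel, rot_zero]
  intro t a
  have := congr_fun e1 (t, a)
  simp only at this
  rw [← this, ← rot_add, add_neg_cancel, rot_zero]
end LC

namespace LC
open unitInterval

noncomputable def piM (p q : ℕ) (ℓ ℓ' : Fin 2 → ℤ) (x : XX) : LensSpace p 2 ℓ × LensSpace q 2 ℓ' :=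
  (lmk p ℓ x.1, lmk q ℓ' x.2)
lemma piM_cont (p q : ℕ) (ℓ ℓ' : Fin 2 → ℤ) : Continuous (piM p q ℓ ℓ') :=
  ((lmk_cont p ℓ).comp continuous_fst).prodMk ((lmk_cont q ℓ').comp continuous_snd)
noncomputable def gm (p : ℕ) (ℓ : Fin 2 → ℤ) (m : ℤ) (x : XX) : XX := (rot p ℓ m x.1, x.2)
lemma gm_cont (p : ℕ) (ℓ : Fin 2 → ℤ) (m : ℤ) : Continuous (gm p ℓ m) :=
  ((rot_continuous p ℓ m).comp continuous_fst).prodMk continuous_snd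
lemma piM_gm (p q : ℕ) (ℓ ℓ' : Fin 2 → ℤ) (m : ℤ) (x : XX) : piM p q ℓ ℓ' (gm p ℓ m x) = piM p q ℓ ℓ' x := by
  simp [piM, gm, lmk_rot]
lemma gm_dist (p : ℕ) (ℓ : Fin 2 → ℤ) (m : ℤ) (x y : XX) : dist (gm p ℓ m x) (gm p ℓ m y) = dist x y := by
  simp [Prod.dist_eq, gm, rot_dist]
lemma gm_add (p : ℕ) (ℓ : Fin 2 → ℤ) (m n : ℤ) (x : XX) : gm p ℓ (m + n) x = gm p ℓ m (gm p ℓ n x) := by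
  simp [gm, rot_add]
lemma gm_zero (p : ℕ) (ℓ : Fin 2 → ℤ) (x : XX) : gm p ℓ 0 x = x := by
  simp [gm, rot_zero]

section
variable (p q : ℕ) (ℓ ℓ' : Fin 2 → ℤ) (U : Set (LensSpace p 2 ℓ × LensSpace q 2 ℓ'))

lemma gm_mem (m : ℤ) (x : (piM p q ℓ ℓ') ⁻¹' U) : gm p ℓ m x.1 ∈ (piM p q ℓ ℓ') ⁻¹' U := by
  have := x.2
  rw [Set.mem_preimage] at this ⊢
  rwa [piM_gm]

noncomputable def gO (m : ℤ) : C((piM p q ℓ ℓ') ⁻¹' U, (piM p q ℓ ℓ') ⁻¹' U) :=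
  ⟨fun x => ⟨gm p ℓ m x.1, gm_mem p q ℓ ℓ' U m x⟩, ((gm_cont p ℓ m).comp continuous_subtype_val).subtype_mk _⟩

noncomputable def toU : C((piM p q ℓ ℓ') ⁻¹' U, U) where
  toFun x := ⟨piM p q ℓ ℓ' x.1, x.2⟩
  continuous_toFun := ((piM_cont p q ℓ ℓ').comp continuous_subtype_val).subtype_mk _

lemma exists_H (hU : ContinuousMap.Nullhomotopic (⟨Subtype.val, continuous_subtype_val⟩ : C(U, LensSpace p 2 ℓ × LensSpace q 2 ℓ'))) : ∃ (y : LensSpace p 2 ℓ × LensSpace q 2 ℓ') (H : C(I × ((piM p q ℓ ℓ') ⁻¹' U), LensSpace p 2 ℓ × LensSpace q 2 ℓ')),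
    (∀ x, H (0, x) = piM p q ℓ ℓ' x.1) ∧ (∀ x, H (1, x) = y) ∧ ∀ m t x, H (t, gO p q ℓ ℓ' U m x) = H (t, x) := by
  obtain ⟨y, ⟨H⟩⟩ := hU
  refine ⟨y, H.toContinuousMap.comp ((ContinuousMap.id I).prodMap (toU p q ℓ ℓ' U)), ?_, ?_, ?_⟩
  · intro x
    exact H.apply_zero _
  · intro x
    exact H.apply_one _
  · intro m t x
    have : toU p q ℓ ℓ' U (gO p q ℓ ℓ' U m x) = toU p q ℓ ℓ' U x := Subtype.ext (piM_gm p q ℓ ℓ' m x.1)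
    simp [this]

lemma exists_lab (hp : p ≠ 0) (hℓ : ∀ j, IsCoprime (ℓ j) (p : ℤ))
    (hU : ContinuousMap.Nullhomotopic (⟨Subtype.val, continuous_subtype_val⟩ : C(U, LensSpace p 2 ℓ × LensSpace q 2 ℓ'))) : ∃ lab : XX → ZMod p, ContinuousOn lab ((piM p q ℓ ℓ') ⁻¹' U) ∧
    ∀ (m : ℤ), ∀ x ∈ (piM p q ℓ ℓ') ⁻¹' U, lab (gm p ℓ m x) = lab x + m := by
  have : NeZero p := ⟨hp⟩
  obtain ⟨y, H, h0, h1, hg⟩ := exists_H p q ℓ ℓ' U hU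
  obtain ⟨F, f0, f1, f2⟩ := lift_gen p ℓ hp hℓ ((ContinuousMap.mk Prod.fst continuous_fst).comp H)
    ⟨fun x => x.1.1, continuous_fst.comp continuous_subtype_val⟩ (by intro a; simp [h0, piM])
  obtain ⟨z, hz⟩ := lmk_surj p ℓ y.1
  have hex : ∀ x, ∃ m : ZMod p, F (1, x) = rot p ℓ m.val z := by
    intro x
    have : lmk p ℓ z = lmk p ℓ (F (1, x)) := by rw [f1]; simp [h1, hz]
    obtain ⟨m, hm⟩ := (lmk_eq p ℓ _ _).1 this
    refine ⟨(m : ZMod p), ?_⟩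
    rw [hm]
    apply rot_congr p ℓ hp
    rw [← ZMod.intCast_eq_intCast_iff_dvd_sub]
    simp
  choose lab hlab using hex
  have huniq : ∀ a b : ZMod p, ∀ w, rot p ℓ a.val w = rot p ℓ b.val w → a = b := by
    intro a b w h
    have h2 : rot p ℓ ((b.val : ℤ) - a.val) (rot p ℓ a.val w) = rot p ℓ a.val w := by
      rw [← rot_add, sub_add_cancel, h]
    have h3 := rot_free p ℓ hp hℓ _ _ h2
    rw [← ZMod.intCast_eq_intCast_iff_dvd_sub] at h3
    simpa using h3
  have hcont : Continuous lab := by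
    rw [continuous_iff_isClosed]
    intro s _
    have : lab ⁻¹' s = ⋃ a ∈ s, {x | F (1, x) = rot p ℓ a.val z} := by
      ext x
      simp only [Set.mem_preimage, Set.mem_iUnion, Set.mem_ofPred_eq, exists_prop]
      constructor
      · intro h; exact ⟨_, h, hlab x⟩
      · rintro ⟨a, ha, h⟩
        rw [hlab x] at h
        rwa [huniq _ _ _ h]
    rw [this]
    refine Set.Finite.isClosed_biUnion (Set.toFinite s) fun a _ => ?_
    exact isClosed_eq (by fun_prop) continuous_const
  classical
  refine ⟨fun x => if h : x ∈ (piM p q ℓ ℓ') ⁻¹' U then lab ⟨x, h⟩ else 0, ?_, ?_⟩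
  · rw [continuousOn_iff_continuous_domRestrict]
    convert hcont using 1
    ext1 x
    simp only [Set.domRestrict_apply, x.2, dite_true]
  · intro m x hx
    have hx' := (gO p q ℓ ℓ' U m ⟨x, hx⟩).2
    have e : (gO p q ℓ ℓ' U m ⟨x, hx⟩).1 = gm p ℓ m x := rfl
    rw [e] at hx'
    beta_reduce
    rw [dif_pos hx, dif_pos hx']
    have h2 := f2 (gO p q ℓ ℓ' U m) m (fun t a => by simp [hg]) (fun a => rfl) 1 ⟨x, hx⟩
    rw [hlab, hlab, ← rot_add] at h2
    have e2 : (gO p q ℓ ℓ' U m ⟨x, hx⟩) = ⟨gm p ℓ m x, hx'⟩ := rfl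
    rw [e2] at h2
    apply huniq _ _ z
    rw [h2]
    apply rot_congr p ℓ hp
    rw [← ZMod.intCast_eq_intCast_iff_dvd_sub]
    simp [add_comm]

lemma exists_K (hq : q ≠ 0) (hℓ' : ∀ j, IsCoprime (ℓ' j) (q : ℤ))
    (hU : ContinuousMap.Nullhomotopic (⟨Subtype.val, continuous_subtype_val⟩ : C(U, LensSpace p 2 ℓ × LensSpace q 2 ℓ'))) : ∃ K : XX → ℝ → Sp, ContinuousOn (fun z : XX × ℝ => K z.1 z.2) (((piM p q ℓ ℓ') ⁻¹' U) ×ˢ Set.Icc 0 1) ∧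
    (∀ x ∈ (piM p q ℓ ℓ') ⁻¹' U, K x 0 = x.2) ∧
    (∀ (m : ℤ) (x : XX) (t : ℝ), K (gm p ℓ m x) t = K x t) ∧
    ∃ S : Set Sp, S.Finite ∧ ∀ x ∈ (piM p q ℓ ℓ') ⁻¹' U, K x 1 ∈ S := by
  have : NeZero q := ⟨hq⟩
  obtain ⟨y, H, h0, h1, hg⟩ := exists_H p q ℓ ℓ' U hU
  obtain ⟨F, f0, f1, f2⟩ := lift_gen q ℓ' hq hℓ' ((ContinuousMap.mk Prod.snd continuous_snd).comp H)
    ⟨fun x => x.1.2, continuous_snd.comp continuous_subtype_val⟩ (by intro a; simp [h0, piM])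
  obtain ⟨z, hz⟩ := lmk_surj q ℓ' y.2
  classical
  refine ⟨fun x t => if h : x ∈ (piM p q ℓ ℓ') ⁻¹' U then F (Set.projIcc 0 1 zero_le_one t, ⟨x, h⟩) else z, ?_, ?_, ?_, ?_⟩
  · rw [continuousOn_iff_continuous_domRestrict]
    have : Continuous fun a : ((piM p q ℓ ℓ') ⁻¹' U) × ℝ => F (Set.projIcc 0 1 zero_le_one a.2, a.1) := by
      have := continuous_projIcc (a := (0:ℝ)) (b := 1) (h := zero_le_one)
      fun_prop
    have h2 : Continuous fun a : (((piM p q ℓ ℓ') ⁻¹' U) ×ˢ Set.Icc (0:ℝ) 1 : Set (XX × ℝ)) =>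
      ((⟨a.1.1, a.2.1⟩ : ((piM p q ℓ ℓ') ⁻¹' U)), a.1.2) := by fun_prop
    convert this.comp h2 using 1
    ext1 x
    have := x.2.1
    simp only [Set.domRestrict_apply, this, dite_true, Function.comp]
  · intro x hx
    beta_reduce
    rw [dif_pos hx]
    simpa using f0 ⟨x, hx⟩
  · intro m x t
    by_cases hx : x ∈ (piM p q ℓ ℓ') ⁻¹' U
    swap
    · have hx2 : gm p ℓ m x ∉ (piM p q ℓ ℓ') ⁻¹' U := by
        rw [Set.mem_preimage] at hx ⊢
        rwa [piM_gm]
      beta_reduce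
      rw [dif_neg hx, dif_neg hx2]
    have hx' := (gO p q ℓ ℓ' U m ⟨x, hx⟩).2
    have e : (gO p q ℓ ℓ' U m ⟨x, hx⟩).1 = gm p ℓ m x := rfl
    rw [e] at hx'
    beta_reduce
    rw [dif_pos hx, dif_pos hx']
    have h2 := f2 (gO p q ℓ ℓ' U m) 0 (fun t a => by simp [hg]) (fun a => by rw [rot_zero]; rfl) (Set.projIcc 0 1 zero_le_one t) ⟨x, hx⟩
    rw [rot_zero] at h2
    exact h2
  · refine ⟨Set.range fun m : ZMod q => rot q ℓ' m.val z, Set.finite_range _, ?_⟩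
    intro x hx
    beta_reduce
    rw [dif_pos hx]
    have : lmk q ℓ' z = lmk q ℓ' (F (1, ⟨x, hx⟩)) := by rw [f1]; simp [h1, hz]
    obtain ⟨m, hm⟩ := (lmk_eq q ℓ' _ _).1 this
    refine ⟨(m : ZMod q), ?_⟩
    simp only [Set.projIcc_right]
    rw [show F (⟨1, _⟩, (⟨x, hx⟩ : (piM p q ℓ ℓ') ⁻¹' U)) = F (1, ⟨x, hx⟩) from rfl, hm]
    apply rot_congr q ℓ' hq
    rw [← ZMod.intCast_eq_intCast_iff_dvd_sub]
    simp
end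
end LC

namespace LC

lemma pr_mapL {R : Type*} [CommRing R] {Y Z W : Type*} (f g : Z → W) (h : Y → Z) (a : Ch R Y) :
    pr R f g (mapL R h a) = pr R (f ∘ h) (g ∘ h) a := by
  have : pr R f g ∘ₗ mapL R h = pr R (f ∘ h) (g ∘ h) := by
    apply lin_ext
    intro l
    induction l with
    | nil => simp
    | cons x l ih =>
      rw [LinearMap.comp_apply, mapL_single] at ih ⊢
      rw [List.map_cons, pr_cons, pr_cons, ih]
      simp
  exact LinearMap.congr_fun this a

lemma hH_mapL {R : Type*} [CommRing R] {Y Z W : Type*} (f : ℕ → Z → W) (n : ℕ) (h : Y → Z) (a : Ch R Y) :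
    hH R f n (mapL R h a) = hH R (fun j => f j ∘ h) n a := by
  simp only [hH, LinearMap.sum_apply, pr_mapL]

lemma BB_const (R : Type*) [CommRing R] (l : List Sp) (w : Sp) (h : ∀ x ∈ l, x = w) :
    BB R 3 (Finsupp.single l 1) = 0 := by
  have key : ∀ c : Sp → R, io c (Finsupp.single l 1) = c w • bd R Sp (Finsupp.single l 1) := by
    intro c
    rw [io_congr (d := fun _ => c w) (fun x hx => by rw [h x hx])]
    have : (io (fun _ : Sp => c w)) = c w • bd R Sp := by
      apply lin_ext
      intro l
      induction l with
      | nil => simp [bd]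
      | cons x l ih =>
        rw [LinearMap.smul_apply] at ih ⊢
        rw [io_cons, ih, bd_single_cons, map_smul, smul_sub]
    rw [this]; rfl
  change io (vv R 0) (io (vv R 1) (io (vv R 2) (io (vv R 3) (Finsupp.single l 1)))) = 0
  have h2 : io (vv R 2) (bd R Sp (Finsupp.single l 1)) = 0 := by
    have h3 : io (vv R 2) (bd R Sp (Finsupp.single l 1)) = - bd R Sp (io (vv R 2) (Finsupp.single l 1)) :=
      io_io _ _ _
    rw [h3, key, map_smul, bd_bd]
    simp
  rw [key (vv R 3), map_smul, h2]
  simp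

lemma finite_sep {Z : Type*} [MetricSpace Z] {S : Set Z} (hS : S.Finite) :
    ∃ η > 0, ∀ a ∈ S, ∀ b ∈ S, dist a b < η → a = b := by
  by_cases hn : S.Nontrivial
  · refine ⟨S.infsep, hS.infsep_pos_iff_nontrivial.2 hn, ?_⟩
    intro a ha b hb h
    by_contra hne
    exact absurd (Set.infsep_le_dist_of_mem ha hb hne) (not_le.2 h)
  · rw [Set.not_nontrivial_iff] at hn
    exact ⟨1, one_pos, fun a ha b hb _ => hn ha hb⟩

lemma unif_const {A : Set XX} (hA : IsCompact A) {Z : Type*} [MetricSpace Z] {S : Set Z} (hS : S.Finite) {f : XX → Z}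
    (hf : ContinuousOn f A) (hfS : ∀ x ∈ A, f x ∈ S) :
    ∃ ε > 0, ∀ x ∈ A, ∀ y ∈ A, dist x y < ε → f x = f y := by
  obtain ⟨η, hη, h⟩ := finite_sep hS
  have hu := hA.uniformContinuousOn_of_continuous hf
  rw [Metric.uniformContinuousOn_iff] at hu
  obtain ⟨δ, hδ, h2⟩ := hu η hη
  exact ⟨δ, hδ, fun x hx y hy hxy => h _ (hfS x hx) _ (hfS y hy) (h2 x hx y hy hxy)⟩

lemma unif_lab {p : ℕ} [NeZero p] {A : Set XX} (hA : IsCompact A) {f : XX → ZMod p}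
    (hf : ContinuousOn f A) :
    ∃ ε > 0, ∀ x ∈ A, ∀ y ∈ A, dist x y < ε → f x = f y := by
  obtain ⟨ε, hε, h⟩ := unif_const hA (S := Set.range fun a : ZMod p => (a.val : ℝ)) (Set.finite_range _)
    (f := fun x => ((f x).val : ℝ)) ((continuous_of_discreteTopology (f := fun a : ZMod p => (a.val : ℝ))).comp_continuousOn hf)
    (fun x _ => ⟨_, rfl⟩)
  refine ⟨ε, hε, fun x hx y hy hxy => ?_⟩
  have := h x hx y hy hxy
  exact ZMod.val_injective p (by exact_mod_cast this)

def core {Y : Type*} [MetricSpace Y] (δ : ℝ) (O : Set Y) : Set Y := {x | Metric.ball x δ ⊆ O}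
lemma core_closed {Y : Type*} [MetricSpace Y] (δ : ℝ) (O : Set Y) : IsClosed (core δ O) := by
  have : core δ O = ⋂ y ∈ Oᶜ, {x | δ ≤ dist y x} := by
    ext x
    simp only [core, Set.mem_ofPred_eq, Set.mem_iInter, Set.mem_compl_iff, Set.subset_def, Metric.mem_ball]
    constructor
    · intro h y hy
      by_contra hc
      exact hy (h y (not_le.1 hc))
    · intro h y hy
      by_contra hc
      exact absurd (h y hc) (not_le.2 hy)
  rw [this]
  exact isClosed_biInter fun y _ => isClosed_le continuous_const (by fun_prop)
lemma core_sub {Y : Type*} [MetricSpace Y] {δ : ℝ} (hδ : 0 < δ) (O : Set Y) : core δ O ⊆ O :=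
  fun x hx => hx (Metric.mem_ball_self hδ)
lemma core_near {Y : Type*} [MetricSpace Y] {δ : ℝ} (O : Set Y) {x y : Y} (hx : x ∈ core δ O) (h : dist x y < δ / 2) :
    y ∈ core (δ / 2) O := by
  intro z hz
  apply hx
  rw [Metric.mem_ball] at hz ⊢
  have := dist_triangle z y x
  rw [dist_comm y x] at this
  linarith

theorem no_cover (p q : ℕ) (hp2 : 2 ≤ p) (hq : q ≠ 0) (ℓ ℓ' : Fin 2 → ℤ) (hℓ : ∀ j, IsCoprime (ℓ j) (p : ℤ))
    (hℓ' : ∀ j, IsCoprime (ℓ' j) (q : ℤ)) (U : Fin 4 → Set (LensSpace p 2 ℓ × LensSpace q 2 ℓ'))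
    (hUo : ∀ i, IsOpen (U i)) (hUc : (⋃ i, U i) = Set.univ)
    (hU : ∀ i, ContinuousMap.Nullhomotopic (⟨Subtype.val, continuous_subtype_val⟩ : C(U i, LensSpace p 2 ℓ × LensSpace q 2 ℓ'))) :
    False := by
  have hp : p ≠ 0 := by omega
  have : NeZero p := ⟨hp⟩
  set O : Fin 4 → Set XX := fun i => (piM p q ℓ ℓ') ⁻¹' (U i) with hO
  have hOo : ∀ i, IsOpen (O i) := fun i => (hUo i).preimage (piM_cont p q ℓ ℓ')
  have hOg : ∀ i m x, gm p ℓ m x ∈ O i ↔ x ∈ O i := by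
    intro i m x
    simp only [hO, Set.mem_preimage, piM_gm]
  obtain ⟨δ, hδ, hleb⟩ := lebesgue_number_lemma_of_metric (isCompact_univ (X := XX)) hOo (by
    intro x _
    have : piM p q ℓ ℓ' x ∈ ⋃ i, U i := by rw [hUc]; trivial
    obtain ⟨i, hi⟩ := Set.mem_iUnion.1 this
    exact Set.mem_iUnion.2 ⟨i, hi⟩)
  have hcg : ∀ d i m x, gm p ℓ m x ∈ core d (O i) ↔ x ∈ core d (O i) := by
    have key : ∀ d i m x, x ∈ core d (O i) → gm p ℓ m x ∈ core d (O i) := by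
      intro d i m x hx y hy
      rw [← hOg i (-m)]
      apply hx
      rw [Metric.mem_ball, ← gm_dist p ℓ m, ← gm_add, add_neg_cancel, gm_zero]
      exact hy
    intro d i m x
    refine ⟨fun h => ?_, key d i m x⟩
    have := key d i (-m) _ h
    rwa [← gm_add, neg_add_cancel, gm_zero] at this
  choose lab hlabc hlabg using fun i => exists_lab p q ℓ ℓ' (U i) hp hℓ (hU i)
  obtain ⟨K, hKc, hK0, hKg, S, hS, hKS⟩ := exists_K p q ℓ ℓ' (U 3) hq hℓ' (hU 3)
  set A' : Set XX := core (δ / 2) (O 3) with hA'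
  have hA'O : A' ⊆ O 3 := core_sub (by positivity) _
  have hA'c : IsCompact A' := (core_closed _ _).isCompact
  obtain ⟨N, hN, δ0, hδ0, hsmall⟩ := homot_small hA'c (F := K) (hKc.mono (Set.prod_mono hA'O le_rfl)) one_pos
  have hN' : (N : ℝ) ≠ 0 := by exact_mod_cast hN.ne'
  have hK1c : ContinuousOn (fun x => K x 1) A' := by
    have : ContinuousOn (fun x : XX => (x, (1:ℝ))) A' := by fun_prop
    exact ContinuousOn.comp hKc this (fun x hx => ⟨hA'O hx, by simp⟩)
  obtain ⟨εK, hεK, hKconst⟩ := unif_const hA'c hS hK1c (fun x hx => hKS x (hA'O hx))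
  have hAc : ∀ i, IsCompact (core δ (O i)) := fun i => (core_closed _ _).isCompact
  choose εl hεl hlabconst using fun i => unif_lab (hAc i) ((hlabc i).mono (core_sub hδ (O i)))
  obtain ⟨εm, hεm, hεmle⟩ : ∃ εm > 0, ∀ i, εm ≤ εl i :=
    ⟨Finset.univ.inf' Finset.univ_nonempty εl, by simp [Finset.lt_inf'_iff, hεl], fun i => Finset.inf'_le _ (Finset.mem_univ i)⟩
  set ε : ℝ := min (min (δ / 2) 1) (min δ0 (min εK εm)) with hε
  have hε0 : 0 < ε := by positivity
  have l1 : ε ≤ δ / 2 := (min_le_left _ _).trans (min_le_left _ _)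
  have l2 : ε ≤ 1 := (min_le_left _ _).trans (min_le_right _ _)
  have l3 : ε ≤ δ0 := (min_le_right _ _).trans (min_le_left _ _)
  have l4 : ε ≤ εK := ((min_le_right _ _).trans (min_le_right _ _)).trans (min_le_left _ _)
  have l5 : ε ≤ εm := ((min_le_right _ _).trans (min_le_right _ _)).trans (min_le_right _ _)
  set idx : XX → Fin 4 := fun x => Classical.epsilon (fun i => x ∈ core δ (O i)) with hidx
  have hidxm : ∀ x, x ∈ core δ (O (idx x)) := fun x => Classical.epsilon_spec (p := fun i => x ∈ core δ (O i)) (hleb x trivial)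
  have hidxg : ∀ m x, idx (gm p ℓ m x) = idx x := by
    intro m x
    simp only [hidx, hcg]
  classical
  set κ : ℕ → XX → Sp := fun j x => K x (j / N) with hκ
  set γ : List XX → (ZMod p) := fun l => if ∀ x ∈ l, x ∈ A' then BB (ZMod p) 3 (hH (ZMod p) κ N (Finsupp.single l 1)) [] else 0 with hγ
  set β : List XX → (ZMod p) := fun l => BB (ZMod p) 3 (Finsupp.single (l.map Prod.snd) 1) [] + ev γ (bd (ZMod p) XX (Finsupp.single l 1)) with hβ
  have hβev : ∀ a, ev β a = BB (ZMod p) 3 (mapL (ZMod p) Prod.snd a) [] + ev γ (bd (ZMod p) XX a) := by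
    intro a
    have : ev β = (Finsupp.lapply []) ∘ₗ BB (ZMod p) 3 ∘ₗ mapL (ZMod p) Prod.snd + ev γ ∘ₗ bd (ZMod p) XX := by
      apply lin_ext
      intro l
      simp [hβ]
    rw [this]; rfl
  refine no_data hp2 ℓ ε hε0 (fun x => (idx x, lab (idx x) x)) β ?_ ?_ ?_ ?_ ?_ ?_
  · intro m x
    have h1 := hidxg m x
    have h2 := hlabg (idx x) m x (core_sub hδ _ (hidxm x))
    change (idx (gm p ℓ m x), lab (idx (gm p ℓ m x)) (gm p ℓ m x)) = _
    rw [h1, h2]; rfl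
  · intro x y hxy h _
    simp only at h
    have hy := hidxm y
    rw [← h] at hy
    have := hlabconst (idx x) x (hidxm x) y hy (hxy.trans_le (l5.trans (hεmle _)))
    simp only [← h, this]
  · intro l hl
    rw [hβev, bd_bd, map_zero, add_zero, mapL_bd, mapL_single, BB_bd_zero]
    · rfl
    · intro a ha b hb
      obtain ⟨x, hx, rfl⟩ := List.mem_map.1 ha
      obtain ⟨y, hy, rfl⟩ := List.mem_map.1 hb
      have := hl x hx y hy
      rw [Prod.dist_eq] at this
      exact (le_max_right _ _).trans_lt (this.trans_le l2)
  · intro m l _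
    change β (l.map (gm p ℓ m)) = β l
    simp only [hβ]
    have e1 : (l.map (gm p ℓ m)).map Prod.snd = l.map Prod.snd := by
      rw [List.map_map]; rfl
    rw [e1, ← mapL_single (gm p ℓ m) l, ← mapL_bd, ev_mapL]
    have e2 : (fun l : List XX => γ (l.map (gm p ℓ m))) = γ := by
      ext1 l
      simp only [hγ]
      have e3 : (∀ x ∈ l.map (gm p ℓ m), x ∈ A') ↔ ∀ x ∈ l, x ∈ A' := by
        simp only [List.forall_mem_map]
        refine forall₂_congr fun x _ => ?_
        rw [hA', hcg]
      have e4 : (fun j => κ j ∘ gm p ℓ m) = κ := by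
        ext1 j; ext1 x
        simp only [hκ, Function.comp, hKg]
      simp only [e3]
      rw [← mapL_single (gm p ℓ m) l, hH_mapL, e4]
    rw [e2]
  · intro x l hx3 hxl hl
    simp only at hx3
    have hlA : ∀ y ∈ l, y ∈ A' := by
      intro y hy
      have h1 := hidxm x
      rw [hx3] at h1
      exact core_near _ h1 ((hxl y hy).trans_le l1)
    simp only [hβ]
    rcases l with _ | ⟨w, l⟩
    · simp [BB_nil, bd]
    have hmem : Finsupp.single (w :: l) (1:(ZMod p)) ∈ sm (ZMod p) (rel ε A') (l.length + 1) :=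
      single_mem_sm rfl (fun x hx y hy => ⟨hlA x hx, hlA y hy, hl x hx y hy⟩) _
    have e1 : ev γ (bd (ZMod p) XX (Finsupp.single (w :: l) 1)) = BB (ZMod p) 3 (hH (ZMod p) κ N (bd (ZMod p) XX (Finsupp.single (w :: l) 1))) [] := by
      refine sm_ext (ev γ) ((Finsupp.lapply []) ∘ₗ BB (ZMod p) 3 ∘ₗ hH (ZMod p) κ N) ?_ (bd_mem hmem)
      intro l' _ hl'
      have : ∀ x ∈ l', x ∈ A' := fun x hx => (hl' x hx x hx).1
      change ev γ (Finsupp.single l' 1) = BB (ZMod p) 3 (hH (ZMod p) κ N (Finsupp.single l' 1)) []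
      rw [ev_single, one_mul]
      exact if_pos this
    have e2 := bd_hH (R := ZMod p) κ N (Finsupp.single (w :: l) 1)
    have e3 : hH (ZMod p) κ N (Finsupp.single (w :: l) 1) ∈ sm (ZMod p) (rel 1 (Set.univ : Set Sp)) (l.length + 1 + 1) := by
      refine hH_mem ?_ hmem
      rintro j k hj hk hjk hkj x y ⟨hx, hy, hxy⟩
      exact ⟨trivial, trivial, hsmall j k hj hk hjk hkj x hx y hy (hxy.trans_le l3)⟩
    have e4 : BB (ZMod p) 3 (bd (ZMod p) Sp (hH (ZMod p) κ N (Finsupp.single (w :: l) 1))) = 0 := by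
      refine sm_ext (BB (ZMod p) 3 ∘ₗ bd (ZMod p) Sp) 0 ?_ e3
      intro l' _ hl'
      exact BB_bd_zero (ZMod p) l' (fun x hx y hy => (hl' x hx y hy).2.2)
    have e5 : mapL (ZMod p) (κ 0) (Finsupp.single (w :: l) 1) = Finsupp.single ((w :: l).map Prod.snd) 1 := by
      rw [mapL_single]
      congr 1
      apply List.map_congr_left
      intro x hx
      simp only [hκ, Nat.cast_zero, zero_div]
      exact hK0 x (hA'O (hlA x hx))
    have e6 : BB (ZMod p) 3 (mapL (ZMod p) (κ N) (Finsupp.single (w :: l) 1)) = 0 := by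
      rw [mapL_single]
      apply BB_const (ZMod p) _ (κ N w)
      intro a ha
      obtain ⟨x, hx, rfl⟩ := List.mem_map.1 ha
      simp only [hκ, div_self hN']
      exact hKconst x (hlA x hx) w (hlA w (by simp)) ((hl x hx w (by simp)).trans_le l4)
    have e7 : hH (ZMod p) κ N (bd (ZMod p) XX (Finsupp.single (w :: l) 1)) =
        mapL (ZMod p) (κ N) (Finsupp.single (w :: l) 1) - mapL (ZMod p) (κ 0) (Finsupp.single (w :: l) 1)
          - bd (ZMod p) Sp (hH (ZMod p) κ N (Finsupp.single (w :: l) 1)) := by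
      rw [← e2]; abel
    rw [e1, e7, map_sub, map_sub, e4, e6, e5]
    simp
  · intro a _ ha
    rw [hβev, ha, map_zero, add_zero]
end LC

namespace LC

abbrev HQ := Quaternion ℝ
abbrev Ga := Metric.sphere (0 : Quaternion ℝ) 1

def c0 (x : HQ) : ℂ := ⟨x.re, x.imI⟩
def c1 (x : HQ) : ℂ := ⟨x.imJ, x.imK⟩
def qq (a b : ℂ) : HQ := ⟨a.re, a.im, b.re, b.im⟩
@[simp] lemma c0_qq (a b : ℂ) : c0 (qq a b) = a := rfl
@[simp] lemma c1_qq (a b : ℂ) : c1 (qq a b) = b := rfl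
@[simp] lemma qq_c (x : HQ) : qq (c0 x) (c1 x) = x := rfl
lemma qq_ext {x y : HQ} (h0 : c0 x = c0 y) (h1 : c1 x = c1 y) : x = y := by
  rw [← qq_c x, ← qq_c y, h0, h1]
lemma qq_mul (a b c d : ℂ) : qq a b * qq c d =
    qq (a * c - b * (starRingEnd ℂ) d) (a * d + b * (starRingEnd ℂ) c) := by
  ext
  · rw [Quaternion.re_mul]; simp [qq]; ring
  · rw [Quaternion.imI_mul]; simp [qq]; ring
  · rw [Quaternion.imJ_mul]; simp [qq]; ring
  · rw [Quaternion.imK_mul]; simp [qq]; ring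
lemma nsq (x : HQ) : ‖x‖ ^ 2 = ‖c0 x‖ ^ 2 + ‖c1 x‖ ^ 2 := by
  rw [sq, ← Quaternion.normSq_eq_norm_mul_self, Quaternion.normSq_def', Complex.sq_norm, Complex.sq_norm,
    Complex.normSq_apply, Complex.normSq_apply, c0, c1]
  ring
lemma mem_Ga (x : HQ) : x ∈ Metric.sphere (0 : HQ) 1 ↔ ‖c0 x‖ ^ 2 + ‖c1 x‖ ^ 2 = 1 := by
  rw [mem_sphere_zero_iff_norm, ← nsq]
  exact (pow_eq_one_iff_of_nonneg (norm_nonneg _) two_ne_zero).symm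
lemma Ga_norm (x : Ga) : ‖c0 x.1‖ ^ 2 + ‖c1 x.1‖ ^ 2 = 1 := (mem_Ga _).1 x.2
lemma cplx_cont {X : Type*} [TopologicalSpace X] {f g : X → ℝ} (hf : Continuous f) (hg : Continuous g) :
    Continuous (fun x => (⟨f x, g x⟩ : ℂ)) := by
  have : (fun x => (⟨f x, g x⟩ : ℂ)) = fun x => (f x : ℂ) + (g x : ℂ) * Complex.I := by
    ext x; exact Complex.mk_eq_add_mul_I _ _
  rw [this]; fun_prop
lemma c0_cont : Continuous c0 := cplx_cont Quaternion.continuous_re Quaternion.continuous_imI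
lemma c1_cont : Continuous c1 := cplx_cont Quaternion.continuous_imJ Quaternion.continuous_imK
lemma qq_cont {X : Type*} [TopologicalSpace X] {f g : X → ℂ} (hf : Continuous f) (hg : Continuous g) :
    Continuous (fun x => qq (f x) (g x)) := by
  have h : ∀ x, qq (f x) (g x) = Quaternion.linearIsometryEquivTuple.symm
      (WithLp.toLp 2 ![(f x).re, (f x).im, (g x).re, (g x).im]) := by
    intro x; rfl
  simp only [h]
  refine Quaternion.linearIsometryEquivTuple.symm.continuous.comp ?_
  refine (PiLp.continuous_toLp 2 _).comp ?_
  refine continuous_pi fun i => ?_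
  fin_cases i <;> simp <;> fun_prop

/-- homotopy classes of maps into the unit quaternions -/
noncomputable def hCon (V : Type*) [TopologicalSpace V] : Con C(V, Ga) where
  r := ContinuousMap.Homotopic
  iseqv := ContinuousMap.Homotopic.equivalence
  mul' := by
    rintro a b c d ⟨F⟩ ⟨G⟩
    exact ⟨⟨⟨fun x => F x * G x, by fun_prop⟩, fun x => by simp, fun x => by simp⟩⟩

lemma homotopic_mk {V Y : Type*} [TopologicalSpace V] [TopologicalSpace Y] {f g : C(V, Y)} (F : ℝ × V → Y)
    (hF : ContinuousOn F (Set.Icc 0 1 ×ˢ Set.univ)) (h0 : ∀ x, F (0, x) = f x) (h1 : ∀ x, F (1, x) = g x) :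
    f.Homotopic g :=
  ⟨⟨⟨fun x => F ((x.1 : ℝ), x.2), hF.comp_continuous (by fun_prop) (fun x => ⟨x.1.2, trivial⟩)⟩,
    fun x => by simpa using h0 x, fun x => by simpa using h1 x⟩⟩

def KK (V : Type*) [TopologicalSpace V] := (hCon V).Quotient
noncomputable instance (V : Type*) [TopologicalSpace V] : Group (KK V) := inferInstanceAs (Group (hCon V).Quotient)
noncomputable def clh (V : Type*) [TopologicalSpace V] : C(V, Ga) →* KK V := (hCon V).mk'
noncomputable def cl {V : Type*} [TopologicalSpace V] (f : C(V, Ga)) : KK V := clh V f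
lemma cl_eq {V : Type*} [TopologicalSpace V] (f g : C(V, Ga)) : cl f = cl g ↔ f.Homotopic g := (hCon V).eq
lemma cl_mul {V : Type*} [TopologicalSpace V] (f g : C(V, Ga)) : cl (f * g) = cl f * cl g := map_mul (clh V) f g
lemma cl_one {V : Type*} [TopologicalSpace V] : cl (1 : C(V, Ga)) = 1 := rfl
lemma cl_pow {V : Type*} [TopologicalSpace V] (f : C(V, Ga)) (n : ℕ) : cl (f ^ n) = cl f ^ n := map_pow (clh V) f n
lemma cl_inv {V : Type*} [TopologicalSpace V] (f : C(V, Ga)) : cl (f⁻¹) = (cl f)⁻¹ := rfl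
lemma cl_zpow {V : Type*} [TopologicalSpace V] (f : C(V, Ga)) (n : ℤ) : cl (f ^ n) = cl f ^ n := map_zpow (clh V) f n

lemma cl_const {V : Type*} [TopologicalSpace V] (g : Ga) : cl (ContinuousMap.const V g) = 1 := by
  rw [← cl_one, cl_eq]
  have h : IsPathConnected (Metric.sphere (0 : HQ) 1) :=
    isPathConnected_sphere (by rw [Quaternion.rank_eq_four]; norm_num) 0 zero_le_one
  have : PathConnectedSpace Ga := isPathConnected_iff_pathConnectedSpace.1 h
  obtain ⟨γ⟩ := PathConnectedSpace.joined g (1 : Ga)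
  exact ⟨⟨⟨fun x => γ x.1, by fun_prop⟩, fun x => by simp, fun x => by simp⟩⟩

lemma cl_comp {V W : Type*} [TopologicalSpace V] [TopologicalSpace W] {f g : C(W, Ga)} (h : cl f = cl g) (k : C(V, W)) :
    cl (f.comp k) = cl (g.comp k) := by
  rw [cl_eq] at h ⊢
  exact h.comp (ContinuousMap.Homotopic.refl k)

lemma miss {V : Type*} [TopologicalSpace V] (f : C(V, Ga)) (c : Ga) (h : ∀ v, f v ≠ c) : cl f = 1 := by
  rw [← cl_const (V := V) (-c), cl_eq]
  have hne : ∀ t : ℝ, t ∈ Set.Icc (0:ℝ) 1 → ∀ v, (1 - t) • (f v).1 - t • c.1 ≠ 0 := by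
    intro t ht v h0
    rw [sub_eq_zero] at h0
    have h1 := congrArg norm h0
    rw [norm_smul, norm_smul, mem_sphere_zero_iff_norm.1 (f v).2, mem_sphere_zero_iff_norm.1 c.2,
      Real.norm_of_nonneg (by linarith [ht.2]), Real.norm_of_nonneg ht.1] at h1
    have ht2 : t = 1 / 2 := by linarith
    subst ht2
    apply h v
    apply Subtype.ext
    have h2 : ((1:ℝ) - 1 / 2) = 1 / 2 := by norm_num
    rw [h2] at h0
    exact smul_right_injective HQ (by norm_num : (1 / 2 : ℝ) ≠ 0) h0
  have hF : ∀ z : Set.Icc (0:ℝ) 1 × V, ‖(1 - z.1.1) • (f z.2).1 - z.1.1 • c.1‖⁻¹ • ((1 - z.1.1) • (f z.2).1 - z.1.1 • c.1)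
      ∈ Metric.sphere (0 : HQ) 1 := by
    intro z
    rw [mem_sphere_zero_iff_norm, norm_smul, norm_inv, norm_norm, inv_mul_cancel₀]
    exact norm_ne_zero_iff.2 (hne _ z.1.2 z.2)
  refine ⟨⟨⟨fun z => ⟨_, hF z⟩, ?_⟩, ?_, ?_⟩⟩
  · refine Continuous.subtype_mk ?_ _
    have : Continuous fun z : Set.Icc (0:ℝ) 1 × V => (1 - z.1.1) • (f z.2).1 - z.1.1 • c.1 := by fun_prop
    exact (this.norm.inv₀ (fun z => norm_ne_zero_iff.2 (hne _ z.1.2 z.2))).smul this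
  · intro v
    apply Subtype.ext
    simp
  · intro v
    apply Subtype.ext
    simp

/-- the norm preserving map in the first coordinate -/
noncomputable def mu (h : C(ℂ, ℂ)) (hn : ∀ z, ‖h z‖ = ‖z‖) : C(Ga, Ga) where
  toFun x := ⟨qq (h (c0 x.1)) (c1 x.1), by rw [mem_Ga, c0_qq, c1_qq, hn]; exact Ga_norm x⟩
  continuous_toFun := by
    refine Continuous.subtype_mk (qq_cont (h.continuous.comp (c0_cont.comp continuous_subtype_val)) (c1_cont.comp continuous_subtype_val)) _

lemma mu_abs (h : C(ℂ, ℂ)) (hn : ∀ z, ‖h z‖ = ‖z‖) (h1 : ∀ z, h z = ‖z‖) : cl (mu h hn) = 1 := by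
  refine miss _ ⟨qq (-1) 0, by rw [mem_Ga]; simp⟩ ?_
  intro x hx
  have := congrArg (fun y : Ga => c0 y.1) hx
  simp only [mu, ContinuousMap.coe_mk, c0_qq, h1] at this
  have h2 : ‖c0 x.1‖ = -1 := by exact_mod_cast this
  linarith [norm_nonneg (c0 x.1)]

lemma mu_mul (h h' h'' : C(ℂ, ℂ)) (hn : ∀ z, ‖h z‖ = ‖z‖) (hn' : ∀ z, ‖h' z‖ = ‖z‖) (hn'' : ∀ z, ‖h'' z‖ = ‖z‖)
    (hh : ∀ z, (h z = ‖z‖ ∧ h'' z = h' z) ∨ (h' z = ‖z‖ ∧ h'' z = h z)) :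
    cl (mu h'' hn'') = cl (mu h hn) * cl (mu h' hn') := by
  let o : C(ℂ, ℂ) := ⟨fun z => ‖z‖, by fun_prop⟩
  have on : ∀ z, ‖o z‖ = ‖z‖ := fun z => by simp [o]
  have e1 : cl (mu o on) = 1 := mu_abs o on (fun z => rfl)
  have e2 : mu h'' hn'' * (mu o on)⁻¹ = (mu h hn * (mu o on)⁻¹) * (mu h' hn' * (mu o on)⁻¹) := by
    ext1 x
    simp only [ContinuousMap.mul_apply, ContinuousMap.inv_apply]
    rcases hh (c0 x.1) with ⟨a, b⟩ | ⟨a, b⟩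
    · have h1 : mu h hn x = mu o on x := by
        apply Subtype.ext; simp only [mu, ContinuousMap.coe_mk, a]; rfl
      have h2 : mu h'' hn'' x = mu h' hn' x := by
        apply Subtype.ext; simp only [mu, ContinuousMap.coe_mk, b]
      rw [h1, h2]; group
    · have h1 : mu h' hn' x = mu o on x := by
        apply Subtype.ext; simp only [mu, ContinuousMap.coe_mk, a]; rfl
      have h2 : mu h'' hn'' x = mu h hn x := by
        apply Subtype.ext; simp only [mu, ContinuousMap.coe_mk, b]
      rw [h1, h2]; group
  have e3 := congrArg cl e2
  rw [cl_mul, cl_mul, cl_mul, cl_mul, cl_inv, e1, inv_one, mul_one, mul_one, mul_one] at e3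
  exact e3

lemma mu_homot (H : ℝ → C(ℂ, ℂ)) (hc : Continuous fun z : ℝ × ℂ => H z.1 z.2) (hn : ∀ s z, ‖H s z‖ = ‖z‖) :
    cl (mu (H 0) (hn 0)) = cl (mu (H 1) (hn 1)) := by
  rw [cl_eq]
  refine homotopic_mk (fun z => mu (H z.1) (hn z.1) z.2) ?_ (fun x => rfl) (fun x => rfl)
  refine Continuous.continuousOn ?_
  refine Continuous.subtype_mk (qq_cont ?_ ?_) _
  · exact hc.comp (by have := c0_cont; fun_prop : Continuous fun z : ℝ × Ga => (z.1, c0 z.2.1))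
  · have := c1_cont; fun_prop

end LC

namespace LC

noncomputable def un (z : ℂ) : ℂ := z / ‖z‖
lemma un_norm {z : ℂ} (h : z ≠ 0) : ‖un z‖ = 1 := by
  rw [un, norm_div, Complex.norm_real, norm_norm, div_self (norm_ne_zero_iff.2 h)]
lemma norm_un (z : ℂ) : (‖z‖ : ℂ) * un z = z := by
  rcases eq_or_ne z 0 with rfl | h
  · simp
  · rw [un, mul_div_cancel₀]
    exact_mod_cast norm_ne_zero_iff.2 h

noncomputable def Hh (c d : ℕ) (s : ℝ) (z : ℂ) : ℂ :=
  ‖z‖ * ((un z * Complex.exp ((s * Real.arccos (un z).re : ℝ) * Complex.I)) ^ c *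
    (un z * Complex.exp ((- s * Real.arccos (un z).re : ℝ) * Complex.I)) ^ d)

lemma Hh_norm (c d : ℕ) (s : ℝ) (z : ℂ) : ‖Hh c d s z‖ = ‖z‖ := by
  rcases eq_or_ne z 0 with rfl | h
  · simp [Hh]
  · rw [Hh, norm_mul, norm_mul, norm_pow, norm_pow, norm_mul, norm_mul, Complex.norm_exp_ofReal_mul_I,
      Complex.norm_exp_ofReal_mul_I, un_norm h]
    simp

lemma Hh_cont (c d : ℕ) : Continuous fun z : ℝ × ℂ => Hh c d z.1 z.2 := by
  rw [continuous_iff_continuousAt]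
  rintro ⟨s, z⟩
  rcases eq_or_ne z 0 with rfl | h
  · have e : Hh c d s 0 = 0 := by simp [Hh]
    rw [ContinuousAt, e, tendsto_zero_iff_norm_tendsto_zero]
    simp only [Hh_norm]
    have : Continuous fun z : ℝ × ℂ => ‖z.2‖ := by fun_prop
    have h2 := this.tendsto (s, 0)
    simpa using h2
  · have h0 : ContinuousAt (fun z : ℝ × ℂ => un z.2) (s, z) := by
      simp only [un]
      refine ContinuousAt.div (by fun_prop) (by fun_prop) ?_
      simpa using h
    have h1 : ContinuousAt (fun z : ℝ × ℂ => Real.arccos (un z.2).re) (s, z) :=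
      Real.continuous_arccos.continuousAt.comp (Complex.continuous_re.continuousAt.comp h0)
    simp only [Hh]
    fun_prop

lemma Hh_one (c d : ℕ) (z : ℂ) : (Hh c 0 1 z = ‖z‖ ∧ Hh c d 1 z = Hh 0 d 1 z) ∨ (Hh 0 d 1 z = ‖z‖ ∧ Hh c d 1 z = Hh c 0 1 z) := by
  rcases eq_or_ne z 0 with rfl | h
  · left; simp [Hh]
  have hn := un_norm h
  set u := un z with hu
  have hsq : u.re ^ 2 + u.im ^ 2 = 1 := by
    have := Complex.sq_norm u
    rw [hn, Complex.normSq_apply] at this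
    linarith
  have hre1 : -1 ≤ u.re := by nlinarith
  have hre2 : u.re ≤ 1 := by nlinarith
  have hcos : Real.cos (Real.arccos u.re) = u.re := Real.cos_arccos hre1 hre2
  have hsin : Real.sin (Real.arccos u.re) = |u.im| := by
    rw [Real.sin_arccos, ← Real.sqrt_sq_eq_abs]; congr 1; linarith
  rcases le_total 0 u.im with h0 | h0
  · right
    have key : u * Complex.exp ((- 1 * Real.arccos u.re : ℝ) * Complex.I) = 1 := by
      rw [Complex.exp_mul_I, ← Complex.ofReal_cos, ← Complex.ofReal_sin, neg_one_mul, Real.cos_neg, Real.sin_neg,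
        hcos, hsin, abs_of_nonneg h0]
      apply Complex.ext <;> simp <;> linarith
    simp only [Hh, ← hu, key]; simp
  · left
    have key : u * Complex.exp ((1 * Real.arccos u.re : ℝ) * Complex.I) = 1 := by
      rw [Complex.exp_mul_I, ← Complex.ofReal_cos, ← Complex.ofReal_sin, one_mul, 
        hcos, hsin, abs_of_nonpos h0]
      apply Complex.ext <;> simp <;> linarith
    simp only [Hh, ← hu, key]; simp

noncomputable def HC (c d : ℕ) (s : ℝ) : C(ℂ, ℂ) :=
  ⟨Hh c d s, (Hh_cont c d).comp (by fun_prop : Continuous fun z : ℂ => (s, z))⟩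

/-- power map in polar coordinates -/
noncomputable def pw (c : ℕ) (z : ℂ) : ℂ := ‖z‖ * un z ^ c
lemma Hh_zero (c d : ℕ) (z : ℂ) : Hh c d 0 z = pw (c + d) z := by
  simp [Hh, pw, pow_add]
lemma pw_norm (c : ℕ) (z : ℂ) : ‖pw c z‖ = ‖z‖ := by
  have := Hh_norm c 0 0 z
  rwa [Hh_zero] at this
lemma pw_cont (c : ℕ) : Continuous (pw c) := by
  have := (HC c 0 0).continuous
  have e : (HC c 0 0 : ℂ → ℂ) = pw c := by ext z; exact Hh_zero c 0 z
  rwa [e] at this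
lemma pw_mul (c : ℕ) (ω z : ℂ) (h : ‖ω‖ = 1) : pw c (ω * z) = ω ^ c * pw c z := by
  rw [pw, pw, un, un, norm_mul, h, one_mul, mul_div_assoc, mul_pow]; ring
noncomputable def pwC (c : ℕ) : C(ℂ, ℂ) := ⟨pw c, pw_cont c⟩
noncomputable def mp (c : ℕ) : C(Ga, Ga) := mu (pwC c) (pw_norm c)

lemma mu_congr {h h' : C(ℂ, ℂ)} (hn : ∀ z, ‖h z‖ = ‖z‖) (hn' : ∀ z, ‖h' z‖ = ‖z‖) (hh : ∀ z, h z = h' z) : mu h hn = mu h' hn' := by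
  have : h = h' := by ext1 z; exact hh z
  subst this; rfl

lemma mp_add (c d : ℕ) : cl (mp (c + d)) = cl (mp c) * cl (mp d) := by
  have key : ∀ c d, cl (mp (c + d)) = cl (mu (HC c d 1) (Hh_norm c d 1)) := by
    intro c d
    rw [← mu_homot (HC c d) (Hh_cont c d) (Hh_norm c d)]
    rw [mp, mu_congr (h := pwC (c + d)) (h' := HC c d 0) (pw_norm _) (Hh_norm c d 0)]
    intro z; exact (Hh_zero c d z).symm
  have k1 := key c 0
  have k2 := key 0 d
  rw [add_zero] at k1
  rw [zero_add] at k2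
  rw [key, k1, k2]
  exact mu_mul _ _ _ _ _ _ (Hh_one c d)
lemma mp_zero : cl (mp 0) = 1 := mu_abs _ _ (fun z => by simp [pwC, pw])
lemma mp_one : mp 1 = ContinuousMap.id Ga := by
  ext1 x
  apply Subtype.ext
  simp only [mp, mu, ContinuousMap.coe_mk, pwC, pw, pow_one, norm_un]
  rfl
lemma mp_pow (c : ℕ) : cl (mp c) = cl (ContinuousMap.id Ga) ^ c := by
  induction c with
  | zero => rw [mp_zero, pow_zero]
  | succ c ih => rw [mp_add, ih, mp_one, pow_succ]

noncomputable def jj : Ga := ⟨qq 0 1, by rw [mem_Ga]; simp⟩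
noncomputable def jjm : Ga := ⟨qq 0 (-1), by rw [mem_Ga]; simp⟩
noncomputable def np (c : ℕ) : C(Ga, Ga) :=
  ((mp c).comp (ContinuousMap.id Ga * ContinuousMap.const Ga jj)) * ContinuousMap.const Ga jjm
lemma pow_comp {V W : Type*} [TopologicalSpace V] [TopologicalSpace W] (f : C(W, Ga)) (n : ℕ) (k : C(V, W)) :
    (f ^ n).comp k = (f.comp k) ^ n := by
  ext1 x; simp
lemma np_pow (c : ℕ) : cl (np c) = cl (ContinuousMap.id Ga) ^ c := by
  rw [np, cl_mul, cl_const, mul_one]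
  rw [cl_comp ((mp_pow c).trans (cl_pow _ c).symm), pow_comp, cl_pow, ContinuousMap.id_comp, cl_mul, cl_const, mul_one]

noncomputable def fp (c d : ℕ) : C(Ga, Ga) := (np d).comp (mp c)
lemma fp_pow (c d : ℕ) : cl (fp c d) = cl (ContinuousMap.id Ga) ^ (c * d) := by
  rw [fp, cl_comp ((np_pow d).trans (cl_pow _ d).symm), pow_comp, cl_pow, ContinuousMap.id_comp, mp_pow, pow_mul]
lemma fp_comp {V : Type*} [TopologicalSpace V] (c d : ℕ) (z : C(V, Ga)) : cl ((fp c d).comp z) = cl z ^ (c * d) := by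
  rw [cl_comp ((fp_pow c d).trans (cl_pow _ _).symm), pow_comp, cl_pow, ContinuousMap.id_comp]

lemma mp_coe (c : ℕ) (x : Ga) : (mp c x).1 = qq (pw c (c0 x.1)) (c1 x.1) := rfl
lemma np_coe (c : ℕ) (x : Ga) : (np c x).1 = qq (c0 x.1) (- pw c (- c1 x.1)) := by
  have h1 : (x * jj).1 = qq (- c1 x.1) (c0 x.1) := by
    rw [Metric.unitSphere.coe_mul, ← qq_c x.1]
    change qq _ _ * qq 0 1 = _
    rw [qq_mul]; simp
  have h2 : (np c x).1 = (mp c (x * jj)).1 * jjm.1 := rfl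
  rw [h2, mp_coe, h1]
  change qq _ _ * qq 0 (-1) = _
  rw [qq_mul]; simp
lemma fp_coe (c d : ℕ) (x : Ga) : (fp c d x).1 = qq (pw c (c0 x.1)) (- pw d (- c1 x.1)) := by
  change (np d (mp c x)).1 = _
  rw [np_coe, mp_coe]; simp

end LC

namespace LC

lemma grp_lem {G : Type*} [Group G] (a b : G) (m n s t : ℤ) (h1 : a ^ m * b ^ n = 1) (h2 : a ^ s * b ^ t = 1)
    (h : m * t - n * s = 1) : a = 1 ∧ b = 1 := by
  have e1 : a ^ m = b ^ (-n) := by rw [zpow_neg]; exact eq_inv_of_mul_eq_one_left h1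
  have e2 : a ^ s = b ^ (-t) := by rw [zpow_neg]; exact eq_inv_of_mul_eq_one_left h2
  have e3 : a ^ (m * t) = a ^ (s * n) := by
    rw [zpow_mul, zpow_mul, e1, e2, ← zpow_mul, ← zpow_mul]; congr 1; ring
  have ha : a = 1 := by
    have : a ^ (m * t - n * s) = 1 := by rw [zpow_sub, e3, mul_comm n s, mul_inv_cancel]
    rwa [h, zpow_one] at this
  refine ⟨ha, ?_⟩
  rw [ha, one_zpow, one_mul] at h1 h2
  have : b ^ (m * t - n * s) = 1 := by
    rw [zpow_sub, mul_comm m t, zpow_mul, zpow_mul, h1, h2]; simp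
  rwa [h, zpow_one] at this

lemma Sp_norm (x : Sp) : ‖x.1 0‖ ^ 2 + ‖x.1 1‖ ^ 2 = 1 := by
  have h : ‖x.1‖ ^ 2 = 1 := by simp
  rw [EuclideanSpace.norm_sq_eq] at h
  simpa using h

noncomputable def phi : C(Sp, Ga) where
  toFun x := ⟨qq (x.1 0) (x.1 1), by rw [mem_Ga]; exact Sp_norm x⟩
  continuous_toFun := by
    refine Continuous.subtype_mk (qq_cont ?_ ?_) _
    · fun_prop
    · fun_prop
noncomputable def psi : C(Ga, Sp) where
  toFun x := ⟨WithLp.toLp 2 ![c0 x.1, c1 x.1], by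
    rw [mem_sphere_zero_iff_norm]
    refine (pow_eq_one_iff_of_nonneg (norm_nonneg _) two_ne_zero).1 ?_
    rw [EuclideanSpace.norm_sq_eq]
    simpa using Ga_norm x⟩
  continuous_toFun := by
    refine Continuous.subtype_mk ((PiLp.continuous_toLp 2 _).comp (continuous_pi fun i => ?_)) _
    have h0 := c0_cont
    have h1 := c1_cont
    fin_cases i <;> simp <;> fun_prop
lemma psi_phi (x : Sp) : psi (phi x) = x := by
  apply Subtype.ext
  ext i
  fin_cases i <;> simp [psi, phi]

lemma null_psi {V : Type*} [TopologicalSpace V] (f : C(V, Sp)) (h : cl (phi.comp f) = 1) :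
    f.Homotopic (ContinuousMap.const V (psi 1)) := by
  rw [← cl_one, cl_eq] at h
  have h2 := (ContinuousMap.Homotopic.refl psi).comp h
  have e1 : psi.comp (phi.comp f) = f := by ext1 x; exact psi_phi _
  rw [e1] at h2
  exact h2

noncomputable def fz (c d : ℕ) : C(XX, Ga) := ((fp c d).comp phi).comp ContinuousMap.fst
noncomputable def fw (c d : ℕ) : C(XX, Ga) := ((fp c d).comp phi).comp ContinuousMap.snd

lemma null_V (e0 e1 a0 a1 p q : ℕ) (s t : ℤ) (hst : ((e0 * e1 : ℕ) : ℤ) * ((q * q : ℕ) * t) - ((a0 * a1 : ℕ) : ℤ) * ((p * p : ℕ) * s) = 1)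
    (V : Set XX) (a b : Ga) (hA : ∀ x ∈ V, (fz e0 e1 * fw a0 a1) x ≠ a) (hB : ∀ x ∈ V, (fz p p ^ s * fw q q ^ t) x ≠ b) :
    ContinuousMap.Nullhomotopic (⟨Subtype.val, continuous_subtype_val⟩ : C(V, XX)) := by
  set ι : C(V, XX) := ⟨Subtype.val, continuous_subtype_val⟩ with hι
  set z : C(V, Sp) := ContinuousMap.fst.comp ι with hz
  set w : C(V, Sp) := ContinuousMap.snd.comp ι with hw
  have kA : cl ((fz e0 e1 * fw a0 a1).comp ι) = 1 := miss _ a (fun v => hA v.1 v.2)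
  have kB : cl ((fz p p ^ s * fw q q ^ t).comp ι) = 1 := miss _ b (fun v => hB v.1 v.2)
  have eA : (fz e0 e1 * fw a0 a1).comp ι = (fp e0 e1).comp (phi.comp z) * (fp a0 a1).comp (phi.comp w) := rfl
  have eB : (fz p p ^ s * fw q q ^ t).comp ι = ((fp p p).comp (phi.comp z)) ^ s * ((fp q q).comp (phi.comp w)) ^ t := by
    ext1 x
    simp only [ContinuousMap.comp_apply, ContinuousMap.mul_apply, ContinuousMap.zpow_apply]
    rfl
  rw [eA, cl_mul, fp_comp, fp_comp] at kA
  rw [eB, cl_mul, cl_zpow, cl_zpow, fp_comp, fp_comp, ← zpow_natCast, ← zpow_natCast, ← zpow_mul, ← zpow_mul] at kB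
  rw [← zpow_natCast, ← zpow_natCast] at kA
  obtain ⟨h1, h2⟩ := grp_lem _ _ _ _ _ _ kA kB hst
  exact ⟨(psi 1, psi 1), (null_psi z h1).prodMk (null_psi w h2)⟩

/-- pushing down to the quotient -/
lemma null_push {X M : Type*} [TopologicalSpace X] [TopologicalSpace M] (π : C(X, M)) (ho : IsOpenMap π) (V : Set X)
    (hV : IsOpen V) (hinj : Set.InjOn π V)
    (hn : ContinuousMap.Nullhomotopic (⟨Subtype.val, continuous_subtype_val⟩ : C(V, X))) :
    ContinuousMap.Nullhomotopic (⟨Subtype.val, continuous_subtype_val⟩ : C((π '' V : Set M), M)) := by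
  let e : V ≃ (π '' V : Set M) := Equiv.Set.imageOfInjOn π V hinj
  have he : ∀ v, (e v : M) = π v := fun v => rfl
  have hc : Continuous e := Continuous.subtype_mk (π.continuous.comp continuous_subtype_val) _
  have hop : IsOpenMap e := by
    intro S hS
    rw [isOpen_induced_iff]
    refine ⟨π '' (Subtype.val '' S), ho _ (hV.isOpenMap_subtype_val _ hS), ?_⟩
    ext y
    simp only [Set.mem_preimage, Set.mem_image]
    constructor
    · rintro ⟨_, ⟨v, hv, rfl⟩, h⟩
      exact ⟨v, hv, Subtype.ext h⟩
    · rintro ⟨v, hv, rfl⟩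
      exact ⟨_, ⟨v, hv, rfl⟩, rfl⟩
  let h := e.toHomeomorphOfContinuousOpen hc hop
  have e1 : (⟨Subtype.val, continuous_subtype_val⟩ : C((π '' V : Set M), M)) =
      (π.comp ⟨Subtype.val, continuous_subtype_val⟩).comp (h.symm : C((π '' V : Set M), V)) := by
    ext1 y
    have := h.apply_symm_apply y
    change (y : M) = π (h.symm y)
    rw [← he]
    exact congrArg Subtype.val this.symm
  rw [e1]
  exact (hn.comp_right π).comp_left _

/-- sectors -/
def sec (n : ℕ) : Set ℂ := {z | z ∈ Complex.slitPlane ∧ Complex.arg z ∈ Set.Ioo (-(Real.pi / n)) (Real.pi / n)}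
lemma sec_open (n : ℕ) : IsOpen (sec n) := by
  have : ContinuousOn Complex.arg Complex.slitPlane := fun z hz => (Complex.continuousAt_arg hz).continuousWithinAt
  exact this.isOpen_inter_preimage Complex.isOpen_slitPlane isOpen_Ioo
lemma sec_inj {n : ℕ} (hn : n ≠ 0) {z z' : ℂ} (h : z ∈ sec n) (h' : z' ∈ sec n) (e : z ^ n = z' ^ n) : z = z' := by
  have a := Complex.pow_cpow_nat_inv hn h.2.1 h.2.2.le
  have b := Complex.pow_cpow_nat_inv hn h'.2.1 h'.2.2.le
  rw [← a, ← b, e]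
lemma sec_exists {n : ℕ} (hn : 2 ≤ n) {z : ℂ} (hz : z ≠ 0) (h : z ^ n ≠ -(‖z‖ ^ n : ℝ)) :
    ∃ ξ : ℂ, ξ ^ n = 1 ∧ ξ * z ∈ sec n := by
  have hn0 : n ≠ 0 := by omega
  have hn1 : (0:ℝ) < n := by exact_mod_cast (by omega : 0 < n)
  have hn2 : (2:ℝ) ≤ n := by exact_mod_cast hn
  have hsl : z ^ n ∈ Complex.slitPlane := by
    rw [Complex.mem_slitPlane_iff_not_le_zero]
    intro hle
    apply h
    rw [Complex.le_def] at hle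
    have h2 : z ^ n = ((z ^ n).re : ℂ) := Complex.ext (by simp) (by simpa using hle.2)
    have h3 : ‖z ^ n‖ = - (z ^ n).re := by
      rw [h2, Complex.norm_real, Complex.ofReal_re, Real.norm_of_nonpos (by simpa using hle.1)]
    rw [← norm_pow, h3, ← Complex.ofReal_neg, neg_neg, ← h2]
  set z' := (z ^ n) ^ ((n:ℂ)⁻¹) with hz'
  have e1 : z' ^ n = z ^ n := Complex.cpow_nat_inv_pow _ hn0
  have hzn : z ^ n ≠ 0 := pow_ne_zero _ hz
  have hz0 : z' ≠ 0 := by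
    intro h0; rw [h0, zero_pow hn0] at e1; exact hzn e1.symm
  have harg1 := Complex.neg_pi_lt_arg (z ^ n)
  have harg2 : Complex.arg (z ^ n) < Real.pi :=
    lt_of_le_of_ne (Complex.arg_le_pi _) (Complex.mem_slitPlane_iff_arg.1 hsl).1
  have hpin : Real.pi / n < Real.pi := by
    rw [div_lt_iff₀ hn1]; nlinarith [Real.pi_pos]
  have hb : Complex.arg (z ^ n) / n ∈ Set.Ioo (-(Real.pi / n)) (Real.pi / n) := by
    rw [← neg_div]
    exact ⟨by gcongr, by gcongr⟩
  have harg : Complex.arg z' = Complex.arg (z ^ n) / n := by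
    have e2 : z' = Complex.exp (Complex.log (z ^ n) / n) := by
      rw [hz', Complex.cpow_def_of_ne_zero hzn, div_eq_mul_inv]
    have e3 : (Complex.log (z ^ n) / n).im = Complex.arg (z ^ n) / n := by
      rw [← Complex.ofReal_natCast, Complex.div_ofReal_im, Complex.log_im]
    rw [e2, Complex.arg_exp, e3]
    apply (toIocMod_eq_self _).2
    exact ⟨by linarith [hb.1], by linarith [hb.2]⟩
  refine ⟨z' / z, ?_, ?_⟩
  · rw [div_pow, e1, div_self hzn]
  · rw [div_mul_cancel₀ _ hz]
    refine ⟨Complex.mem_slitPlane_iff_arg.2 ⟨?_, hz0⟩, ?_⟩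
    · rw [harg]; exact (hb.2.trans hpin).ne
    · rw [harg]; exact hb

end LC

namespace LC

lemma crt (m n : ℕ) (hm : m ≠ 0) (h : Nat.Coprime m n) (u : ℤ) : ∃ c : ℕ, (m : ℤ) ∣ c - u ∧ (n : ℤ) ∣ c - 1 := by
  have hm' : (m : ℤ) ≠ 0 := by exact_mod_cast hm
  obtain ⟨c, h1, h2⟩ := Nat.chineseRemainder h (u % m).toNat 1
  refine ⟨c, ?_, ?_⟩
  · have h3 := (Int.natCast_modEq_iff.2 h1)
    rw [Int.toNat_of_nonneg (Int.emod_nonneg _ hm')] at h3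
    exact (h3.trans (Int.mod_modEq _ _)).symm.dvd
  · have h3 := (Int.natCast_modEq_iff.2 h2)
    exact h3.symm.dvd

lemma cop {c l n : ℤ} (h : n ∣ c * l - 1) : IsCoprime c n := by
  obtain ⟨k, hk⟩ := h
  exact ⟨l, -k, by linear_combination hk⟩

lemma exists_exp (p q : ℕ) (hp : p ≠ 0) (hq : q ≠ 0) (hpq : Nat.Coprime p q) (ℓ ℓ' : Fin 2 → ℤ)
    (hℓ : ∀ j, IsCoprime (ℓ j) (p : ℤ)) (hℓ' : ∀ j, IsCoprime (ℓ' j) (q : ℤ)) :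
    ∃ e0 e1 a0 a1 : ℕ, ∃ s t : ℤ, (p : ℤ) ∣ e0 * ℓ 0 - 1 ∧ (p : ℤ) ∣ e1 * ℓ 1 - 1 ∧
      (q : ℤ) ∣ a0 * ℓ' 0 - 1 ∧ (q : ℤ) ∣ a1 * ℓ' 1 - (-1) ∧
      ((e0 * e1 : ℕ) : ℤ) * ((q * q : ℕ) * t) - ((a0 * a1 : ℕ) : ℤ) * ((p * p : ℕ) * s) = 1 := by
  obtain ⟨u0, v0, h0⟩ := hℓ' 0
  obtain ⟨u1, v1, h1⟩ := hℓ' 1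
  obtain ⟨x0, y0, k0⟩ := hℓ 0
  obtain ⟨x1, y1, k1⟩ := hℓ 1
  obtain ⟨a0, ⟨r0, ha0⟩, ha0'⟩ := crt q p hq hpq.symm u0
  obtain ⟨a1, ⟨r1, ha1⟩, ha1'⟩ := crt q p hq hpq.symm (-u1)
  have d0 : (q : ℤ) ∣ a0 * ℓ' 0 - 1 := ⟨r0 * ℓ' 0 - v0, by linear_combination ℓ' 0 * ha0 + h0⟩
  have d1 : (q : ℤ) ∣ a1 * ℓ' 1 - (-1) := ⟨r1 * ℓ' 1 + v1, by linear_combination ℓ' 1 * ha1 - h1⟩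
  have ca0p : IsCoprime (a0 : ℤ) p := cop (l := 1) (by simpa using ha0')
  have ca1p : IsCoprime (a1 : ℤ) p := cop (l := 1) (by simpa using ha1')
  have cap : IsCoprime (p : ℤ) ((a0 * a1 : ℕ) : ℤ) := by
    push_cast; exact (ca0p.mul_left ca1p).symm
  have cap' : Nat.Coprime p (a0 * a1) := Nat.isCoprime_iff_coprime.1 cap
  obtain ⟨e0, ⟨w0, he0⟩, he0'⟩ := crt p (a0 * a1) hp cap' x0
  obtain ⟨e1, ⟨w1, he1⟩, he1'⟩ := crt p (a0 * a1) hp cap' x1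
  have f0 : (p : ℤ) ∣ e0 * ℓ 0 - 1 := ⟨w0 * ℓ 0 - y0, by linear_combination ℓ 0 * he0 + k0⟩
  have f1 : (p : ℤ) ∣ e1 * ℓ 1 - 1 := ⟨w1 * ℓ 1 - y1, by linear_combination ℓ 1 * he1 + k1⟩
  have g0 : IsCoprime (e0 : ℤ) ((a0 * a1 : ℕ) : ℤ) := cop (l := 1) (by simpa using he0')
  have g1 : IsCoprime (e1 : ℤ) ((a0 * a1 : ℕ) : ℤ) := cop (l := 1) (by simpa using he1')
  have m0 : IsCoprime (e0 : ℤ) p := cop f0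
  have m1 : IsCoprime (e1 : ℤ) p := cop f1
  have n0 : IsCoprime (a0 : ℤ) q := cop d0
  have n1 : IsCoprime (a1 : ℤ) q := cop (l := - ℓ' 1) (by
    obtain ⟨k, hk⟩ := d1
    exact ⟨-k, by linear_combination -hk⟩)
  have hqp : IsCoprime (q : ℤ) p := Nat.isCoprime_iff_coprime.2 hpq.symm
  have qa : IsCoprime (q : ℤ) ((a0 * a1 : ℕ) : ℤ) := by push_cast; exact (n0.mul_left n1).symm
  have fin : IsCoprime (((e0 : ℤ) * e1) * ((q : ℤ) * q)) (((a0 * a1 : ℕ) : ℤ) * ((p : ℤ) * p)) := by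
    refine IsCoprime.mul_left (IsCoprime.mul_left ?_ ?_) (IsCoprime.mul_left ?_ ?_)
    · exact g0.mul_right (m0.mul_right m0)
    · exact g1.mul_right (m1.mul_right m1)
    · exact qa.mul_right (hqp.mul_right hqp)
    · exact qa.mul_right (hqp.mul_right hqp)
  obtain ⟨t, s, hts⟩ := fin
  refine ⟨e0, e1, a0, a1, -s, t, f0, f1, d0, d1, ?_⟩
  push_cast at hts ⊢
  linear_combination hts

lemma ph_pow (p : ℕ) (m l : ℤ) (c : ℕ) : ph p m l ^ c = ph p m (c * l) := by
  rw [ph, ph, ← Complex.exp_nat_mul]; congr 1; push_cast; ring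
lemma ph_congr {p : ℕ} (hp : p ≠ 0) (m : ℤ) {l r : ℤ} (h : (p : ℤ) ∣ l - r) : ph p m l = ph p m r := by
  have h1 : ph p m l = ph p m (l - r) * ph p m r := by
    rw [ph, ph, ph, ← Complex.exp_add]; congr 1; push_cast; ring
  rw [h1, (ph_eq_one hp _ _).2 (h.mul_left _), one_mul]
lemma ph_conj (p : ℕ) (m l : ℤ) : (starRingEnd ℂ) (ph p m l) = ph p m (-l) := by
  rw [ph, ph, ← Complex.exp_conj]; congr 1
  have h2 : (starRingEnd ℂ) (2 : ℂ) = 2 := map_ofNat _ 2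
  simp [Complex.conj_ofReal, h2]
lemma ph_comb {p q : ℕ} (hp : p ≠ 0) (hq : q ≠ 0) (m m' ε : ℤ) :
    ph p m 1 * ph q m' ε = ph (p * q) (m * q + m' * ε * p) 1 := by
  have hp' : (p : ℂ) ≠ 0 := by exact_mod_cast hp
  have hq' : (q : ℂ) ≠ 0 := by exact_mod_cast hq
  rw [ph, ph, ph, ← Complex.exp_add]; congr 1; push_cast; field_simp
lemma ph_comb_one {p q : ℕ} (hp : p ≠ 0) (hq : q ≠ 0) (hpq : Nat.Coprime p q) (m m' ε : ℤ) (hε : ε * ε = 1)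
    (h : ph p m 1 * ph q m' ε = 1) : (p : ℤ) ∣ m ∧ (q : ℤ) ∣ m' := by
  rw [ph_comb hp hq, ph_eq_one (mul_ne_zero hp hq), mul_one] at h
  obtain ⟨k, hk⟩ := h
  push_cast at hk
  have hc : IsCoprime (p : ℤ) q := Nat.isCoprime_iff_coprime.2 hpq
  constructor
  · exact hc.dvd_of_dvd_mul_right (⟨q * k - m' * ε, by linear_combination hk⟩ : (p:ℤ) ∣ m * q)
  · exact hc.symm.dvd_of_dvd_mul_right (⟨ε * (p * k - m), by linear_combination ε * hk - m' * p * hε⟩ : (q:ℤ) ∣ m' * p)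
lemma ph_comb_root {p q : ℕ} (hp : p ≠ 0) (hq : q ≠ 0) (m m' ε : ℤ) :
    (ph p m 1 * ph q m' ε) ^ (p * q) = 1 := by
  rw [ph_comb hp hq, ph_pow, ph_eq_one (mul_ne_zero hp hq)]
  exact ⟨m * q + m' * ε * p, by push_cast; ring⟩
lemma root_ph {p q : ℕ} (hp : p ≠ 0) (hq : q ≠ 0) (hpq : Nat.Coprime p q) (ε : ℤ) (hε : ε * ε = 1) (ξ : ℂ)
    (h : ξ ^ (p * q) = 1) : ∃ m m' : ℤ, ph p m 1 * ph q m' ε = ξ := by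
  have hn : p * q ≠ 0 := mul_ne_zero hp hq
  have : NeZero (p * q) := ⟨hn⟩
  obtain ⟨k, -, hk⟩ := (Complex.isPrimitiveRoot_exp _ hn).eq_pow_of_pow_eq_one h
  obtain ⟨u, v, huv⟩ : IsCoprime (p : ℤ) q := Nat.isCoprime_iff_coprime.2 hpq
  refine ⟨v * k, u * k * ε, ?_⟩
  rw [ph_comb hp hq]
  have e : v * k * q + u * k * ε * ε * p = (k : ℤ) := by
    linear_combination (k : ℤ) * huv + u * k * p * hε
  rw [e, ← hk, ph, ← Complex.exp_nat_mul]; congr 1; push_cast; ring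

lemma fp_equiv {p : ℕ} (hp : p ≠ 0) (ℓ : Fin 2 → ℤ) (c d : ℕ) (r r' : ℤ) (h0 : (p : ℤ) ∣ c * ℓ 0 - r) (h1 : (p : ℤ) ∣ d * ℓ 1 - r')
    (m : ℤ) (x : Sp) : (fp c d (phi (rot p ℓ m x))).1 =
      qq (ph p m r * c0 (fp c d (phi x)).1) (ph p m r' * c1 (fp c d (phi x)).1) := by
  rw [fp_coe, fp_coe]
  simp only [phi, ContinuousMap.coe_mk, c0_qq, c1_qq, rot_apply]
  rw [← mul_neg, pw_mul _ _ _ (ph_norm _ _ _), pw_mul _ _ _ (ph_norm _ _ _), ph_pow, ph_pow, ph_congr hp m h0, ph_congr hp m h1, mul_neg]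

noncomputable def gg (p q : ℕ) (ℓ ℓ' : Fin 2 → ℤ) (m m' : ℤ) (x : XX) : XX := (rot p ℓ m x.1, rot q ℓ' m' x.2)

lemma exists_AB (p q : ℕ) (hp : p ≠ 0) (hq : q ≠ 0) (hpq : Nat.Coprime p q) (ℓ ℓ' : Fin 2 → ℤ)
    (hℓ : ∀ j, IsCoprime (ℓ j) (p : ℤ)) (hℓ' : ∀ j, IsCoprime (ℓ' j) (q : ℤ)) :
    ∃ A B : C(XX, Ga),
      (∀ m m' x, c0 (A (gg p q ℓ ℓ' m m' x)).1 = (ph p m 1 * ph q m' 1) * c0 (A x).1) ∧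
      (∀ m m' x, c1 (A (gg p q ℓ ℓ' m m' x)).1 = (ph p m 1 * ph q m' (-1)) * c1 (A x).1) ∧
      (∀ m m' x, B (gg p q ℓ ℓ' m m' x) = B x) ∧
      ∀ (V : Set XX) (a b : Ga), (∀ x ∈ V, A x ≠ a) → (∀ x ∈ V, B x ≠ b) →
        ContinuousMap.Nullhomotopic (⟨Subtype.val, continuous_subtype_val⟩ : C(V, XX)) := by
  obtain ⟨e0, e1, a0, a1, s, t, h1, h2, h3, h4, h5⟩ := exists_exp p q hp hq hpq ℓ ℓ' hℓ hℓ'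
  have key : ∀ m m' x, ((fz e0 e1 * fw a0 a1) (gg p q ℓ ℓ' m m' x)).1 =
      qq ((ph p m 1 * ph q m' 1) * c0 ((fz e0 e1 * fw a0 a1) x).1) ((ph p m 1 * ph q m' (-1)) * c1 ((fz e0 e1 * fw a0 a1) x).1) := by
    intro m m' x
    have d1 : ((fz e0 e1 * fw a0 a1) (gg p q ℓ ℓ' m m' x)).1 =
      (fp e0 e1 (phi (rot p ℓ m x.1))).1 * (fp a0 a1 (phi (rot q ℓ' m' x.2))).1 := rfl
    have d2 : ((fz e0 e1 * fw a0 a1) x).1 = (fp e0 e1 (phi x.1)).1 * (fp a0 a1 (phi x.2)).1 := rfl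
    rw [d1, d2, fp_equiv hp ℓ e0 e1 1 1 h1 h2, fp_equiv hq ℓ' a0 a1 1 (-1) h3 h4]
    set y := (fp e0 e1 (phi x.1)).1
    set v := (fp a0 a1 (phi x.2)).1
    have d3 : y * v = qq (c0 y) (c1 y) * qq (c0 v) (c1 v) := rfl
    rw [d3, qq_mul, qq_mul, c0_qq, c1_qq, map_mul, map_mul, ph_conj, ph_conj, neg_neg]
    congr 1 <;> ring
  refine ⟨fz e0 e1 * fw a0 a1, fz p p ^ s * fw q q ^ t, ?_, ?_, ?_, ?_⟩
  · intro m m' x; rw [key, c0_qq]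
  · intro m m' x; rw [key, c1_qq]
  · intro m m' x
    have k1 : fz p p (gg p q ℓ ℓ' m m' x) = fz p p x := by
      apply Subtype.ext
      change (fp p p (phi (rot p ℓ m x.1))).1 = (fp p p (phi x.1)).1
      rw [fp_equiv hp ℓ p p 0 0 (by simp) (by simp), (ph_eq_one hp m 0).2 (by simp), one_mul, one_mul, qq_c]
    have k2 : fw q q (gg p q ℓ ℓ' m m' x) = fw q q x := by
      apply Subtype.ext
      change (fp q q (phi (rot q ℓ' m' x.2))).1 = (fp q q (phi x.2)).1
      rw [fp_equiv hq ℓ' q q 0 0 (by simp) (by simp), (ph_eq_one hq m' 0).2 (by simp), one_mul, one_mul, qq_c]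
    simp only [ContinuousMap.mul_apply, ContinuousMap.zpow_apply, k1, k2]
  · intro V a b ha hb
    exact null_V e0 e1 a0 a1 p q s t h5 V a b ha hb

/-- the open sets upstairs -/
def VV (n : ℕ) (A B : C(XX, Ga)) (δ : ℝ) (ω : ℂ) (b : Ga) : Set XX :=
  {x | ((δ < ‖c0 (A x).1‖ ∧ c0 (A x).1 * ω ∈ sec n) ∨ (‖c0 (A x).1‖ < δ ∧ c1 (A x).1 * ω ∈ sec n)) ∧ B x ≠ b}

lemma VV_open (n : ℕ) (A B : C(XX, Ga)) (δ : ℝ) (ω : ℂ) (b : Ga) : IsOpen (VV n A B δ ω b) := by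
  have h0 : Continuous fun x => c0 (A x).1 := c0_cont.comp (continuous_subtype_val.comp A.continuous)
  have h1 : Continuous fun x => c1 (A x).1 := c1_cont.comp (continuous_subtype_val.comp A.continuous)
  refine IsOpen.inter (IsOpen.union (IsOpen.inter ?_ ?_) (IsOpen.inter ?_ ?_)) ?_
  · exact isOpen_lt continuous_const h0.norm
  · exact (sec_open n).preimage (h0.mul continuous_const)
  · exact isOpen_lt h0.norm continuous_const
  · exact (sec_open n).preimage (h1.mul continuous_const)
  · exact isOpen_ne_fun B.continuous continuous_const

lemma VV_miss (n : ℕ) (A B : C(XX, Ga)) (δ : ℝ) (ω : ℂ) (b : Ga) (hω : ‖ω‖ = 1) : ∃ a : Ga, ∀ x ∈ VV n A B δ ω b, A x ≠ a := by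
  have hω0 : ω ≠ 0 := norm_ne_zero_iff.1 (by rw [hω]; exact one_ne_zero)
  set r : ℝ := Real.sqrt (1 / 2) with hr
  have hr2 : r ^ 2 = 1 / 2 := Real.sq_sqrt (by norm_num)
  have hr0 : 0 ≤ r := Real.sqrt_nonneg _
  refine ⟨⟨qq (((-r : ℝ) : ℂ) * ω⁻¹) (((-r : ℝ) : ℂ) * ω⁻¹), ?_⟩, ?_⟩
  · rw [mem_Ga, c0_qq, c1_qq, norm_mul, norm_inv, hω, Complex.norm_real, Real.norm_eq_abs, abs_neg, abs_of_nonneg hr0]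
    rw [inv_one, mul_one, hr2]; norm_num
  · rintro x ⟨h, -⟩ hx
    have hns : ((-r : ℝ) : ℂ) ∉ Complex.slitPlane := by
      rw [Complex.ofReal_mem_slitPlane]; linarith
    rcases h with ⟨-, h⟩ | ⟨-, h⟩
    · rw [hx] at h
      have h2 := h.1
      simp only [c0_qq] at h2
      rw [mul_assoc, inv_mul_cancel₀ hω0, mul_one] at h2
      exact hns h2
    · rw [hx] at h
      have h2 := h.1
      simp only [c1_qq] at h2
      rw [mul_assoc, inv_mul_cancel₀ hω0, mul_one] at h2
      exact hns h2

end LC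

namespace LC

lemma VV_inj {p q : ℕ} (hp : p ≠ 0) (hq : q ≠ 0) (hpq : Nat.Coprime p q) (ℓ ℓ' : Fin 2 → ℤ) (A B : C(XX, Ga))
    (hA0 : ∀ m m' x, c0 (A (gg p q ℓ ℓ' m m' x)).1 = (ph p m 1 * ph q m' 1) * c0 (A x).1)
    (hA1 : ∀ m m' x, c1 (A (gg p q ℓ ℓ' m m' x)).1 = (ph p m 1 * ph q m' (-1)) * c1 (A x).1)
    (δ : ℝ) (ω : ℂ) (b : Ga) : Set.InjOn (piM p q ℓ ℓ') (VV (p * q) A B δ ω b) := by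
  rintro x ⟨hx, -⟩ y ⟨hy, -⟩ hxy
  obtain ⟨m, hm⟩ := (lmk_eq p ℓ _ _).1 (congrArg Prod.fst hxy)
  obtain ⟨m', hm'⟩ := (lmk_eq q ℓ' _ _).1 (congrArg Prod.snd hxy)
  have hyx : y = gg p q ℓ ℓ' m m' x := Prod.ext hm hm'
  have hnorm : ‖c0 (A y).1‖ = ‖c0 (A x).1‖ := by
    rw [hyx, hA0, norm_mul, norm_mul, ph_norm, ph_norm]; simp
  have fin : (p : ℤ) ∣ m ∧ (q : ℤ) ∣ m' → x = y := by
    rintro ⟨h1, h2⟩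
    rw [hyx, gg, rot_dvd p ℓ hp m h1, rot_dvd q ℓ' hq m' h2]
  have hn : p * q ≠ 0 := mul_ne_zero hp hq
  have key : ∀ (ε : ℤ) (_ : ε * ε = 1) (u v : ℂ) (_ : u ∈ sec (p * q)) (_ : v ∈ sec (p * q))
      (_ : v = (ph p m 1 * ph q m' ε) * u), x = y := by
    intro ε hε u v hu hv huv
    have h1 : v = u := by
      refine sec_inj hn hv hu ?_
      rw [huv, mul_pow, ph_comb_root hp hq, one_mul]
    have hu0 : u ≠ 0 := Complex.slitPlane_ne_zero hu.1
    refine fin (ph_comb_one hp hq hpq m m' ε hε ?_)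
    apply mul_right_cancel₀ hu0
    rw [← huv, h1, one_mul]
  rcases hx with ⟨h1, h2⟩ | ⟨h1, h2⟩ <;> rcases hy with ⟨h3, h4⟩ | ⟨h3, h4⟩
  · refine key 1 (by norm_num) _ _ h2 h4 ?_
    rw [hyx, hA0]; ring
  · linarith
  · linarith
  · refine key (-1) (by norm_num) _ _ h2 h4 ?_
    rw [hyx, hA1]; ring

theorem upper (p q : ℕ) (hp2 : 2 ≤ p) (hq2 : 2 ≤ q) (hpq : Nat.Coprime p q) (ℓ ℓ' : Fin 2 → ℤ)
    (hℓ : ∀ j, IsCoprime (ℓ j) (p : ℤ)) (hℓ' : ∀ j, IsCoprime (ℓ' j) (q : ℤ)) :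
    ∃ U : Fin 5 → Set (LensSpace p 2 ℓ × LensSpace q 2 ℓ'), (∀ i, IsOpen (U i)) ∧ (⋃ i, U i) = Set.univ ∧
      ∀ i, ContinuousMap.Nullhomotopic (⟨Subtype.val, continuous_subtype_val⟩ : C(U i, LensSpace p 2 ℓ × LensSpace q 2 ℓ')) := by
  have hp : p ≠ 0 := by omega
  have hq : q ≠ 0 := by omega
  have hn : p * q ≠ 0 := mul_ne_zero hp hq
  have hn2 : 2 ≤ p * q := by nlinarith
  obtain ⟨A, B, hA0, hA1, hB, hnull⟩ := exists_AB p q hp hq hpq ℓ ℓ' hℓ hℓ'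
  set n := p * q with hndef
  set δ : Fin 5 → ℝ := fun k => ((k : ℕ) + 1) / 6 with hδ
  have hδinj : Function.Injective δ := by
    intro j k h
    simp only [hδ] at h
    have h2 : ((j : ℕ) : ℝ) = (k : ℕ) := by linarith
    exact Fin.ext (by exact_mod_cast h2)
  have hδ0 : ∀ k, 0 < δ k := fun k => by simp only [hδ]; positivity
  have hδ1 : ∀ k, δ k < 1 := by
    intro k
    have h2 : ((k : ℕ) : ℝ) < 5 := by exact_mod_cast k.2
    simp only [hδ]; linarith
  set θ : ℂ := Complex.exp (2 * Real.pi * Complex.I / ((5 * n : ℕ) : ℂ)) with hθ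
  have hprim : IsPrimitiveRoot θ (5 * n) := Complex.isPrimitiveRoot_exp _ (by omega)
  have hprim5 : IsPrimitiveRoot (θ ^ n) 5 := hprim.pow (by omega) (by ring)
  set ω : Fin 5 → ℂ := fun k => θ ^ (k : ℕ) with hω
  have hωn : ∀ k, ‖ω k‖ = 1 := by
    intro k
    have : ‖θ‖ = 1 := Complex.norm_eq_one_of_pow_eq_one hprim.pow_eq_one (by omega)
    simp only [hω, norm_pow, this, one_pow]
  have hωinj : ∀ j k, ω j ^ n = ω k ^ n → j = k := by
    intro j k h
    simp only [hω] at h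
    rw [← pow_mul, ← pow_mul, mul_comm _ n, mul_comm _ n, pow_mul θ n j, pow_mul θ n k] at h
    exact Fin.ext (hprim5.pow_inj j.2 k.2 h)
  set b : Fin 5 → Ga := fun k => ⟨qq (ω k) 0, by rw [mem_Ga, c0_qq, c1_qq, hωn]; simp⟩ with hb
  have hbinj : ∀ j k, b j = b k → j = k := by
    intro j k h
    have h2 := congrArg (fun y : Ga => c0 y.1) h
    simp only [hb, c0_qq] at h2
    exact hωinj j k (by rw [h2])
  have hopen : IsOpenMap (piM p q ℓ ℓ') := (lmk_open p ℓ).prodMap (lmk_open q ℓ')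
  refine ⟨fun k => piM p q ℓ ℓ' '' VV n A B (δ k) (ω k) (b k), fun k => hopen _ (VV_open _ _ _ _ _ _), ?_, ?_⟩
  · rw [Set.eq_univ_iff_forall]
    rintro ⟨z0, w0⟩
    obtain ⟨z, rfl⟩ := lmk_surj p ℓ z0
    obtain ⟨w, rfl⟩ := lmk_surj q ℓ' w0
    set x : XX := (z, w) with hx
    set y0 := c0 (A x).1 with hy0
    set y1 := c1 (A x).1 with hy1
    have hyn : ‖y0‖ ^ 2 + ‖y1‖ ^ 2 = 1 := Ga_norm (A x)
    have sameω : ∀ (y : ℂ) (j k : Fin 5), y ≠ 0 → (y * ω j) ^ n = -(‖y‖ ^ n : ℝ) → (y * ω k) ^ n = -(‖y‖ ^ n : ℝ) → j = k := by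
      intro y j k hy h1 h2
      apply hωinj
      apply mul_left_cancel₀ (pow_ne_zero n hy)
      rw [← mul_pow, ← mul_pow, h1, h2]
    have hy10 : ∀ k, ‖y0‖ < δ k → y1 ≠ 0 := by
      intro k hk h0
      rw [h0] at hyn
      simp at hyn
      have := hδ1 k
      have h3 := norm_nonneg y0
      rcases hyn with h | h <;> linarith
    set bad : Fin 4 → Fin 5 → Prop := ![fun k => ‖y0‖ = δ k, fun k => δ k < ‖y0‖ ∧ (y0 * ω k) ^ n = -(‖y0‖ ^ n : ℝ),
      fun k => ‖y0‖ < δ k ∧ (y1 * ω k) ^ n = -(‖y1‖ ^ n : ℝ), fun k => B x = b k] with hbad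
    have hbad1 : ∀ i j k, bad i j → bad i k → j = k := by
      intro i j k
      fin_cases i
      · intro h1 h2
        exact hδinj ((show ‖y0‖ = δ j from h1).symm.trans h2)
      · rintro ⟨h1, h2⟩ ⟨-, h4⟩
        exact sameω y0 j k (norm_pos_iff.1 ((hδ0 j).trans h1)) h2 h4
      · rintro ⟨h1, h2⟩ ⟨-, h4⟩
        exact sameω y1 j k (hy10 j h1) h2 h4
      · intro h1 h2
        exact hbinj j k ((show B x = b j from h1).symm.trans h2)
    obtain ⟨k, hk⟩ : ∃ k, ∀ i, ¬ bad i k := by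
      by_contra! hc
      choose f hf using hc
      obtain ⟨j, k, hjk, h⟩ := Fintype.exists_ne_map_eq_of_card_lt f (by simp)
      exact hjk (hbad1 (f j) j k (hf j) (by rw [h]; exact hf k))
    have b0 : ‖y0‖ ≠ δ k := hk 0
    have b1 : ¬ (δ k < ‖y0‖ ∧ (y0 * ω k) ^ n = -(‖y0‖ ^ n : ℝ)) := hk 1
    have b2 : ¬ (‖y0‖ < δ k ∧ (y1 * ω k) ^ n = -(‖y1‖ ^ n : ℝ)) := hk 2
    have b3 : B x ≠ b k := hk 3
    have hωk0 : ω k ≠ 0 := norm_ne_zero_iff.1 (by rw [hωn]; exact one_ne_zero)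
    have hpi : ∀ m m', piM p q ℓ ℓ' (gg p q ℓ ℓ' m m' x) = (lmk p ℓ z, lmk q ℓ' w) := by
      intro m m'
      simp only [piM, gg, lmk_rot, hx]
    have hnormg : ∀ m m', ‖c0 (A (gg p q ℓ ℓ' m m' x)).1‖ = ‖y0‖ := by
      intro m m'
      rw [hA0, norm_mul, norm_mul, ph_norm, ph_norm]; simp [hy0]
    rw [Set.mem_iUnion]
    refine ⟨k, ?_⟩
    have hnw : ∀ y : ℂ, ‖y * ω k‖ = ‖y‖ := fun y => by rw [norm_mul, hωn, mul_one]
    rcases lt_or_gt_of_ne b0 with h | h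
    · have h2 : (y1 * ω k) ^ n ≠ -(‖y1 * ω k‖ ^ n : ℝ) := by
        rw [hnw]; exact fun hc => b2 ⟨h, hc⟩
      obtain ⟨ξ, hξ, hs⟩ := sec_exists hn2 (mul_ne_zero (hy10 k h) hωk0) h2
      obtain ⟨m, m', hmm⟩ := root_ph hp hq hpq (-1) (by norm_num) ξ hξ
      refine ⟨gg p q ℓ ℓ' m m' x, ⟨Or.inr ⟨?_, ?_⟩, ?_⟩, hpi m m'⟩
      · rw [hnormg]; exact h
      · rw [hA1, hmm, mul_assoc]; exact hs
      · rw [hB]; exact b3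
    · have h2 : (y0 * ω k) ^ n ≠ -(‖y0 * ω k‖ ^ n : ℝ) := by
        rw [hnw]; exact fun hc => b1 ⟨h, hc⟩
      obtain ⟨ξ, hξ, hs⟩ := sec_exists hn2 (mul_ne_zero (norm_pos_iff.1 ((hδ0 k).trans h)) hωk0) h2
      obtain ⟨m, m', hmm⟩ := root_ph hp hq hpq 1 (by norm_num) ξ hξ
      refine ⟨gg p q ℓ ℓ' m m' x, ⟨Or.inl ⟨?_, ?_⟩, ?_⟩, hpi m m'⟩
      · rw [hnormg]; exact h
      · rw [hA0, hmm, mul_assoc]; exact hs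
      · rw [hB]; exact b3
  · intro k
    obtain ⟨a, ha⟩ := VV_miss n A B (δ k) (ω k) (b k) (hωn k)
    exact null_push ⟨piM p q ℓ ℓ', piM_cont p q ℓ ℓ'⟩ hopen _ (VV_open n A B (δ k) (ω k) (b k))
      (VV_inj hp hq hpq ℓ ℓ' A B hA0 hA1 _ _ _) (hnull _ a (b k) ha (fun x hx => hx.2))

theorem final (p q : ℕ) (hp2 : 2 ≤ p) (hq2 : 2 ≤ q)
    (hpq : Nat.Coprime p q)
    (ℓ : Fin 2 → ℤ) (hℓ : ∀ j, IsCoprime (ℓ j) (p : ℤ))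
    (ℓ' : Fin 2 → ℤ) (hℓ' : ∀ j, IsCoprime (ℓ' j) (q : ℤ)) :
    lsCat (LensSpace p 2 ℓ × LensSpace q 2 ℓ') = 4 := by
  have hup := upper p q hp2 hq2 hpq ℓ ℓ' hℓ hℓ'
  apply le_antisymm
  · exact Nat.sInf_le hup
  · refine le_csInf ⟨4, hup⟩ ?_
    rintro k ⟨U, hUo, hUc, hU⟩
    by_contra hk
    let r : Fin 4 → Fin (k + 1) := fun i => Fin.ofNat (k + 1) i
    refine no_cover p q hp2 (by omega) ℓ ℓ' hℓ hℓ' (fun i => U (r i)) (fun i => hUo _) ?_ (fun i => hU _)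
    rw [Set.eq_univ_iff_forall] at hUc ⊢
    intro x
    obtain ⟨i, hi⟩ := Set.mem_iUnion.1 (hUc x)
    refine Set.mem_iUnion.2 ⟨⟨i, by omega⟩, ?_⟩
    have : r ⟨i, by omega⟩ = i := Fin.ext (by simp [r, Nat.mod_eq_of_lt i.2])
    rw [this]; exact hi

end LC

/-- For all relatively prime `p, q ≥ 2` and all three-dimensional lens spaces,
`cat (L³_p × L³_q) = 4`. -/
theorem lsCat_prod_lensSpace_three (p q : ℕ) (hp2 : 2 ≤ p) (hq2 : 2 ≤ q)
    (hpq : Nat.Coprime p q)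
    (ℓ : Fin 2 → ℤ) (hℓ : ∀ j, IsCoprime (ℓ j) (p : ℤ))
    (ℓ' : Fin 2 → ℤ) (hℓ' : ∀ j, IsCoprime (ℓ' j) (q : ℤ)) :
    lsCat (LensSpace p 2 ℓ × LensSpace q 2 ℓ') = 4 := by
  exact LC.final p q hp2 hq2 hpq ℓ hℓ ℓ' hℓ'
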